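/- arXiv:2309.15597 — 4 statements merged into one kernel-verified Lean document; each statement's English description precedes it below -/
import Mathlib

section
/- Let n ≥ 10 be an integer. If G is a connected simple graph on n vertices with dissociation number n−2 that attains the minimum spectral radius among all connected simple graphs on n vertices with dissociation number n−2, then G is isomorphic to H(n). -/
/-- `S` is a dissociation set of `G`: the subgraph induced by `S` has maximum degree ≤ 1. -/
def IsDissocSet {V : Type} (G : SimpleGraph V) (S : Set V) : Prop :=
  ∀ v ∈ S, ({u ∈ S | G.Adj v u}).ncard ≤ 1

/-- The dissociation number of `G`: the maximum cardinality of a dissociation set. -/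
noncomputable def dissNum {V : Type} [Fintype V] (G : SimpleGraph V) : ℕ :=
  sSup {k | ∃ S : Set V, IsDissocSet G S ∧ S.ncard = k}

open scoped Classical in
/-- The (real) adjacency matrix of a simple graph. -/
noncomputable def adjMat {V : Type} [Fintype V] (G : SimpleGraph V) : Matrix V V ℝ :=
  Matrix.of fun i j => if G.Adj i j then 1 else 0

/-- The spectral radius of a simple graph: the largest eigenvalue of its adjacency matrix. -/
noncomputable def specRad {V : Type} [Fintype V] (G : SimpleGraph V) : ℝ :=
  sSup {t : ℝ | ∃ v : V → ℝ, v ≠ 0 ∧ (adjMat G).mulVec v = t • v}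

/-- `G3 r s p q` is the tree obtained from a path `v₁ v₃ v₄ v₂` on 4 vertices
(`v₁ = 0, v₃ = 1, v₄ = 2, v₂ = 3`) by attaching `r` pendant vertices and `s` pendant
paths of length 2 to `v₁`, and `p` pendant vertices and `q` pendant paths of length 2
to `v₂`. It has order `r + p + 2s + 2q + 4`. -/
def G3 (r s p q : ℕ) :
    SimpleGraph (Fin 4 ⊕ ((Fin r ⊕ Fin s × Fin 2) ⊕ (Fin p ⊕ Fin q × Fin 2))) :=
  SimpleGraph.fromRel (fun a b =>
    (∃ i : Fin 3, a = Sum.inl i.castSucc ∧ b = Sum.inl i.succ) ∨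
    (∃ i : Fin r, a = Sum.inl 0 ∧ b = Sum.inr (Sum.inl (Sum.inl i))) ∨
    (∃ j : Fin s, a = Sum.inl 0 ∧ b = Sum.inr (Sum.inl (Sum.inr (j, 0)))) ∨
    (∃ j : Fin s, a = Sum.inr (Sum.inl (Sum.inr (j, 0))) ∧
      b = Sum.inr (Sum.inl (Sum.inr (j, 1)))) ∨
    (∃ i : Fin p, a = Sum.inl 3 ∧ b = Sum.inr (Sum.inr (Sum.inl i))) ∨
    (∃ j : Fin q, a = Sum.inl 3 ∧ b = Sum.inr (Sum.inr (Sum.inr (j, 0)))) ∨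
    (∃ j : Fin q, a = Sum.inr (Sum.inr (Sum.inr (j, 0))) ∧
      b = Sum.inr (Sum.inr (Sum.inr (j, 1)))))


section PartA

lemma aux_adjMat_mulVec {V : Type} [Fintype V] (G : SimpleGraph V) (y : V → ℝ) (w : V) :
    (adjMat G).mulVec y w = ∑ z, (open scoped Classical in if G.Adj w z then y z else 0) := by
  classical
  simp only [Matrix.mulVec, dotProduct, adjMat, Matrix.of_apply]
  refine Finset.sum_congr rfl fun z _ => ?_
  by_cases h : G.Adj w z <;> simp [h]

lemma aux_adjMat_symm {V : Type} [Fintype V] (G : SimpleGraph V) (i j : V) :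
    adjMat G i j = adjMat G j i := by
  classical
  simp [adjMat, G.adj_comm]

lemma aux_adjMat_nonneg {V : Type} [Fintype V] (G : SimpleGraph V) (i j : V) :
    0 ≤ adjMat G i j := by
  classical
  simp only [adjMat, Matrix.of_apply]
  split_ifs <;> norm_num

/-- A positive super-solution bounds all eigenvalues. -/
lemma aux_eig_le {V : Type} [Fintype V] (G : SimpleGraph V) (t : ℝ)
    (z : V → ℝ) (hz : ∀ i, 0 < z i) (h : ∀ i, (adjMat G).mulVec z i ≤ t * z i)
    (s : ℝ) (v : V → ℝ) (hv : v ≠ 0) (hs : (adjMat G).mulVec v = s • v) : s ≤ t := by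
  have h1 : ∀ i, s * |v i| ≤ ∑ j, adjMat G i j * |v j| := by
    intro i
    have : (adjMat G).mulVec v i = s * v i := by rw [hs]; simp
    calc s * |v i| ≤ |s * v i| := by rw [abs_mul]; gcongr; exact le_abs_self s
      _ = |∑ j, adjMat G i j * v j| := by rw [← this]; rfl
      _ ≤ ∑ j, |adjMat G i j * v j| := Finset.abs_sum_le_sum_abs _ _
      _ = _ := by
        refine Finset.sum_congr rfl fun j _ => ?_
        rw [abs_mul, abs_of_nonneg (aux_adjMat_nonneg G i j)]
  have h2 : s * ∑ i, z i * |v i| ≤ t * ∑ i, z i * |v i| := by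
    calc s * ∑ i, z i * |v i| = ∑ i, z i * (s * |v i|) := by
          rw [Finset.mul_sum]; exact Finset.sum_congr rfl fun i _ => by ring
      _ ≤ ∑ i, z i * ∑ j, adjMat G i j * |v j| :=
          Finset.sum_le_sum fun i _ => mul_le_mul_of_nonneg_left (h1 i) (hz i).le
      _ = ∑ j, |v j| * (adjMat G).mulVec z j := by
          simp only [Matrix.mulVec, dotProduct, Finset.mul_sum]
          rw [Finset.sum_comm]
          refine Finset.sum_congr rfl fun j _ => Finset.sum_congr rfl fun i _ => ?_
          rw [aux_adjMat_symm G i j]; ring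
      _ ≤ ∑ j, |v j| * (t * z j) :=
          Finset.sum_le_sum fun j _ => mul_le_mul_of_nonneg_left (h j) (abs_nonneg _)
      _ = _ := by rw [Finset.mul_sum]; exact Finset.sum_congr rfl fun i _ => by ring
  have h3 : 0 < ∑ i, z i * |v i| := by
    obtain ⟨i, hi⟩ := Function.ne_iff.mp hv
    refine Finset.sum_pos' (fun i _ => mul_nonneg (hz i).le (abs_nonneg _)) ⟨i, Finset.mem_univ _, ?_⟩
    exact mul_pos (hz i) (abs_pos.mpr hi)
  exact le_of_mul_le_mul_right h2 h3

lemma aux_specRad_le {V : Type} [Fintype V] (G : SimpleGraph V) (t : ℝ) (ht : 0 ≤ t)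
    (z : V → ℝ) (hz : ∀ i, 0 < z i) (h : ∀ i, (adjMat G).mulVec z i ≤ t * z i) :
    specRad G ≤ t := by
  refine Real.sSup_le ?_ ht
  rintro s ⟨v, hv, hs⟩
  exact aux_eig_le G t z hz h s v hv hs

lemma aux_quad_le {V : Type} [Fintype V] (G : SimpleGraph V) (t : ℝ) (h : specRad G ≤ t)
    (y : V → ℝ) : ∑ i, y i * (adjMat G).mulVec y i ≤ t * ∑ i, y i * y i := by
  classical
  have hb : BddAbove {t : ℝ | ∃ v : V → ℝ, v ≠ 0 ∧ (adjMat G).mulVec v = t • v} := by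
    refine ⟨Fintype.card V, ?_⟩
    rintro s ⟨v, hv, hs⟩
    refine aux_eig_le G _ (fun _ => 1) (fun _ => one_pos) (fun i => ?_) s v hv hs
    rw [aux_adjMat_mulVec]
    calc _ ≤ ∑ z : V, (1 : ℝ) := Finset.sum_le_sum fun z _ => by split_ifs <;> norm_num
      _ = _ := by simp
  have hH : (t • (1 : Matrix V V ℝ) - adjMat G).IsHermitian := by
    ext i j
    simp [Matrix.conjTranspose_apply, Matrix.one_apply, aux_adjMat_symm G i j, eq_comm]
  have hP : (t • (1 : Matrix V V ℝ) - adjMat G).PosSemidef := by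
    rw [hH.posSemidef_iff_eigenvalues_nonneg]
    intro i
    have := hH.mulVec_eigenvectorBasis i
    set w : V → ℝ := (hH.eigenvectorBasis i : EuclideanSpace ℝ V).ofLp with hw
    have hw0 : w ≠ 0 := by
      intro h0
      have h1 := hH.eigenvectorBasis.orthonormal.ne_zero i
      apply h1
      ext j
      exact congrFun h0 j
    have h2 : (adjMat G).mulVec w = (t - hH.eigenvalues i) • w := by
      rw [Matrix.sub_mulVec, Matrix.smul_mulVec, Matrix.one_mulVec] at this
      rw [sub_smul, ← this]; simp
    have h3 : t - hH.eigenvalues i ≤ specRad G := le_csSup hb ⟨w, hw0, h2⟩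
    show 0 ≤ hH.eigenvalues i
    linarith
  have h4 := hP.dotProduct_mulVec_nonneg y
  rw [Matrix.sub_mulVec, Matrix.smul_mulVec, Matrix.one_mulVec] at h4
  simp only [dotProduct, Pi.star_apply, star_trivial, Pi.sub_apply, Pi.smul_apply, smul_eq_mul] at h4
  have h5 : ∑ x, y x * (t * y x - (adjMat G).mulVec y x)
      = t * ∑ i, y i * y i - ∑ i, y i * (adjMat G).mulVec y i := by
    rw [Finset.mul_sum, ← Finset.sum_sub_distrib]
    exact Finset.sum_congr rfl fun i _ => by ring
  linarith [h5 ▸ h4]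

lemma aux_dissNum_mem {V : Type} [Fintype V] (G : SimpleGraph V) :
    ∃ S : Set V, IsDissocSet G S ∧ S.ncard = dissNum G := by
  have : dissNum G ∈ {k | ∃ S : Set V, IsDissocSet G S ∧ S.ncard = k} := by
    refine Nat.sSup_mem ⟨0, ∅, ?_, by simp⟩ ⟨Fintype.card V, ?_⟩
    · intro v hv; simp at hv
    · rintro k ⟨S, _, rfl⟩
      rw [← Nat.card_eq_fintype_card]; exact Set.ncard_le_card S
  exact this

lemma aux_le_dissNum {V : Type} [Fintype V] (G : SimpleGraph V) (S : Set V)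
    (h : IsDissocSet G S) : S.ncard ≤ dissNum G := by
  refine le_csSup ⟨Fintype.card V, ?_⟩ ⟨S, h, rfl⟩
  rintro k ⟨S, _, rfl⟩
  rw [← Nat.card_eq_fintype_card]; exact Set.ncard_le_card S

lemma aux_dissNum_le_iso {V W : Type} [Fintype V] [Fintype W] (G : SimpleGraph V)
    (H : SimpleGraph W) (e : G ≃g H) : dissNum G ≤ dissNum H := by
  obtain ⟨S, hS, hc⟩ := aux_dissNum_mem G
  rw [← hc, ← Set.ncard_image_of_injective S e.injective]
  apply aux_le_dissNum
  rintro _ ⟨v, hv, rfl⟩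
  have := hS v hv
  rw [← Set.ncard_image_of_injective _ e.injective] at this
  convert this using 2
  ext u
  constructor
  · rintro ⟨⟨w, hw, rfl⟩, h⟩
    exact ⟨w, ⟨hw, e.map_adj_iff.mp h⟩, rfl⟩
  · rintro ⟨w, ⟨hw, h⟩, rfl⟩
    exact ⟨⟨w, hw, rfl⟩, e.map_adj_iff.mpr h⟩

lemma aux_dissNum_iso {V W : Type} [Fintype V] [Fintype W] (G : SimpleGraph V)
    (H : SimpleGraph W) (e : G ≃g H) : dissNum G = dissNum H :=
  le_antisymm (aux_dissNum_le_iso G H e) (aux_dissNum_le_iso H G e.symm)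

lemma aux_specRad_le_iso {V W : Type} [Fintype V] [Fintype W] (G : SimpleGraph V)
    (H : SimpleGraph W) (e : G ≃g H) (t : ℝ) (ht : 0 ≤ t)
    (z : W → ℝ) (hz : ∀ i, 0 < z i) (h : ∀ i, (adjMat H).mulVec z i ≤ t * z i) :
    specRad G ≤ t := by
  classical
  refine aux_specRad_le G t ht (fun i => z (e i)) (fun i => hz _) fun i => ?_
  refine le_trans (le_of_eq ?_) (h (e i))
  rw [aux_adjMat_mulVec, aux_adjMat_mulVec]
  refine Fintype.sum_equiv e.toEquiv _ _ fun j => ?_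
  have : H.Adj (e i) (e j) ↔ G.Adj i j := e.map_adj_iff
  simp [this]

end PartA

section PartC

/-- The numerical constraint coming from the quadratic form. -/
def NumOK (t : ℝ) (ρ₁ ρ₂ κ₁ κ₂ : ℕ) (m : ℝ) : Prop :=
  ∀ a b : ℝ, 0 ≤ a → 0 ≤ b →
    a ^ 2 * (ρ₁ + κ₁ * (t ^ 2 / (t ^ 2 - 1)) - t ^ 2)
      + b ^ 2 * (ρ₂ + κ₂ * (t ^ 2 / (t ^ 2 - 1)) - t ^ 2) + 2 * a * b * m ≤ 0

/-- Basic consequences, in terms of `D = t^2 - 1`, `d = 1/D`. -/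
lemma aux_num_basic {t : ℝ} {ρ₁ ρ₂ κ₁ κ₂ : ℕ} {m : ℝ} (h : NumOK t ρ₁ ρ₂ κ₁ κ₂ m)
    {D d : ℝ} (hD : t ^ 2 = D + 1) (hD0 : 0 < D) (hd : d * D = 1) :
    (ρ₁ + κ₁ * (1 + d) ≤ D * (1 + d)) ∧ (ρ₂ + κ₂ * (1 + d) ≤ D * (1 + d)) ∧
    ((ρ₁ + ρ₂ : ℝ) + (κ₁ + κ₂ : ℝ) * (1 + d) + 2 * m ≤ 2 * (D * (1 + d))) ∧
    (0 < m → (ρ₁ + κ₁ * (1 + d) < D * (1 + d)) ∧ (ρ₂ + κ₂ * (1 + d) < D * (1 + d))) := by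
  have hc : t ^ 2 / (t ^ 2 - 1) = 1 + d := by
    have : d = 1 / D := by field_simp; linarith
    rw [hD, this, add_sub_cancel_right]; field_simp
  have hx : t ^ 2 = D * (1 + d) := by rw [hD]; linarith
  unfold NumOK at h
  rw [hc, hx] at h
  have h1 := h 1 0 (by norm_num) (by norm_num)
  have h2 := h 0 1 (by norm_num) (by norm_num)
  have h3 := h 1 1 (by norm_num) (by norm_num)
  refine ⟨by linarith, by linarith, by linarith, fun hm => ⟨?_, ?_⟩⟩
  · by_contra hcon
    have e : (ρ₁ : ℝ) + κ₁ * (1 + d) - D * (1 + d) = 0 := by linarith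
    set F := (ρ₂ : ℝ) + κ₂ * (1 + d) - D * (1 + d) with hF
    have h4 := h (-F / m + 1) 1 (by have : 0 ≤ -F / m := div_nonneg (by linarith) hm.le
                                    linarith) (by norm_num)
    rw [e] at h4
    have : (-F / m) * m = -F := by field_simp
    nlinarith
  · by_contra hcon
    have e : (ρ₂ : ℝ) + κ₂ * (1 + d) - D * (1 + d) = 0 := by linarith
    set F := (ρ₁ : ℝ) + κ₁ * (1 + d) - D * (1 + d) with hF
    have h4 := h 1 (-F / m + 1) (by norm_num) (by have : 0 ≤ -F / m := div_nonneg (by linarith) hm.le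
                                                  linarith)
    rw [e] at h4
    have : (-F / m) * m = -F := by field_simp
    nlinarith

/-- The combined hypotheses about the counts. `r` shared singles, `s` shared pairs, `e` hub edge. -/
structure Cnt (n ρ₁ ρ₂ κ₁ κ₂ r s e : ℕ) : Prop where
  tot : ρ₁ + ρ₂ + 2 * (κ₁ + κ₂) = n - 2 + r + 2 * s
  link : 1 ≤ r + s + e
  r1 : r ≤ ρ₁
  r2 : r ≤ ρ₂

lemma aux_m_cases {t D d : ℝ} {r s e : ℕ} (ht : 2 < t) (hD : t ^ 2 = D + 1) (hD0 : 0 < D)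
    (hd : d * D = 1) (hl : 1 ≤ r + s + e) :
    let m : ℝ := r + s * (t / (t ^ 2 - 1)) + e * t
    (1 ≤ s ∧ t * d ≤ m) ∨ (s = 0 ∧ 1 ≤ r ∧ 1 ≤ m) ∨ (s = 0 ∧ r = 0 ∧ 2 ≤ m) := by
  intro m
  have hd0 : 0 < d := by
    by_contra hcon
    nlinarith
  have htd : t / (t ^ 2 - 1) = t * d := by
    have : d = 1 / D := by field_simp; linarith
    rw [hD, this, add_sub_cancel_right]; field_simp
  have hm : m = r + s * (t * d) + e * t := by simp only [m]; rw [htd]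
  have hr : (0 : ℝ) ≤ r := Nat.cast_nonneg _
  have hs : (0 : ℝ) ≤ s := Nat.cast_nonneg _
  have he : (0 : ℝ) ≤ e := Nat.cast_nonneg _
  have htd0 : 0 < t * d := by positivity
  rcases Nat.eq_zero_or_pos s with h0 | h0
  · right
    rcases Nat.eq_zero_or_pos r with h1 | h1
    · right
      have : (1 : ℝ) ≤ e := by exact_mod_cast (by omega : 1 ≤ e)
      refine ⟨h0, h1, ?_⟩
      rw [hm]; nlinarith
    · left
      have : (1 : ℝ) ≤ r := by exact_mod_cast h1
      refine ⟨h0, h1, ?_⟩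
      rw [hm]; nlinarith
  · left
    have : (1 : ℝ) ≤ s := by exact_mod_cast h0
    refine ⟨h0, ?_⟩
    rw [hm]; nlinarith

/-- n = 4S. -/
lemma aux_num0 {t : ℝ} {S ρ₁ ρ₂ κ₁ κ₂ r s e : ℕ} (hS : 3 ≤ S) (ht : 2 < t)
    (heq : t ^ 2 - 1 = S + 1 / t) (hc : Cnt (4 * S) ρ₁ ρ₂ κ₁ κ₂ r s e)
    (h : NumOK t ρ₁ ρ₂ κ₁ κ₂ (r + s * (t / (t ^ 2 - 1)) + e * t)) :
    r = 0 ∧ s = 1 ∧ ρ₁ = 0 ∧ ρ₂ = 0 ∧ κ₁ = S ∧ κ₂ = S := by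
  obtain ⟨tot, link, r1, r2⟩ := hc
  obtain ⟨D, hD⟩ : ∃ D, D = t ^ 2 - 1 := ⟨_, rfl⟩
  have hSr : (3 : ℝ) ≤ S := by exact_mod_cast hS
  have hti : 0 < 1 / t := by positivity
  have hti2 : 1 / t < 1 / 2 := by gcongr
  have hD3 : 3 < D := by linarith
  have hd : (1 / D) * D = 1 := by field_simp
  have hd0 : 0 < 1 / D := by positivity
  have hd3 : 1 / D < 1 / 3 := by gcongr
  have hD' : t ^ 2 = D + 1 := by linarith
  have hDS : D = S + 1 / t := by linarith
  generalize 1 / D = d at hd hd0 hd3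
  obtain ⟨b1, b2, b3, b4⟩ := aux_num_basic h hD' (by linarith) hd
  have hcm := aux_m_cases (r := r) (s := s) (e := e) ht hD' (by linarith) hd link
  simp only at hcm
  generalize hmm : (r + s * (t / (t ^ 2 - 1)) + e * t : ℝ) = m at *
  -- (1+d)/t = t d
  have hkey : (1 / t) * (1 + d) = t * d := by
    have : t * t * d = 1 + d := by nlinarith
    field_simp; linarith
  have e2 : D * (1 + d) = S * (1 + d) + t * d := by rw [hDS, add_mul, hkey]
  rw [e2] at b1 b2 b3 b4
  have htd : t * d < 2 / 3 := by rw [← hkey]; nlinarith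
  have tdlt : t * d < 1 + d := by linarith
  -- integrality
  have hmono : ∀ a b : ℝ, a ≤ b → a * (1 + d) ≤ b * (1 + d) := fun a b hab =>
    mul_le_mul_of_nonneg_right hab (by linarith)
  have hjd : ∀ a : ℝ, 0 ≤ a → a * d ≤ a / 3 := fun a ha => by
    have := mul_le_mul_of_nonneg_left (show d ≤ 1 / 3 by linarith) ha
    linarith
  have hJ : ∀ j : ℕ, κ₁ + κ₂ + j ≥ 2 * S → (2 * S - j : ℝ) * (1 + d) ≤ (κ₁ + κ₂ : ℝ) * (1 + d) := by
    intro j hj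
    have : (2 * S : ℝ) ≤ κ₁ + κ₂ + j := by exact_mod_cast hj
    apply mul_le_mul_of_nonneg_right <;> linarith
  rcases hcm with ⟨h1, hm⟩ | ⟨h0, h1, hm⟩ | ⟨h0, h1, hm⟩
  · obtain ⟨j, hj⟩ : ∃ j, j = (ρ₁ + ρ₂) / 2 := ⟨_, rfl⟩
    have k1 := hJ j (by omega)
    have k2 : (2 * j : ℝ) ≤ ρ₁ + ρ₂ := by exact_mod_cast (by omega : 2 * j ≤ ρ₁ + ρ₂)
    have hj0 : j = 0 := by
      by_contra hcon
      have : (1 : ℝ) ≤ j := by exact_mod_cast Nat.one_le_iff_ne_zero.mpr hcon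
      linarith [hjd (j - 1) (by linarith)]
    have hJ0 : ρ₁ + ρ₂ = 0 := by
      by_contra hcon
      have : (1 : ℝ) ≤ ρ₁ + ρ₂ := by exact_mod_cast Nat.one_le_iff_ne_zero.mpr hcon
      subst hj0
      rw [Nat.cast_zero] at *
      linarith
    have hp1 : ρ₁ = 0 := by omega
    have hp2 : ρ₂ = 0 := by omega
    subst hp1 hp2
    have q1 : κ₁ ≤ S := by
      by_contra hcon
      have : (S + 1 : ℝ) ≤ κ₁ := by exact_mod_cast (by omega : S + 1 ≤ κ₁)
      rw [Nat.cast_zero] at *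
      linarith [hmono _ _ ‹(_ : ℝ) ≤ κ₁›]
    have q2 : κ₂ ≤ S := by
      by_contra hcon
      have : (S + 1 : ℝ) ≤ κ₂ := by exact_mod_cast (by omega : S + 1 ≤ κ₂)
      rw [Nat.cast_zero] at *
      linarith [hmono _ _ ‹(_ : ℝ) ≤ κ₂›]
    omega
  · exfalso
    obtain ⟨i, hi⟩ : ∃ i, i = (ρ₁ + ρ₂ + 1) / 2 := ⟨_, rfl⟩
    have k1 := hJ i (by omega)
    have k2 : (2 * i : ℝ) ≤ ρ₁ + ρ₂ + 1 := by exact_mod_cast (by omega : 2 * i ≤ ρ₁ + ρ₂ + 1)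
    have k3 : (1 : ℝ) ≤ i := by exact_mod_cast (by omega : 1 ≤ i)
    linarith [hjd i (by linarith)]
  · exfalso
    obtain ⟨j, hj⟩ : ∃ j, j = (ρ₁ + ρ₂) / 2 := ⟨_, rfl⟩
    have k1 := hJ (j + 1) (by omega)
    push_cast at k1
    have k2 : (2 * j : ℝ) ≤ ρ₁ + ρ₂ := by exact_mod_cast (by omega : 2 * j ≤ ρ₁ + ρ₂)
    have k3 : (0 : ℝ) ≤ j := Nat.cast_nonneg _
    linarith [hjd j (by linarith)]

/-- n = 4S+2. -/
lemma aux_num2 {t ε : ℝ} {S ρ₁ ρ₂ κ₁ κ₂ r s e : ℕ} (hS : 2 ≤ S) (ht : 2 < t) (hε : 0 < ε)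
    (heq : t ^ 2 - 1 = S + 1 + ε) (heq2 : t ^ 2 * (ε * (1 + ε)) = 1)
    (hc : Cnt (4 * S + 2) ρ₁ ρ₂ κ₁ κ₂ r s e)
    (h : NumOK t ρ₁ ρ₂ κ₁ κ₂ (r + s * (t / (t ^ 2 - 1)) + e * t)) :
    r = 0 ∧ s = 1 ∧ ρ₁ = 0 ∧ ρ₂ = 0 ∧ ((κ₁ = S + 1 ∧ κ₂ = S) ∨ (κ₁ = S ∧ κ₂ = S + 1)) := by
  obtain ⟨tot, link, r1, r2⟩ := hc
  obtain ⟨D, hD⟩ : ∃ D, D = t ^ 2 - 1 := ⟨_, rfl⟩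
  have hSr : (2 : ℝ) ≤ S := by exact_mod_cast hS
  have hD3 : 3 < D := by linarith
  have hd : (1 / D) * D = 1 := by field_simp
  have hd0 : 0 < 1 / D := by positivity
  have hd3 : 1 / D < 1 / 3 := by gcongr
  have hD' : t ^ 2 = D + 1 := by linarith
  have hDS : D = S + 1 + ε := by linarith
  generalize 1 / D = d at hd hd0 hd3
  obtain ⟨b1, b2, b3, b4⟩ := aux_num_basic h hD' (by linarith) hd
  have hcm := aux_m_cases (r := r) (s := s) (e := e) ht hD' (by linarith) hd link
  simp only at hcm
  generalize hmm : (r + s * (t / (t ^ 2 - 1)) + e * t : ℝ) = m at *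
  have hεx : (D + 1) * ε < 1 := by rw [← hD']; nlinarith [mul_pos (mul_pos (show 0 < t ^ 2 by positivity) hε) hε]
  have hεd : ε * (1 + d) < d := by
    have : ε * (1 + d) = (D + 1) * ε * d := by linear_combination (-ε) * hd
    rw [this]; nlinarith
  have e2 : D * (1 + d) = (S + 1) * (1 + d) + ε * (1 + d) := by rw [hDS, add_mul]
  generalize hη : ε * (1 + d) = η at *
  rw [e2] at b1 b2 b3 b4
  have htd : 2 * d < t * d := by nlinarith
  have hmono : ∀ a b : ℝ, a ≤ b → a * (1 + d) ≤ b * (1 + d) := fun a b hab =>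
    mul_le_mul_of_nonneg_right hab (by linarith)
  have hjd : ∀ a : ℝ, 0 ≤ a → a * d ≤ a / 3 := fun a ha => by
    have := mul_le_mul_of_nonneg_left (show d ≤ 1 / 3 by linarith) ha
    linarith
  have hJ : ∀ j : ℕ, κ₁ + κ₂ + j ≥ 2 * S + 1 →
      (2 * S + 1 - j : ℝ) * (1 + d) ≤ (κ₁ + κ₂ : ℝ) * (1 + d) := by
    intro j hj
    have : (2 * S + 1 : ℝ) ≤ κ₁ + κ₂ + j := by exact_mod_cast hj
    apply mul_le_mul_of_nonneg_right <;> linarith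
  rcases hcm with ⟨h1, hm⟩ | ⟨h0, h1, hm⟩ | ⟨h0, h1, hm⟩
  · obtain ⟨j, hj⟩ : ∃ j, j = (ρ₁ + ρ₂) / 2 := ⟨_, rfl⟩
    have k1 := hJ j (by omega)
    have k2 : (2 * j : ℝ) ≤ ρ₁ + ρ₂ := by exact_mod_cast (by omega : 2 * j ≤ ρ₁ + ρ₂)
    have hj0 : j = 0 := by
      by_contra hcon
      have : (1 : ℝ) ≤ j := by exact_mod_cast Nat.one_le_iff_ne_zero.mpr hcon
      linarith [hjd (j - 1) (by linarith)]
    have hJ0 : ρ₁ + ρ₂ = 0 := by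
      by_contra hcon
      have : (1 : ℝ) ≤ ρ₁ + ρ₂ := by exact_mod_cast Nat.one_le_iff_ne_zero.mpr hcon
      subst hj0
      rw [Nat.cast_zero] at *
      linarith
    have hp1 : ρ₁ = 0 := by omega
    have hp2 : ρ₂ = 0 := by omega
    subst hp1 hp2
    have q1 : κ₁ ≤ S + 1 := by
      by_contra hcon
      have : (S + 2 : ℝ) ≤ κ₁ := by exact_mod_cast (by omega : S + 2 ≤ κ₁)
      rw [Nat.cast_zero] at *
      linarith [hmono _ _ ‹(_ : ℝ) ≤ κ₁›]
    have q2 : κ₂ ≤ S + 1 := by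
      by_contra hcon
      have : (S + 2 : ℝ) ≤ κ₂ := by exact_mod_cast (by omega : S + 2 ≤ κ₂)
      rw [Nat.cast_zero] at *
      linarith [hmono _ _ ‹(_ : ℝ) ≤ κ₂›]
    have q3 : κ₁ + κ₂ ≤ 2 * S + 1 := by
      by_contra hcon
      have : (2 * S + 2 : ℝ) ≤ κ₁ + κ₂ := by exact_mod_cast (by omega : 2 * S + 2 ≤ κ₁ + κ₂)
      rw [Nat.cast_zero] at *
      linarith [hmono _ _ this]
    omega
  · exfalso
    obtain ⟨i, hi⟩ : ∃ i, i = (ρ₁ + ρ₂ + 1) / 2 := ⟨_, rfl⟩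
    have k1 := hJ i (by omega)
    have k2 : (2 * i : ℝ) ≤ ρ₁ + ρ₂ + 1 := by exact_mod_cast (by omega : 2 * i ≤ ρ₁ + ρ₂ + 1)
    have k4 : (2 : ℝ) ≤ ρ₁ + ρ₂ := by exact_mod_cast (by omega : 2 ≤ ρ₁ + ρ₂)
    have k3 : (1 : ℝ) ≤ i := by exact_mod_cast (by omega : 1 ≤ i)
    rcases Nat.lt_or_ge i 2 with hi2 | hi2
    · have : i = 1 := by omega
      subst this
      push_cast at *
      linarith
    · have k3 : (2 : ℝ) ≤ i := by exact_mod_cast hi2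
      linarith [hjd i (by linarith)]
  · exfalso
    obtain ⟨j, hj⟩ : ∃ j, j = (ρ₁ + ρ₂) / 2 := ⟨_, rfl⟩
    have k1 := hJ (j + 1) (by omega)
    push_cast at k1
    have k2 : (2 * j : ℝ) ≤ ρ₁ + ρ₂ := by exact_mod_cast (by omega : 2 * j ≤ ρ₁ + ρ₂)
    have k3 : (0 : ℝ) ≤ j := Nat.cast_nonneg _
    linarith [hjd j (by linarith)]

/-- n = 4S+1. -/
lemma aux_num1 {t : ℝ} {S ρ₁ ρ₂ κ₁ κ₂ r s e : ℕ} (hS : 3 ≤ S) (ht : 2 < t)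
    (heq : t ^ 2 - 1 = S + 1)
    (hc : Cnt (4 * S + 1) ρ₁ ρ₂ κ₁ κ₂ r s e)
    (h : NumOK t ρ₁ ρ₂ κ₁ κ₂ (r + s * (t / (t ^ 2 - 1)) + e * t)) :
    r = 0 ∧ s = 1 ∧ κ₁ = S ∧ κ₂ = S ∧ ((ρ₁ = 0 ∧ ρ₂ = 1) ∨ (ρ₁ = 1 ∧ ρ₂ = 0)) := by
  obtain ⟨tot, link, r1, r2⟩ := hc
  obtain ⟨D, hD⟩ : ∃ D, D = t ^ 2 - 1 := ⟨_, rfl⟩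
  have hSr : (3 : ℝ) ≤ S := by exact_mod_cast hS
  have hD3 : 4 ≤ D := by linarith
  have hd : (1 / D) * D = 1 := by field_simp
  have hd0 : 0 < 1 / D := by positivity
  have hd3 : 1 / D ≤ 1 / 4 := by gcongr
  have hD' : t ^ 2 = D + 1 := by linarith
  have hDS : D = S + 1 := by linarith
  generalize 1 / D = d at hd hd0 hd3
  obtain ⟨b1, b2, b3, b4⟩ := aux_num_basic h hD' (by linarith) hd
  have hcm := aux_m_cases (r := r) (s := s) (e := e) ht hD' (by linarith) hd link
  simp only at hcm
  generalize hmm : (r + s * (t / (t ^ 2 - 1)) + e * t : ℝ) = m at *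
  rw [hDS] at b1 b2 b3 b4
  have htd : 2 * d < t * d := by nlinarith
  have hmono : ∀ a b : ℝ, a ≤ b → a * (1 + d) ≤ b * (1 + d) := fun a b hab =>
    mul_le_mul_of_nonneg_right hab (by linarith)
  have hjd : ∀ a : ℝ, 0 ≤ a → a * d ≤ a / 4 := fun a ha => by
    have := mul_le_mul_of_nonneg_left (show d ≤ 1 / 4 by linarith) ha
    linarith
  have hJ : ∀ j : ℕ, κ₁ + κ₂ + j ≥ 2 * S + 1 →
      (2 * S + 1 - j : ℝ) * (1 + d) ≤ (κ₁ + κ₂ : ℝ) * (1 + d) := by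
    intro j hj
    have : (2 * S + 1 : ℝ) ≤ κ₁ + κ₂ + j := by exact_mod_cast hj
    apply mul_le_mul_of_nonneg_right <;> linarith
  rcases hcm with ⟨h1, hm⟩ | ⟨h0, h1, hm⟩ | ⟨h0, h1, hm⟩
  · obtain ⟨i, hi⟩ : ∃ i, i = (ρ₁ + ρ₂ + 1) / 2 := ⟨_, rfl⟩
    have k1 := hJ i (by omega)
    have k2 : (2 * i : ℝ) ≤ ρ₁ + ρ₂ + 1 := by exact_mod_cast (by omega : 2 * i ≤ ρ₁ + ρ₂ + 1)
    obtain ⟨b5, b6⟩ := b4 (by linarith)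
    have q1 : κ₁ ≤ S := by
      by_contra hcon
      have : (S + 1 : ℝ) ≤ κ₁ := by exact_mod_cast (by omega : S + 1 ≤ κ₁)
      have : (0 : ℝ) ≤ ρ₁ := Nat.cast_nonneg _
      linarith [hmono _ _ ‹(_ : ℝ) ≤ κ₁›]
    have q2 : κ₂ ≤ S := by
      by_contra hcon
      have : (S + 1 : ℝ) ≤ κ₂ := by exact_mod_cast (by omega : S + 1 ≤ κ₂)
      have : (0 : ℝ) ≤ ρ₂ := Nat.cast_nonneg _
      linarith [hmono _ _ ‹(_ : ℝ) ≤ κ₂›]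
    have hi2 : i < 2 := by
      by_contra hcon
      have : (2 : ℝ) ≤ i := by exact_mod_cast (by omega : 2 ≤ i)
      linarith [hjd (i - 2) (by linarith)]
    have hJ2 : ρ₁ + ρ₂ < 2 := by
      by_contra hcon
      have : (2 : ℝ) ≤ ρ₁ + ρ₂ := by exact_mod_cast (by omega : 2 ≤ ρ₁ + ρ₂)
      have : i = 1 := by omega
      subst this
      push_cast at *
      linarith
    omega
  · exfalso
    obtain ⟨j, hj⟩ : ∃ j, j = (ρ₁ + ρ₂) / 2 := ⟨_, rfl⟩
    have k1 := hJ (j + 1) (by omega)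
    push_cast at k1
    have k2 : (2 * j : ℝ) ≤ ρ₁ + ρ₂ := by exact_mod_cast (by omega : 2 * j ≤ ρ₁ + ρ₂)
    have k3 : (1 : ℝ) ≤ j := by exact_mod_cast (by omega : 1 ≤ j)
    linarith [hjd j (by linarith)]
  · exfalso
    obtain ⟨j, hj⟩ : ∃ j, j = (ρ₁ + ρ₂) / 2 := ⟨_, rfl⟩
    have k1 := hJ (j + 2) (by omega)
    push_cast at k1
    have k2 : (2 * j : ℝ) ≤ ρ₁ + ρ₂ := by exact_mod_cast (by omega : 2 * j ≤ ρ₁ + ρ₂)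
    have k3 : (0 : ℝ) ≤ j := Nat.cast_nonneg _
    linarith [hjd j (by linarith)]

/-- n = 4S+3. -/
lemma aux_num3 {t ε : ℝ} {S ρ₁ ρ₂ κ₁ κ₂ r s e : ℕ} (hS : 2 ≤ S) (ht : 2 < t) (hε : 0 < ε)
    (heq : t ^ 2 - 1 = S + 1 + ε) (heq2 : t ^ 2 * ε ^ 2 + ε = 1)
    (hc : Cnt (4 * S + 3) ρ₁ ρ₂ κ₁ κ₂ r s e)
    (h : NumOK t ρ₁ ρ₂ κ₁ κ₂ (r + s * (t / (t ^ 2 - 1)) + e * t)) :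
    r = 0 ∧ s = 1 ∧ ((κ₁ = S + 1 ∧ κ₂ = S ∧ ρ₁ = 0 ∧ ρ₂ = 1) ∨
      (κ₁ = S ∧ κ₂ = S + 1 ∧ ρ₁ = 1 ∧ ρ₂ = 0)) := by
  obtain ⟨tot, link, r1, r2⟩ := hc
  obtain ⟨D, hD⟩ : ∃ D, D = t ^ 2 - 1 := ⟨_, rfl⟩
  have hSr : (2 : ℝ) ≤ S := by exact_mod_cast hS
  have hD3 : 3 < D := by linarith
  have hd : (1 / D) * D = 1 := by field_simp
  have hd0 : 0 < 1 / D := by positivity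
  have hd3 : 1 / D < 1 / 3 := by gcongr
  have hD' : t ^ 2 = D + 1 := by linarith
  have hDS : D = S + 1 + ε := by linarith
  generalize 1 / D = d at hd hd0 hd3
  obtain ⟨b1, b2, b3, b4⟩ := aux_num_basic h hD' (by linarith) hd
  have hcm := aux_m_cases (r := r) (s := s) (e := e) ht hD' (by linarith) hd link
  simp only at hcm
  generalize hmm : (r + s * (t / (t ^ 2 - 1)) + e * t : ℝ) = m at *
  have hε4 : ε < 2 / 5 := by
    by_contra hcon
    push Not at hcon
    nlinarith
  have hεt : ε * t < 1 := by
    by_contra hcon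
    push Not at hcon
    nlinarith
  have hεd : ε * (1 + d) < t * d := by
    have : ε * (1 + d) = (ε * t) * (t * d) := by linear_combination (-ε) * hd - ε * d * hD'
    rw [this]
    have : 0 < t * d := by positivity
    nlinarith
  have hε5 : ε * (1 + d) < 8 / 15 := by nlinarith
  have e2 : D * (1 + d) = (S + 1) * (1 + d) + ε * (1 + d) := by rw [hDS, add_mul]
  generalize hη : ε * (1 + d) = η at *
  rw [e2] at b1 b2 b3 b4
  have hmono : ∀ a b : ℝ, a ≤ b → a * (1 + d) ≤ b * (1 + d) := fun a b hab =>
    mul_le_mul_of_nonneg_right hab (by linarith)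
  have hjd : ∀ a : ℝ, 0 ≤ a → a * d ≤ a / 3 := fun a ha => by
    have := mul_le_mul_of_nonneg_left (show d ≤ 1 / 3 by linarith) ha
    linarith
  have hJ : ∀ j : ℕ, κ₁ + κ₂ + j ≥ 2 * S + 2 →
      (2 * S + 2 - j : ℝ) * (1 + d) ≤ (κ₁ + κ₂ : ℝ) * (1 + d) := by
    intro j hj
    have : (2 * S + 2 : ℝ) ≤ κ₁ + κ₂ + j := by exact_mod_cast hj
    apply mul_le_mul_of_nonneg_right <;> linarith
  rcases hcm with ⟨h1, hm⟩ | ⟨h0, h1, hm⟩ | ⟨h0, h1, hm⟩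
  · obtain ⟨i, hi⟩ : ∃ i, i = (ρ₁ + ρ₂ + 1) / 2 := ⟨_, rfl⟩
    have k1 := hJ i (by omega)
    have k2 : (2 * i : ℝ) ≤ ρ₁ + ρ₂ + 1 := by exact_mod_cast (by omega : 2 * i ≤ ρ₁ + ρ₂ + 1)
    have p1 : (0 : ℝ) ≤ ρ₁ := Nat.cast_nonneg _
    have p2 : (0 : ℝ) ≤ ρ₂ := Nat.cast_nonneg _
    have hi2 : i < 2 := by
      by_contra hcon
      have : (2 : ℝ) ≤ i := by exact_mod_cast (by omega : 2 ≤ i)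
      linarith [hjd (i - 2) (by linarith)]
    have hi0 : i ≠ 0 := by
      rintro rfl
      push_cast at *
      linarith
    have hi1 : i = 1 := by omega
    subst hi1
    push_cast at *
    have hJ2 : ρ₁ + ρ₂ < 2 := by
      by_contra hcon
      have : (2 : ℝ) ≤ ρ₁ + ρ₂ := by exact_mod_cast (by omega : 2 ≤ ρ₁ + ρ₂)
      linarith
    have q1 : κ₁ + ρ₁ ≤ S + 1 := by
      by_contra hcon
      have : (S + 2 : ℝ) ≤ κ₁ + ρ₁ := by exact_mod_cast (by omega : S + 2 ≤ κ₁ + ρ₁)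
      have : (ρ₁ : ℝ) ≤ 1 := by exact_mod_cast (by omega : ρ₁ ≤ 1)
      linarith [hmono (S + 2 - ρ₁) κ₁ (by linarith), mul_le_mul_of_nonneg_right this hd0.le]
    have q2 : κ₂ + ρ₂ ≤ S + 1 := by
      by_contra hcon
      have : (S + 2 : ℝ) ≤ κ₂ + ρ₂ := by exact_mod_cast (by omega : S + 2 ≤ κ₂ + ρ₂)
      have : (ρ₂ : ℝ) ≤ 1 := by exact_mod_cast (by omega : ρ₂ ≤ 1)
      linarith [hmono (S + 2 - ρ₂) κ₂ (by linarith), mul_le_mul_of_nonneg_right this hd0.le]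
    omega
  · exfalso
    obtain ⟨j, hj⟩ : ∃ j, j = (ρ₁ + ρ₂) / 2 := ⟨_, rfl⟩
    have k1 := hJ (j + 1) (by omega)
    push_cast at k1
    have k2 : (2 * j : ℝ) ≤ ρ₁ + ρ₂ := by exact_mod_cast (by omega : 2 * j ≤ ρ₁ + ρ₂)
    have k3 : (1 : ℝ) ≤ j := by exact_mod_cast (by omega : 1 ≤ j)
    linarith [hjd j (by linarith)]
  · exfalso
    obtain ⟨j, hj⟩ : ∃ j, j = (ρ₁ + ρ₂) / 2 := ⟨_, rfl⟩
    have k1 := hJ (j + 2) (by omega)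
    push_cast at k1
    have k2 : (2 * j : ℝ) ≤ ρ₁ + ρ₂ := by exact_mod_cast (by omega : 2 * j ≤ ρ₁ + ρ₂)
    have k3 : (0 : ℝ) ≤ j := Nat.cast_nonneg _
    linarith [hjd j (by linarith)]

end PartC

section PartE

set_option linter.unusedSimpArgs false

lemma aux_G3_pos {s p q : ℕ} {t : ℝ} (ht : 1 < t)
    (hF : 0 < t ^ 2 - (s + 1) * (t ^ 2 / (t ^ 2 - 1)))
    (hFF : (t ^ 2 - (s + 1) * (t ^ 2 / (t ^ 2 - 1))) * (t ^ 2 - p - (q + 1) * (t ^ 2 / (t ^ 2 - 1)))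
      = (t / (t ^ 2 - 1)) ^ 2) :
    ∃ z : (Fin 4 ⊕ ((Fin 0 ⊕ Fin s × Fin 2) ⊕ (Fin p ⊕ Fin q × Fin 2))) → ℝ,
      (∀ i, 0 < z i) ∧ ∀ i, (adjMat (G3 0 s p q)).mulVec z i ≤ t * z i := by
  classical
  obtain ⟨D, hD⟩ : ∃ D, D = t ^ 2 - 1 := ⟨_, rfl⟩
  have hD0 : 0 < D := by nlinarith
  have ht0 : 0 < t := by linarith
  rw [← hD] at hF hFF
  obtain ⟨a, ha⟩ : ∃ a, a = t / D := ⟨_, rfl⟩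
  obtain ⟨b, hb⟩ : ∃ b, b = t ^ 2 - (s + 1) * (t ^ 2 / D) := ⟨_, rfl⟩
  rw [← hb] at hF hFF
  rw [← ha] at hFF
  have ha0 : 0 < a := by rw [ha]; positivity
  have hx : t ^ 2 = D + 1 := by linarith
  refine ⟨Sum.elim ![a, (t * a + b) / D, (a + t * b) / D, b]
    (Sum.elim (Sum.elim (fun _ => a / t) (fun jk => ![t * a / D, a / D] jk.2))
      (Sum.elim (fun _ => b / t) (fun jk => ![t * b / D, b / D] jk.2))), ?_, ?_⟩
  · rintro (i | ((i | ⟨j, k⟩) | (i | ⟨j, k⟩)))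
    · fin_cases i <;> simp <;> positivity
    · simp; positivity
    · fin_cases k <;> simp <;> positivity
    · simp; positivity
    · fin_cases k <;> simp <;> positivity
  · intro i
    rw [aux_adjMat_mulVec]
    have e1 : t * (t * a / D) = a + a / D := by
      field_simp; rw [hx]
    have e2 : t * (t * b / D) = b + b / D := by
      field_simp; rw [hx]
    rcases i with (i | ((i | ⟨j, k⟩) | (i | ⟨j, k⟩)))
    · fin_cases i
      · simp [G3, Fintype.sum_sum_type, Fin.sum_univ_four, Fintype.sum_prod_type, Fin.exists_fin_succ]
        rw [hb, ha]
        apply le_of_eq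
        field_simp
        ring
      · simp [G3, Fintype.sum_sum_type, Fin.sum_univ_four, Fintype.sum_prod_type, Fin.exists_fin_succ]
        apply le_of_eq
        linear_combination (-1 : ℝ) * e1
      · simp [G3, Fintype.sum_sum_type, Fin.sum_univ_four, Fintype.sum_prod_type, Fin.exists_fin_succ]
        apply le_of_eq
        linear_combination (-1 : ℝ) * e2
      · simp [G3, Fintype.sum_sum_type, Fin.sum_univ_four, Fintype.sum_prod_type, Fin.exists_fin_succ]
        apply le_of_eq
        have e3 : a ^ 2 = t * (a / D) := by rw [ha]; field_simp
        rw [e3] at hFF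
        have e4 : (a + t * b) / D + (p * (b / t) + q * (t * b / D)) - t * b
            = (-1 / t) * (b * (t ^ 2 - p - (q + 1) * (t ^ 2 / D)) - t * (a / D)) := by
          field_simp
          ring
        rw [hFF, sub_self, mul_zero] at e4
        linarith
    · simp [G3, Fintype.sum_sum_type, Fin.sum_univ_four, Fintype.sum_prod_type, Fin.exists_fin_succ]
      positivity
    · fin_cases k
      · simp [G3, Fintype.sum_sum_type, Fin.sum_univ_four, Fintype.sum_prod_type, Fin.exists_fin_succ]
        linarith
      · simp [G3, Fintype.sum_sum_type, Fin.sum_univ_four, Fintype.sum_prod_type, Fin.exists_fin_succ]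
        apply le_of_eq; ring
    · simp [G3, Fintype.sum_sum_type, Fin.sum_univ_four, Fintype.sum_prod_type, Fin.exists_fin_succ]
      apply le_of_eq; field_simp
    · fin_cases k
      · simp [G3, Fintype.sum_sum_type, Fin.sum_univ_four, Fintype.sum_prod_type, Fin.exists_fin_succ]
        linarith
      · simp [G3, Fintype.sum_sum_type, Fin.sum_univ_four, Fintype.sum_prod_type, Fin.exists_fin_succ]
        apply le_of_eq; ring

lemma aux_dissoc_false {V : Type} [Fintype V] {G : SimpleGraph V} {S : Set V} (h : IsDissocSet G S)
    {v x y : V} (hv : v ∈ S) (hx : x ∈ S) (hy : y ∈ S) (hxy : x ≠ y) (h1 : G.Adj v x)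
    (h2 : G.Adj v y) : False := by
  have := h v hv
  rw [Set.ncard_le_one (Set.toFinite _)] at this
  exact hxy (this x ⟨hx, h1⟩ y ⟨hy, h2⟩)

lemma aux_G3_conn (s p q : ℕ) : (G3 0 s p q).Connected := by
  have h01 : (G3 0 s p q).Adj (Sum.inl 0) (Sum.inl 1) := by simp [G3, Fin.exists_fin_succ]
  have h12 : (G3 0 s p q).Adj (Sum.inl 1) (Sum.inl 2) := by simp [G3, Fin.exists_fin_succ]
  have h23 : (G3 0 s p q).Adj (Sum.inl 2) (Sum.inl 3) := by simp [G3, Fin.exists_fin_succ]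
  have r1 := h01.reachable
  have r2 := r1.trans h12.reachable
  have r3 := r2.trans h23.reachable
  have key : ∀ i, (G3 0 s p q).Reachable (Sum.inl 0) i := by
    rintro (i | ((i | ⟨j, k⟩) | (i | ⟨j, k⟩)))
    · fin_cases i
      · exact SimpleGraph.Reachable.refl _
      · exact r1
      · exact r2
      · exact r3
    · exact i.elim0
    · have a1 : (G3 0 s p q).Adj (Sum.inl 0) (Sum.inr (Sum.inl (Sum.inr (j, 0)))) := by simp [G3]
      have a2 : (G3 0 s p q).Adj (Sum.inr (Sum.inl (Sum.inr (j, 0))))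
          (Sum.inr (Sum.inl (Sum.inr (j, 1)))) := by simp [G3]
      fin_cases k
      · exact a1.reachable
      · exact a1.reachable.trans a2.reachable
    · have a1 : (G3 0 s p q).Adj (Sum.inl 3) (Sum.inr (Sum.inr (Sum.inl i))) := by simp [G3]
      exact r3.trans a1.reachable
    · have a1 : (G3 0 s p q).Adj (Sum.inl 3) (Sum.inr (Sum.inr (Sum.inr (j, 0)))) := by simp [G3]
      have a2 : (G3 0 s p q).Adj (Sum.inr (Sum.inr (Sum.inr (j, 0))))
          (Sum.inr (Sum.inr (Sum.inr (j, 1)))) := by simp [G3]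
      fin_cases k
      · exact r3.trans a1.reachable
      · exact r3.trans (a1.reachable.trans a2.reachable)
  have : Nonempty (Fin 4 ⊕ ((Fin 0 ⊕ Fin s × Fin 2) ⊕ (Fin p ⊕ Fin q × Fin 2))) := ⟨Sum.inl 0⟩
  exact SimpleGraph.Connected.mk fun x y => (key x).symm.trans (key y)

lemma aux_G3_diss {s p q : ℕ} (hs : 2 ≤ s) (hq : 1 ≤ q) :
    dissNum (G3 0 s p q) = p + 2 * s + 2 * q + 2 := by
  classical
  have hcardW : Fintype.card (Fin 4 ⊕ ((Fin 0 ⊕ Fin s × Fin 2) ⊕ (Fin p ⊕ Fin q × Fin 2)))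
      = p + 2 * s + 2 * q + 4 := by
    simp; ring
  apply le_antisymm
  · obtain ⟨S, hS, hc⟩ := aux_dissNum_mem (G3 0 s p q)
    by_contra hcon
    have h1 := Set.ncard_add_ncard_compl S
    rw [Nat.card_eq_fintype_card, hcardW] at h1
    have h2 : Sᶜ.ncard ≤ 1 := by omega
    rw [Set.ncard_le_one (Set.toFinite _)] at h2
    have h3 : ∀ x y, x ≠ y → x ∉ S → y ∈ S := by
      intro x y hxy hx
      by_contra hy
      exact hxy (h2 x hx y hy)
    by_cases h0 : Sum.inl 0 ∈ S
    · have a1 : (G3 0 s p q).Adj (Sum.inl 0) (Sum.inl 1) := by simp [G3, Fin.exists_fin_succ]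
      have a2 : (G3 0 s p q).Adj (Sum.inl 0) (Sum.inr (Sum.inl (Sum.inr (⟨0, by omega⟩, 0)))) := by
        simp [G3]
      have a3 : (G3 0 s p q).Adj (Sum.inl 0) (Sum.inr (Sum.inl (Sum.inr (⟨1, by omega⟩, 0)))) := by
        simp [G3]
      by_cases m1 : Sum.inl 1 ∈ S
      · by_cases m2 : Sum.inr (Sum.inl (Sum.inr ((⟨0, by omega⟩ : Fin s), (0 : Fin 2)))) ∈ S
        · exact aux_dissoc_false hS h0 m1 m2 (by simp) a1 a2
        · exact aux_dissoc_false hS h0 m1 (h3 _ _ (by simp) m2) (by simp) a1 a3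
      · exact aux_dissoc_false hS h0 (h3 _ _ (by simp) m1) (h3 _ _ (by simp) m1) (by simp) a2 a3
    · have a1 : (G3 0 s p q).Adj (Sum.inl 3) (Sum.inl 2) := by simp [G3, Fin.exists_fin_succ]
      have a2 : (G3 0 s p q).Adj (Sum.inl 3) (Sum.inr (Sum.inr (Sum.inr (⟨0, by omega⟩, 0)))) := by
        simp [G3]
      exact aux_dissoc_false hS (h3 _ _ (by simp) h0) (h3 _ _ (by simp) h0) (h3 _ _ (by simp) h0)
        (by simp) a1 a2
  · have hc : ({Sum.inl 0, Sum.inl 3}ᶜ :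
        Set (Fin 4 ⊕ ((Fin 0 ⊕ Fin s × Fin 2) ⊕ (Fin p ⊕ Fin q × Fin 2)))).ncard
        = p + 2 * s + 2 * q + 2 := by
      have h1 := Set.ncard_add_ncard_compl ({Sum.inl 0, Sum.inl 3} :
        Set (Fin 4 ⊕ ((Fin 0 ⊕ Fin s × Fin 2) ⊕ (Fin p ⊕ Fin q × Fin 2))))
      rw [Nat.card_eq_fintype_card, hcardW, Set.ncard_pair (by simp)] at h1
      omega
    rw [← hc]
    apply aux_le_dissNum
    intro v hv
    rw [Set.ncard_le_one (Set.toFinite _)]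
    have key : ∀ x, x ∈ ({Sum.inl 0, Sum.inl 3}ᶜ : Set _) → (G3 0 s p q).Adj v x →
        x = (match v with
          | Sum.inl i => Sum.inl (3 - i)
          | Sum.inr (Sum.inl (Sum.inr (j, k))) => Sum.inr (Sum.inl (Sum.inr (j, 1 - k)))
          | Sum.inr (Sum.inr (Sum.inr (j, k))) => Sum.inr (Sum.inr (Sum.inr (j, 1 - k)))
          | w => w) := by
      intro x hx hadj
      rw [G3, SimpleGraph.fromRel_adj] at hadj
      obtain ⟨-, hh⟩ := hadj
      rcases hh with (⟨i, rfl, rfl⟩ | ⟨i, rfl, rfl⟩ | ⟨i, rfl, rfl⟩ | ⟨i, rfl, rfl⟩ | ⟨i, rfl, rfl⟩ |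
        ⟨i, rfl, rfl⟩ | ⟨i, rfl, rfl⟩) | (⟨i, rfl, rfl⟩ | ⟨i, rfl, rfl⟩ | ⟨i, rfl, rfl⟩ |
        ⟨i, rfl, rfl⟩ | ⟨i, rfl, rfl⟩ | ⟨i, rfl, rfl⟩ | ⟨i, rfl, rfl⟩)
      · fin_cases i <;> simp at hv hx ⊢
      · simp at hv
      · simp at hv
      · rfl
      · simp at hv
      · simp at hv
      · rfl
      · fin_cases i <;> simp at hv hx ⊢
      · simp at hx
      · simp at hx
      · rfl
      · simp at hx
      · simp at hx
      · rfl
    rintro a ⟨ha, haa⟩ b ⟨hb, hbb⟩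
    rw [key a ha haa, key b hb hbb]

end PartE

section PartF

lemma aux_param (n : ℕ) (hn : 10 ≤ n) : ∃ (t : ℝ) (s p q : ℕ), 2 < t ∧ 2 ≤ s ∧ 1 ≤ q ∧
    n = p + 2 * s + 2 * q + 4 ∧
    0 < t ^ 2 - (s + 1) * (t ^ 2 / (t ^ 2 - 1)) ∧
    (t ^ 2 - (s + 1) * (t ^ 2 / (t ^ 2 - 1))) * (t ^ 2 - p - (q + 1) * (t ^ 2 / (t ^ 2 - 1)))
      = (t / (t ^ 2 - 1)) ^ 2 ∧
    (Even n → s = (n - 4 + 3) / 4 ∧ p = 0 ∧ q = (n - 4) / 4) ∧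
    (Odd n → s = (n - 5 + 3) / 4 ∧ p = 1 ∧ q = (n - 5) / 4) ∧ p ≤ 1 ∧
    ∀ ρ₁ ρ₂ κ₁ κ₂ r l e : ℕ, Cnt n ρ₁ ρ₂ κ₁ κ₂ r l e →
      NumOK t ρ₁ ρ₂ κ₁ κ₂ (r + l * (t / (t ^ 2 - 1)) + e * t) →
      r = 0 ∧ l = 1 ∧ ((ρ₁ = 0 ∧ κ₁ = s + 1 ∧ ρ₂ = p ∧ κ₂ = q + 1) ∨
        (ρ₁ = p ∧ κ₁ = q + 1 ∧ ρ₂ = 0 ∧ κ₂ = s + 1)) := by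
  have h4 : n % 4 = 0 ∨ n % 4 = 1 ∨ n % 4 = 2 ∨ n % 4 = 3 := by omega
  rcases h4 with h4 | h4 | h4 | h4
  · obtain ⟨S', rfl⟩ : ∃ S', n = 4 * (S' + 1) := ⟨n / 4 - 1, by omega⟩
    have hS : 3 ≤ S' + 1 := by omega
    have hSr : (2 : ℝ) ≤ S' := by exact_mod_cast (by omega : 2 ≤ S')
    obtain ⟨t, ⟨ht1, ht2⟩, hf⟩ : (0 : ℝ) ∈ (fun t : ℝ => t ^ 3 - (S' + 2) * t - 1) ''
        Set.Icc 2 (S' + 3) := by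
      apply intermediate_value_Icc (by linarith) (by fun_prop)
      constructor <;> nlinarith [pow_nonneg (Nat.cast_nonneg (α := ℝ) S') 3, mul_self_nonneg (S' : ℝ)]
    simp only at hf
    have ht : 2 < t := by
      rcases ht1.lt_or_eq with h | h
      · exact h
      · rw [← h] at hf; linarith
    have heq : t ^ 2 - 1 = (S' + 1 : ℕ) + 1 / t := by
      push_cast; field_simp; linarith
    obtain ⟨D, hD⟩ : ∃ D, D = t ^ 2 - 1 := ⟨_, rfl⟩
    have hD0 : 0 < D := by nlinarith
    have hF : t ^ 2 - (S' + 1) * (t ^ 2 / (t ^ 2 - 1)) = t / (t ^ 2 - 1) := by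
      rw [← hD]
      push_cast at heq
      have : (S' + 1 : ℝ) = D - 1 / t := by rw [hD]; linarith
      rw [this]; field_simp; ring
    refine ⟨t, S', 0, S', ht, by omega, by omega, by omega, ?_, ?_, ?_, ?_, by omega, ?_⟩
    · rw [hF, ← hD]; positivity
    · rw [Nat.cast_zero, sub_zero, hF]; ring
    · intro _; omega
    · intro h; rw [Nat.odd_iff] at h; omega
    · intro ρ₁ ρ₂ κ₁ κ₂ r l e hc hN
      have := aux_num0 hS ht heq hc hN
      omega
  · obtain ⟨S', rfl⟩ : ∃ S', n = 4 * (S' + 1) + 1 := ⟨n / 4 - 1, by omega⟩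
    have hS : 3 ≤ S' + 1 := by omega
    have hSr : (2 : ℝ) ≤ S' := by exact_mod_cast (by omega : 2 ≤ S')
    obtain ⟨t, htt⟩ : ∃ t, t = Real.sqrt (S' + 3) := ⟨_, rfl⟩
    have hx : t ^ 2 = S' + 3 := by rw [htt]; exact Real.sq_sqrt (by linarith)
    have ht : 2 < t := by rw [htt]; apply Real.lt_sqrt_of_sq_lt; linarith
    have heq : t ^ 2 - 1 = (S' + 1 : ℕ) + 1 := by push_cast; linarith
    have hc : t ^ 2 / (t ^ 2 - 1) = (S' + 3) / (S' + 2) := by rw [hx]; congr 1; ring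
    have hF : t ^ 2 - (S' + 1) * (t ^ 2 / (t ^ 2 - 1)) = (S' + 3) / (S' + 2) := by
      rw [hc, hx]; field_simp; ring
    refine ⟨t, S', 1, S', ht, by omega, by omega, by omega, ?_, ?_, ?_, ?_, by omega, ?_⟩
    · rw [hF]; positivity
    · rw [sub_right_comm, hF, div_pow, hx]
      rw [show (S' + 3 - 1 : ℝ) = S' + 2 by ring, Nat.cast_one]; field_simp; ring
    · intro h; rw [Nat.even_iff] at h; omega
    · intro _; omega
    · intro ρ₁ ρ₂ κ₁ κ₂ r l e hc hN
      have := aux_num1 hS ht heq hc hN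
      omega
  · obtain ⟨S', rfl⟩ : ∃ S', n = 4 * (S' + 1) + 2 := ⟨n / 4 - 1, by omega⟩
    have hS : 2 ≤ S' + 1 := by omega
    have hSr : (1 : ℝ) ≤ S' := by exact_mod_cast (by omega : 1 ≤ S')
    obtain ⟨ε, ⟨he1, he2⟩, hf⟩ : (1 : ℝ) ∈ (fun ε : ℝ => (S' + 3 + ε) * (ε * (1 + ε))) ''
        Set.Icc 0 1 := by
      apply intermediate_value_Icc (by linarith) (by fun_prop)
      constructor <;> nlinarith
    simp only at hf
    have hε : 0 < ε := by
      rcases he1.lt_or_eq with h | h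
      · exact h
      · rw [← h] at hf; norm_num at hf
    obtain ⟨t, htt⟩ : ∃ t, t = Real.sqrt (S' + 3 + ε) := ⟨_, rfl⟩
    have hx : t ^ 2 = S' + 3 + ε := by rw [htt]; exact Real.sq_sqrt (by linarith)
    have ht : 2 < t := by rw [htt]; apply Real.lt_sqrt_of_sq_lt; linarith
    have heq : t ^ 2 - 1 = (S' + 1 : ℕ) + 1 + ε := by push_cast; linarith
    have heq2 : t ^ 2 * (ε * (1 + ε)) = 1 := by rw [hx]; exact hf
    obtain ⟨D, hD⟩ : ∃ D, D = t ^ 2 - 1 := ⟨_, rfl⟩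
    have hD0 : 0 < D := by nlinarith
    have hF : t ^ 2 - ((S' + 1 : ℕ) + 1) * (t ^ 2 / (t ^ 2 - 1)) = t ^ 2 / (t ^ 2 - 1) * ε := by
      rw [← hD]
      have : ((S' + 1 : ℕ) + 1 : ℝ) = D - ε := by rw [hD]; linarith
      rw [this]; field_simp; ring
    have hF2 : t ^ 2 - (S' + 1) * (t ^ 2 / (t ^ 2 - 1)) = t ^ 2 / (t ^ 2 - 1) * (1 + ε) := by
      rw [← hD]
      have : (S' + 1 : ℝ) = D - 1 - ε := by push_cast at heq; rw [hD]; linarith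
      rw [this]; field_simp; ring
    refine ⟨t, S' + 1, 0, S', ht, by omega, by omega, by omega, ?_, ?_, ?_, ?_, by omega, ?_⟩
    · rw [hF, ← hD]; positivity
    · rw [hF, Nat.cast_zero, sub_zero, hF2]
      linear_combination (t / (t ^ 2 - 1)) ^ 2 * heq2
    · intro _; omega
    · intro h; rw [Nat.odd_iff] at h; omega
    · intro ρ₁ ρ₂ κ₁ κ₂ r l e hc hN
      have := aux_num2 hS ht hε heq heq2 hc hN
      omega
  · obtain ⟨S', rfl⟩ : ∃ S', n = 4 * (S' + 1) + 3 := ⟨n / 4 - 1, by omega⟩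
    have hS : 2 ≤ S' + 1 := by omega
    have hSr : (1 : ℝ) ≤ S' := by exact_mod_cast (by omega : 1 ≤ S')
    obtain ⟨ε, ⟨he1, he2⟩, hf⟩ : (1 : ℝ) ∈ (fun ε : ℝ => (S' + 3 + ε) * ε ^ 2 + ε) ''
        Set.Icc 0 1 := by
      apply intermediate_value_Icc (by linarith) (by fun_prop)
      constructor <;> nlinarith
    simp only at hf
    have hε : 0 < ε := by
      rcases he1.lt_or_eq with h | h
      · exact h
      · rw [← h] at hf; norm_num at hf
    obtain ⟨t, htt⟩ : ∃ t, t = Real.sqrt (S' + 3 + ε) := ⟨_, rfl⟩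
    have hx : t ^ 2 = S' + 3 + ε := by rw [htt]; exact Real.sq_sqrt (by linarith)
    have ht : 2 < t := by rw [htt]; apply Real.lt_sqrt_of_sq_lt; linarith
    have heq : t ^ 2 - 1 = (S' + 1 : ℕ) + 1 + ε := by push_cast; linarith
    have heq2 : t ^ 2 * ε ^ 2 + ε = 1 := by rw [hx]; exact hf
    obtain ⟨D, hD⟩ : ∃ D, D = t ^ 2 - 1 := ⟨_, rfl⟩
    have hD0 : 0 < D := by nlinarith
    have hF : t ^ 2 - ((S' + 1 : ℕ) + 1) * (t ^ 2 / (t ^ 2 - 1)) = t ^ 2 / (t ^ 2 - 1) * ε := by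
      rw [← hD]
      have : ((S' + 1 : ℕ) + 1 : ℝ) = D - ε := by rw [hD]; linarith
      rw [this]; field_simp; ring
    have hF2 : t ^ 2 - (S' + 1) * (t ^ 2 / (t ^ 2 - 1)) = t ^ 2 / (t ^ 2 - 1) * (1 + ε) := by
      rw [← hD]
      have : (S' + 1 : ℝ) = D - 1 - ε := by push_cast at heq; rw [hD]; linarith
      rw [this]; field_simp; ring
    refine ⟨t, S' + 1, 1, S', ht, by omega, by omega, by omega, ?_, ?_, ?_, ?_, by omega, ?_⟩
    · rw [hF, ← hD]; positivity
    · rw [hF, sub_right_comm, hF2, ← hD, Nat.cast_one]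
      have hD' : t ^ 2 = D + 1 := by linarith
      have e1 : t ^ 2 / D * ε * (t ^ 2 / D * (1 + ε) - 1)
          = (t / D) ^ 2 * (t ^ 2 * (ε * (1 + ε)) - D * ε) := by field_simp
      rw [e1]
      linear_combination (t / D) ^ 2 * heq2 + (t / D) ^ 2 * ε * hD'
    · intro h; rw [Nat.even_iff] at h; omega
    · intro _; omega
    · intro ρ₁ ρ₂ κ₁ κ₂ r l e hc hN
      have := aux_num3 hS ht hε heq heq2 hc hN
      omega

end PartF

section PartB

/-- Two hubs `u, v` such that the rest is a matching plus isolated vertices, encoded by `σ`. -/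
structure Hub {V : Type} (G : SimpleGraph V) (u v : V) (σ : V → V) : Prop where
  ne : u ≠ v
  su : ∀ w, w ≠ u → w ≠ v → σ w ≠ u
  sv : ∀ w, w ≠ u → w ≠ v → σ w ≠ v
  inv : ∀ w, w ≠ u → w ≠ v → σ (σ w) = w
  adj : ∀ w z, w ≠ u → w ≠ v → z ≠ u → z ≠ v → (G.Adj w z ↔ z = σ w ∧ z ≠ w)

lemma aux_exists_hub {V : Type} [Fintype V] (G : SimpleGraph V) {n : ℕ} (hn : 2 ≤ n)
    (hcard : Fintype.card V = n) (hdiss : dissNum G = n - 2) :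
    ∃ u v σ, Hub G u v σ := by
  classical
  obtain ⟨S, hS, hc⟩ := aux_dissNum_mem G
  have h1 := Set.ncard_add_ncard_compl S
  rw [Nat.card_eq_fintype_card, hcard] at h1
  have h2 : Sᶜ.ncard = 2 := by omega
  obtain ⟨u, v, huv, hSc⟩ := Set.ncard_eq_two.mp h2
  have hmem : ∀ w, w ∈ S ↔ w ≠ u ∧ w ≠ v := by
    intro w
    have : w ∈ Sᶜ ↔ w = u ∨ w = v := by rw [hSc]; simp
    rw [Set.mem_compl_iff] at this
    tauto
  let σ : V → V := fun w => if h : ∃ z ∈ S, G.Adj w z then h.choose else w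
  have hσ1 : ∀ w, (∃ z ∈ S, G.Adj w z) → σ w ∈ S ∧ G.Adj w (σ w) := by
    intro w h
    simp only [σ, dif_pos h]
    exact h.choose_spec
  have hσ2 : ∀ w, (¬ ∃ z ∈ S, G.Adj w z) → σ w = w := by
    intro w h
    simp only [σ, dif_neg h]
  have huniq : ∀ w z, w ∈ S → z ∈ S → G.Adj w z → z = σ w := by
    intro w z hw hz ha
    by_contra hne
    obtain ⟨m1, m2⟩ := hσ1 w ⟨z, hz, ha⟩
    exact aux_dissoc_false hS hw hz m1 hne ha m2
  have hσS : ∀ w ∈ S, σ w ∈ S := by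
    intro w hw
    by_cases h : ∃ z ∈ S, G.Adj w z
    · exact (hσ1 w h).1
    · rw [hσ2 w h]; exact hw
  refine ⟨u, v, σ, huv, ?_, ?_, ?_, ?_⟩
  · intro w h1 h2
    exact ((hmem _).mp (hσS w ((hmem w).mpr ⟨h1, h2⟩))).1
  · intro w h1 h2
    exact ((hmem _).mp (hσS w ((hmem w).mpr ⟨h1, h2⟩))).2
  · intro w h1 h2
    have hw := (hmem w).mpr ⟨h1, h2⟩
    by_cases h : ∃ z ∈ S, G.Adj w z
    · exact (huniq _ _ (hσS w hw) hw (hσ1 w h).2.symm).symm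
    · rw [hσ2 w h, hσ2 w h]
  · intro w z h1 h2 h3 h4
    have hw := (hmem w).mpr ⟨h1, h2⟩
    have hz := (hmem z).mpr ⟨h3, h4⟩
    constructor
    · intro ha
      exact ⟨huniq w z hw hz ha, ha.ne'⟩
    · rintro ⟨rfl, hne⟩
      by_cases h : ∃ z ∈ S, G.Adj w z
      · exact (hσ1 w h).2
      · exact absurd (hσ2 w h) hne

/-- A connected graph has no nontrivial closed vertex set. -/
lemma aux_conn_closed {V : Type} {G : SimpleGraph V} (h : G.Connected) (C : Set V)
    (x y : V) (hx : x ∈ C) (hC : ∀ a ∈ C, ∀ b, G.Adj a b → b ∈ C) : y ∈ C := by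
  obtain ⟨p⟩ := h.preconnected x y
  induction p with
  | nil => exact hx
  | cons hadj _ ih => exact ih (hC _ hx _ hadj)

lemma aux_att {V : Type} {G : SimpleGraph V} {u v : V} {σ : V → V} (H : Hub G u v σ)
    (hconn : G.Connected) (w : V) (h1 : w ≠ u) (h2 : w ≠ v) :
    G.Adj u w ∨ G.Adj v w ∨ G.Adj u (σ w) ∨ G.Adj v (σ w) := by
  by_contra hcon
  push Not at hcon
  obtain ⟨c1, c2, c3, c4⟩ := hcon
  have s1 := H.su w h1 h2
  have s2 := H.sv w h1 h2
  have := aux_conn_closed hconn {w, σ w} w u (by simp) (by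
    intro a ha b hab
    simp only [Set.mem_insert_iff, Set.mem_singleton_iff] at ha ⊢
    rcases ha with rfl | rfl
    · have b1 : b ≠ u := by rintro rfl; exact c1 hab.symm
      have b2 : b ≠ v := by rintro rfl; exact c2 hab.symm
      exact Or.inr ((H.adj a b h1 h2 b1 b2).mp hab).1
    · have b1 : b ≠ u := by rintro rfl; exact c3 hab.symm
      have b2 : b ≠ v := by rintro rfl; exact c4 hab.symm
      left
      rw [((H.adj _ b s1 s2 b1 b2).mp hab).1, H.inv w h1 h2])
  simp only [Set.mem_insert_iff, Set.mem_singleton_iff] at this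
  rcases this with h | h
  · exact h1 h.symm
  · exact s1 h.symm

lemma aux_link {V : Type} {G : SimpleGraph V} {u v : V} {σ : V → V} (H : Hub G u v σ)
    (hconn : G.Connected) : G.Adj u v ∨ ∃ w, w ≠ u ∧ w ≠ v ∧
      (G.Adj u w) ∧ (G.Adj v w ∨ G.Adj v (σ w)) := by
  by_contra hcon
  push Not at hcon
  obtain ⟨c0, c⟩ := hcon
  have := aux_conn_closed hconn {x | x = u ∨ (x ≠ u ∧ x ≠ v ∧ (G.Adj u x ∨ G.Adj u (σ x)))} u v
    (by simp) (by
    rintro a (rfl | ⟨a1, a2, a3⟩) b hab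
    · right
      refine ⟨hab.ne', ?_, Or.inl hab⟩
      rintro rfl; exact c0 hab
    · by_cases b1 : b = u
      · left; exact b1
      right
      have b2 : b ≠ v := by
        rintro rfl
        rcases a3 with a3 | a3
        · exact (c a a1 a2 a3).1 hab.symm
        · have := (c (σ a) (H.su a a1 a2) (H.sv a a1 a2) a3).2
          rw [H.inv a a1 a2] at this
          exact this hab.symm
      refine ⟨b1, b2, ?_⟩
      obtain ⟨e, -⟩ := (H.adj a b a1 a2 b1 b2).mp hab
      rw [e, H.inv a a1 a2]
      tauto)
  rcases this with h | h
  · exact H.ne h.symm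
  · exact h.2.1 rfl

/-- A system of representatives of the pairs. -/
structure Reps {V : Type} (G : SimpleGraph V) (u v : V) (σ : V → V) (P : Finset V) : Prop where
  nu : ∀ w ∈ P, w ≠ u
  nv : ∀ w ∈ P, w ≠ v
  ns : ∀ w ∈ P, σ w ≠ w
  sn : ∀ w ∈ P, σ w ∉ P
  au : ∀ w ∈ P, G.Adj u (σ w) → G.Adj u w
  av : ∀ w ∈ P, ¬ G.Adj u w → G.Adj v (σ w) → G.Adj v w
  cov : ∀ w, w ≠ u → w ≠ v → σ w ≠ w → w ∈ P ∨ σ w ∈ P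

lemma aux_exists_reps {V : Type} [Fintype V] {G : SimpleGraph V} {u v : V} {σ : V → V}
    (H : Hub G u v σ) : ∃ P, Reps G u v σ P := by
  classical
  let N := Fintype.card V
  let f := Fintype.equivFin V
  let key : V → ℕ := fun w => (if G.Adj u w then 2 * N else 0) + (if G.Adj v w then N else 0) + f w
  have hf : ∀ w, (f w : ℕ) < N := fun w => (f w).2
  have hkey : ∀ w z, key w = key z → w = z := by
    intro w z h
    have h1 := hf w
    have h2 := hf z
    have : (f w : ℕ) = f z := by
      simp only [key] at h
      split_ifs at h <;> omega
    exact f.injective (Fin.ext this)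
  refine ⟨Finset.univ.filter (fun w => w ≠ u ∧ w ≠ v ∧ key (σ w) < key w), ?_, ?_, ?_, ?_, ?_, ?_, ?_⟩
  · intro w hw; simp only [Finset.mem_filter] at hw; exact hw.2.1
  · intro w hw; simp only [Finset.mem_filter] at hw; exact hw.2.2.1
  · intro w hw he
    simp only [Finset.mem_filter] at hw
    rw [he] at hw; omega
  · intro w hw hs
    simp only [Finset.mem_filter] at hw hs
    rw [H.inv w hw.2.1 hw.2.2.1] at hs; omega
  · intro w hw hs
    simp only [Finset.mem_filter] at hw
    by_contra hcon
    have h1 := hf w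
    have h2 := hf (σ w)
    have h3 := hw.2.2.2
    simp only [key, if_pos hs, if_neg hcon] at h3
    split_ifs at h3 <;> omega
  · intro w hw hu hs
    simp only [Finset.mem_filter] at hw
    by_contra hcon
    have h1 := hf w
    have h2 := hf (σ w)
    have h3 := hw.2.2.2
    simp only [key, if_pos hs, if_neg hcon, if_neg hu] at h3
    split_ifs at h3 <;> omega
  · intro w h1 h2 h3
    simp only [Finset.mem_filter, Finset.mem_univ, true_and]
    rcases lt_trichotomy (key (σ w)) (key w) with h | h | h
    · left; exact ⟨h1, h2, h⟩
    · exact absurd (hkey _ _ h) h3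
    · right
      rw [H.inv w h1 h2]
      exact ⟨H.su w h1 h2, H.sv w h1 h2, h⟩

open scoped Classical in
/-- The non-hub vertices isolated outside the hubs. -/
noncomputable def Kset {V : Type} [Fintype V] (u v : V) (σ : V → V) : Finset V :=
  Finset.univ.filter (fun w => w ≠ u ∧ w ≠ v ∧ σ w = w)

lemma aux_sum_split {V : Type} [Fintype V] {G : SimpleGraph V} {u v : V} {σ : V → V} {P : Finset V}
    (H : Hub G u v σ) (hP : Reps G u v σ P) {M : Type} [AddCommMonoid M] (f : V → M) :
    ∑ w, f w = f u + f v + (∑ w ∈ Kset u v σ, f w + ∑ w ∈ P, (f w + f (σ w))) := by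
  classical
  have hinj : Set.InjOn σ (P : Set V) := by
    intro a ha b hb hab
    rw [← H.inv a (hP.nu a ha) (hP.nv a ha), hab, H.inv b (hP.nu b hb) (hP.nv b hb)]
  have huniv : (Finset.univ : Finset V) = {u, v} ∪ (Kset u v σ ∪ (P ∪ P.image σ)) := by
    ext w
    simp only [Finset.mem_univ, Finset.mem_union, Finset.mem_insert, Finset.mem_singleton, Kset,
      Finset.mem_filter, Finset.mem_image, true_and, true_iff]
    by_cases h1 : w = u
    · tauto
    by_cases h2 : w = v
    · tauto
    by_cases h3 : σ w = w
    · tauto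
    rcases hP.cov w h1 h2 h3 with h | h
    · tauto
    · right; right; right
      exact ⟨σ w, h, H.inv w h1 h2⟩
  have d3 : Disjoint P (P.image σ) := by
    rw [Finset.disjoint_right]
    intro a ha
    obtain ⟨b, hb, rfl⟩ := Finset.mem_image.mp ha
    exact hP.sn b hb
  have d2 : Disjoint (Kset u v σ) (P ∪ P.image σ) := by
    rw [Finset.disjoint_right]
    intro a ha hk
    simp only [Kset, Finset.mem_filter] at hk
    rcases Finset.mem_union.mp ha with h | h
    · exact hP.ns a h hk.2.2.2
    · obtain ⟨b, hb, rfl⟩ := Finset.mem_image.mp h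
      apply hP.ns b hb
      have := hk.2.2.2
      rw [H.inv b (hP.nu b hb) (hP.nv b hb)] at this
      exact this.symm
  have d1 : Disjoint ({u, v} : Finset V) (Kset u v σ ∪ (P ∪ P.image σ)) := by
    rw [Finset.disjoint_left]
    intro a ha hm
    have hau : a = u ∨ a = v := by simpa using ha
    rcases Finset.mem_union.mp hm with h | h
    · simp only [Kset, Finset.mem_filter] at h
      tauto
    rcases Finset.mem_union.mp h with h | h
    · rcases hau with e | e
      · exact hP.nu a h e
      · exact hP.nv a h e
    · obtain ⟨b, hb, rfl⟩ := Finset.mem_image.mp h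
      rcases hau with e | e
      · exact H.su b (hP.nu b hb) (hP.nv b hb) e
      · exact H.sv b (hP.nu b hb) (hP.nv b hb) e
  rw [huniv, Finset.sum_union d1, Finset.sum_union d2, Finset.sum_union d3,
    Finset.sum_pair H.ne, Finset.sum_image hinj, Finset.sum_add_distrib]

end PartB

section PartD

lemma aux_A01 {V : Type} [Fintype V] (G : SimpleGraph V) (x y : V) :
    (G.Adj x y ∧ adjMat G x y = 1) ∨ (¬ G.Adj x y ∧ adjMat G x y = 0) := by
  classical
  by_cases h : G.Adj x y
  · left; exact ⟨h, by simp [adjMat, h]⟩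
  · right; exact ⟨h, by simp [adjMat, h]⟩

lemma aux_quad {V : Type} [Fintype V] {G : SimpleGraph V} {u v : V} {σ : V → V} {P : Finset V}
    (H : Hub G u v σ) (hP : Reps G u v σ P) {t : ℝ} (ht : 1 < t) (hs : specRad G ≤ t)
    (a b : ℝ) (h : V → ℝ) (hh : ∀ w, h w = a * adjMat G u w + b * adjMat G v w) :
    ∑ w ∈ Kset u v σ, (h w) ^ 2 +
      ∑ w ∈ P, (t ^ 2 * ((h w) ^ 2 + (h (σ w)) ^ 2) + 2 * t * h w * h (σ w)) / (t ^ 2 - 1)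
      + 2 * a * b * t * adjMat G u v ≤ t ^ 2 * (a ^ 2 + b ^ 2) := by
  classical
  have hD : 0 < t ^ 2 - 1 := by nlinarith
  have ht0 : 0 < t := by linarith
  obtain ⟨D, hDD⟩ : ∃ D, D = t ^ 2 - 1 := ⟨_, rfl⟩
  rw [← hDD] at hD ⊢
  let y : V → ℝ := fun w => if w = u then a else if w = v then b else
    if σ w = w then h w / t else (t * h w + h (σ w)) / D
  have yu : y u = a := by simp [y]
  have yv : y v = b := by simp [y, H.ne.symm]
  have yK : ∀ w, w ≠ u → w ≠ v → σ w = w → y w = h w / t := by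
    intro w h1 h2 h3; simp [y, h1, h2, h3]
  have yP : ∀ w, w ≠ u → w ≠ v → σ w ≠ w → y w = (t * h w + h (σ w)) / D := by
    intro w h1 h2 h3; simp [y, h1, h2, h3]
  have hmv : ∀ w, (adjMat G).mulVec y w = ∑ z, adjMat G w z * y z := fun w => rfl
  have hAy : ∀ w, w ≠ u → w ≠ v → (adjMat G).mulVec y w = t * y w := by
    intro w h1 h2
    have s1 := H.su w h1 h2
    have s2 := H.sv w h1 h2
    have e1 : ∀ z, adjMat G w z * y z = (if z = u then adjMat G u w * a else 0)
        + (if z = v then adjMat G v w * b else 0)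
        + (if z = σ w then (if σ w = w then 0 else y (σ w)) else 0) := by
      intro z
      by_cases z1 : z = u
      · subst z1
        simp [H.ne, s1.symm, yu, aux_adjMat_symm G w z]
      by_cases z2 : z = v
      · subst z2
        simp [H.ne.symm, s2.symm, yv, aux_adjMat_symm G w z]
      have := H.adj w z h1 h2 z1 z2
      rcases aux_A01 G w z with ⟨q1, q2⟩ | ⟨q1, q2⟩
      · obtain ⟨r1, r2⟩ := this.mp q1
        subst r1
        simp [z1, z2, q2, r2]
      · rw [q2]
        simp only [z1, z2, if_false, zero_mul, zero_add]
        by_cases hz : z = σ w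
        · have : σ w = w := by
            by_contra hne
            apply q1
            apply this.mpr
            rw [hz]; exact ⟨rfl, hne⟩
          simp [this]
        · simp [hz]
    rw [hmv, Finset.sum_congr rfl (fun z _ => e1 z), Finset.sum_add_distrib,
      Finset.sum_add_distrib, Finset.sum_ite_eq', Finset.sum_ite_eq', Finset.sum_ite_eq']
    simp only [Finset.mem_univ, if_true]
    by_cases h3 : σ w = w
    · rw [if_pos h3, yK w h1 h2 h3, hh]; field_simp; ring
    · have h3' : σ (σ w) ≠ σ w := by rw [H.inv w h1 h2]; exact fun h => h3 h.symm
      rw [if_neg h3, yP w h1 h2 h3, yP _ s1 s2 h3', H.inv w h1 h2]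
      have e3 : adjMat G u w * a + adjMat G v w * b = h w := by rw [hh]; ring
      rw [e3]; field_simp; rw [hDD]; ring
  have hq := aux_quad_le G t hs y
  have hhub : a * (adjMat G).mulVec y u + b * (adjMat G).mulVec y v = ∑ z, h z * y z := by
    rw [hmv, hmv, Finset.mul_sum, Finset.mul_sum, ← Finset.sum_add_distrib]
    apply Finset.sum_congr rfl
    intro z _
    rw [hh]; ring
  rw [aux_sum_split H hP, aux_sum_split H hP, yu, yv, hhub, aux_sum_split H hP] at hq
  have hKm : ∀ w ∈ Kset u v σ, w ≠ u ∧ w ≠ v ∧ σ w = w := by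
    intro w hw
    simpa [Kset] using hw
  have c1 : ∑ w ∈ Kset u v σ, y w * (adjMat G).mulVec y w
      = t * ∑ w ∈ Kset u v σ, y w * y w := by
    rw [Finset.mul_sum]
    apply Finset.sum_congr rfl
    intro w hw
    obtain ⟨h1, h2, h3⟩ := hKm w hw
    rw [hAy w h1 h2]; ring
  have c2 : ∑ w ∈ P, (y w * (adjMat G).mulVec y w + y (σ w) * (adjMat G).mulVec y (σ w))
      = t * ∑ w ∈ P, (y w * y w + y (σ w) * y (σ w)) := by
    rw [Finset.mul_sum]
    apply Finset.sum_congr rfl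
    intro w hw
    have h1 := hP.nu w hw
    have h2 := hP.nv w hw
    rw [hAy w h1 h2, hAy _ (H.su w h1 h2) (H.sv w h1 h2)]; ring
  have c3 : ∑ w ∈ Kset u v σ, (h w) ^ 2 = t * ∑ w ∈ Kset u v σ, h w * y w := by
    rw [Finset.mul_sum]
    apply Finset.sum_congr rfl
    intro w hw
    obtain ⟨h1, h2, h3⟩ := hKm w hw
    rw [yK w h1 h2 h3]; field_simp
  have c4 : ∑ w ∈ P, (t ^ 2 * ((h w) ^ 2 + (h (σ w)) ^ 2) + 2 * t * h w * h (σ w)) / D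
      = t * ∑ w ∈ P, (h w * y w + h (σ w) * y (σ w)) := by
    rw [Finset.mul_sum]
    apply Finset.sum_congr rfl
    intro w hw
    have h1 := hP.nu w hw
    have h2 := hP.nv w hw
    have h3 := hP.ns w hw
    have h3' : σ (σ w) ≠ σ w := by rw [H.inv w h1 h2]; exact fun h => h3 h.symm
    rw [yP w h1 h2 h3, yP _ (H.su w h1 h2) (H.sv w h1 h2) h3', H.inv w h1 h2]
    field_simp; ring
  have c5 : h u * a + h v * b = 2 * a * b * adjMat G u v := by
    have z : ∀ x, adjMat G x x = 0 := fun x => by simp [adjMat]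
    rw [hh, hh, z, z, aux_adjMat_symm G v u]; ring
  rw [c1, c2, yu, yv] at hq
  rw [c3, c4]
  have := mul_le_mul_of_nonneg_left hq ht0.le
  nlinarith

end PartD

section PartI

set_option maxHeartbeats 2000000 in
/-- The excess bookkeeping over one pair. -/
lemma aux_pair {t a b A B A' B' α β γ D : ℝ} (ht : 1 < t) (ha : 0 ≤ a) (hb : 0 ≤ b)
    {pA pB pA' pB' : Prop}
    (hA : (pA ∧ A = 1) ∨ (¬ pA ∧ A = 0)) (hB : (pB ∧ B = 1) ∨ (¬ pB ∧ B = 0))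
    (hA' : (pA' ∧ A' = 1) ∨ (¬ pA' ∧ A' = 0)) (hB' : (pB' ∧ B' = 1) ∨ (¬ pB' ∧ B' = 0))
    (h1 : pA' → pA) (h2 : ¬ pA → pB' → pB)
    (hα : (pA ∧ α = 1) ∨ (¬ pA ∧ α = 0))
    (hβ : ((pB ∨ pB') ∧ β = 1) ∨ (¬ (pB ∨ pB') ∧ β = 0))
    (hγ : ((pA ∧ (pB ∨ pB')) ∧ γ = 1) ∨ (¬ (pA ∧ (pB ∨ pB')) ∧ γ = 0)) (hD : 0 < D) :
    0 ≤ (t ^ 2 * ((a * A + b * B) ^ 2 + (a * A' + b * B') ^ 2)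
        + 2 * t * (a * A + b * B) * (a * A' + b * B')) / D
      - (a ^ 2 * (t ^ 2 / D) * α + b ^ 2 * (t ^ 2 / D) * β + 2 * a * b * (t / D) * γ) ∧
    (0 < a → 0 < b →
      0 < (t ^ 2 * ((a * A + b * B) ^ 2 + (a * A' + b * B') ^ 2)
        + 2 * t * (a * A + b * B) * (a * A' + b * B')) / D
      - (a ^ 2 * (t ^ 2 / D) * α + b ^ 2 * (t ^ 2 / D) * β + 2 * a * b * (t / D) * γ) ∨
      (¬ pA' ∧ ¬ (pA ∧ pB) ∧ ¬ (pB ∧ pB'))) := by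
  obtain ⟨X, hX⟩ : ∃ X, X = t ^ 2 * ((a * A + b * B) ^ 2 + (a * A' + b * B') ^ 2)
        + 2 * t * (a * A + b * B) * (a * A' + b * B')
      - (a ^ 2 * t ^ 2 * α + b ^ 2 * t ^ 2 * β + 2 * a * b * t * γ) := ⟨_, rfl⟩
  have e : (t ^ 2 * ((a * A + b * B) ^ 2 + (a * A' + b * B') ^ 2)
        + 2 * t * (a * A + b * B) * (a * A' + b * B')) / D
      - (a ^ 2 * (t ^ 2 / D) * α + b ^ 2 * (t ^ 2 / D) * β + 2 * a * b * (t / D) * γ) = X / D := by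
    rw [hX]; field_simp
  rw [e]
  have ht0 : 0 < t := by linarith
  have habs : 0 ≤ a * b := by positivity
  have m1 : 0 ≤ t ^ 2 * (a * b) - t * (a * b) := by nlinarith [mul_nonneg habs ht0.le]
  have m2 : 0 ≤ t * (a * b) := by positivity
  have m3 : 0 ≤ t ^ 2 * a ^ 2 := by positivity
  have m4 : 0 ≤ t ^ 2 * b ^ 2 := by positivity
  have m5 : 0 ≤ t * a ^ 2 := by positivity
  have m6 : 0 ≤ t * b ^ 2 := by positivity
  have key : 0 ≤ X := by
    rw [hX]
    rcases hA with ⟨x1, rfl⟩ | ⟨x1, rfl⟩ <;> rcases hB with ⟨x2, rfl⟩ | ⟨x2, rfl⟩ <;>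
    rcases hA' with ⟨x3, rfl⟩ | ⟨x3, rfl⟩ <;> rcases hB' with ⟨x4, rfl⟩ | ⟨x4, rfl⟩ <;>
    simp only [x1, x2, x3, x4, true_and, false_and, and_true, and_false, or_true,
      or_false, false_or, not_true_eq_false, not_false_eq_true, false_implies, true_implies,
      implies_true] at h1 h2 hα hβ hγ <;>
    first
    | (subst hα hβ hγ; nlinarith)
  refine ⟨div_nonneg key hD.le, fun ha0 hb0 => ?_⟩
  have habs : 0 < a * b := by positivity
  have m1 : 0 < t ^ 2 * (a * b) - t * (a * b) := by nlinarith [mul_pos habs ht0]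
  have m2 : 0 < t * (a * b) := by positivity
  have m3 : 0 < t ^ 2 * a ^ 2 := by positivity
  have m4 : 0 < t ^ 2 * b ^ 2 := by positivity
  have m5 : 0 < t * a ^ 2 := by positivity
  have m6 : 0 < t * b ^ 2 := by positivity
  by_cases hc : (¬ pA' ∧ ¬ (pA ∧ pB) ∧ ¬ (pB ∧ pB'))
  · right; exact hc
  left
  apply div_pos _ hD
  rw [hX]
  rcases hA with ⟨x1, rfl⟩ | ⟨x1, rfl⟩ <;> rcases hB with ⟨x2, rfl⟩ | ⟨x2, rfl⟩ <;>
  rcases hA' with ⟨x3, rfl⟩ | ⟨x3, rfl⟩ <;> rcases hB' with ⟨x4, rfl⟩ | ⟨x4, rfl⟩ <;>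
  simp only [x1, x2, x3, x4, true_and, false_and, and_true, and_false, or_true,
      or_false, false_or, not_true_eq_false, not_false_eq_true, false_implies, true_implies,
      implies_true] at h1 h2 hα hβ hγ hc <;>
  first
  | (subst hα hβ hγ; nlinarith)

open scoped Classical in
lemma aux_ineq {V : Type} [Fintype V] {G : SimpleGraph V} {u v : V} {σ : V → V} {P : Finset V}
    (H : Hub G u v σ) (hP : Reps G u v σ P) {t : ℝ} (ht : 1 < t) (hs : specRad G ≤ t)
    (a b : ℝ) (ha : 0 ≤ a) (hb : 0 ≤ b) : ∃ ex : V → ℝ, (∀ w ∈ P, 0 ≤ ex w) ∧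
      (0 < a → 0 < b → ∀ w ∈ P, 0 < ex w ∨ (¬ G.Adj u (σ w) ∧ ¬ (G.Adj u w ∧ G.Adj v w) ∧
        ¬ (G.Adj v w ∧ G.Adj v (σ w)))) ∧
      a ^ 2 * (((Kset u v σ).filter (fun w => G.Adj u w)).card
        + (P.filter (fun w => G.Adj u w)).card * (t ^ 2 / (t ^ 2 - 1)) - t ^ 2)
      + b ^ 2 * (((Kset u v σ).filter (fun w => G.Adj v w)).card
        + (P.filter (fun w => G.Adj v w ∨ G.Adj v (σ w))).card * (t ^ 2 / (t ^ 2 - 1)) - t ^ 2)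
      + 2 * a * b * (((Kset u v σ).filter (fun w => G.Adj u w ∧ G.Adj v w)).card
        + (P.filter (fun w => G.Adj u w ∧ (G.Adj v w ∨ G.Adj v (σ w)))).card * (t / (t ^ 2 - 1))
        + ((if G.Adj u v then 1 else 0 : ℕ) : ℝ) * t) + ∑ w ∈ P, ex w ≤ 0 := by
  have hD : 0 < t ^ 2 - 1 := by nlinarith
  have hq := aux_quad H hP ht hs a b (fun w => a * adjMat G u w + b * adjMat G v w) (fun _ => rfl)
  have i01 : ∀ (p : Prop) [Decidable p], (p ∧ (if p then 1 else 0 : ℝ) = 1) ∨ (¬ p ∧ (if p then 1 else 0 : ℝ) = 0) := by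
    intro p _; by_cases h : p <;> simp [h]
  have hpair := fun w (hw : w ∈ P) => aux_pair (t := t) (a := a) (b := b) ht ha hb
    (aux_A01 G u w) (aux_A01 G v w) (aux_A01 G u (σ w)) (aux_A01 G v (σ w)) (hP.au w hw) (hP.av w hw)
    (i01 (G.Adj u w)) (i01 (G.Adj v w ∨ G.Adj v (σ w)))
    (i01 (G.Adj u w ∧ (G.Adj v w ∨ G.Adj v (σ w)))) hD
  refine ⟨_, fun w hw => (hpair w hw).1, fun h1 h2 w hw => (hpair w hw).2 h1 h2, ?_⟩
  have cK : ∑ w ∈ Kset u v σ, (a * adjMat G u w + b * adjMat G v w) ^ 2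
      = a ^ 2 * ((Kset u v σ).filter (fun w => G.Adj u w)).card
        + b ^ 2 * ((Kset u v σ).filter (fun w => G.Adj v w)).card
        + 2 * a * b * ((Kset u v σ).filter (fun w => G.Adj u w ∧ G.Adj v w)).card := by
    rw [← Finset.sum_boole, ← Finset.sum_boole, ← Finset.sum_boole, Finset.mul_sum, Finset.mul_sum,
      Finset.mul_sum, ← Finset.sum_add_distrib, ← Finset.sum_add_distrib]
    apply Finset.sum_congr rfl
    intro w _
    rcases aux_A01 G u w with ⟨x1, y1⟩ | ⟨x1, y1⟩ <;>
    rcases aux_A01 G v w with ⟨x2, y2⟩ | ⟨x2, y2⟩ <;>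
    simp only [x1, x2, y1, y2, if_true, if_false, and_true, and_false] <;> ring
  have ce : adjMat G u v = ((if G.Adj u v then 1 else 0 : ℕ) : ℝ) := by
    rcases aux_A01 G u v with ⟨x1, y1⟩ | ⟨x1, y1⟩ <;> simp [x1, y1]
  rw [Finset.sum_sub_distrib, Finset.sum_add_distrib, Finset.sum_add_distrib, ← Finset.mul_sum,
    ← Finset.mul_sum, ← Finset.mul_sum, Finset.sum_boole, Finset.sum_boole, Finset.sum_boole]
  rw [cK, ce] at hq
  linarith

end PartI

section PartJ

open scoped Classical in
lemma aux_cnt {V : Type} [Fintype V] {G : SimpleGraph V} {u v : V} {σ : V → V} {P : Finset V}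
    (H : Hub G u v σ) (hP : Reps G u v σ P) (hconn : G.Connected) {n : ℕ}
    (hcard : Fintype.card V = n) :
    Cnt n ((Kset u v σ).filter (fun w => G.Adj u w)).card
      ((Kset u v σ).filter (fun w => G.Adj v w)).card
      (P.filter (fun w => G.Adj u w)).card
      (P.filter (fun w => G.Adj v w ∨ G.Adj v (σ w))).card
      ((Kset u v σ).filter (fun w => G.Adj u w ∧ G.Adj v w)).card
      (P.filter (fun w => G.Adj u w ∧ (G.Adj v w ∨ G.Adj v (σ w)))).card
      (if G.Adj u v then 1 else 0) := by
  have hKm : ∀ w, w ∈ Kset u v σ ↔ w ≠ u ∧ w ≠ v ∧ σ w = w := by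
    intro w
    simp [Kset]
  have hn : n = 2 + (Kset u v σ).card + 2 * P.card := by
    have := aux_sum_split H hP (fun _ => (1 : ℕ))
    simp only [Finset.sum_const, smul_eq_mul, mul_one, Finset.card_univ, hcard] at this
    omega
  have hK : ((Kset u v σ).filter (fun w => G.Adj u w)).card
      + ((Kset u v σ).filter (fun w => G.Adj v w)).card = (Kset u v σ).card
      + ((Kset u v σ).filter (fun w => G.Adj u w ∧ G.Adj v w)).card := by
    rw [← Finset.card_union_add_card_inter, ← Finset.filter_or, ← Finset.filter_and]
    congr 2
    apply Finset.filter_true_of_mem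
    intro w hw
    obtain ⟨h1, h2, h3⟩ := (hKm w).mp hw
    have := aux_att H hconn w h1 h2
    rw [h3] at this
    tauto
  have hPc : (P.filter (fun w => G.Adj u w)).card
      + (P.filter (fun w => G.Adj v w ∨ G.Adj v (σ w))).card = P.card
      + (P.filter (fun w => G.Adj u w ∧ (G.Adj v w ∨ G.Adj v (σ w)))).card := by
    rw [← Finset.card_union_add_card_inter, ← Finset.filter_or, ← Finset.filter_and]
    congr 2
    apply Finset.filter_true_of_mem
    intro w hw
    have := aux_att H hconn w (hP.nu w hw) (hP.nv w hw)
    have := hP.au w hw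
    tauto
  refine ⟨by omega, ?_, ?_, ?_⟩
  · rcases aux_link H hconn with h | ⟨w, h1, h2, h3, h4⟩
    · rw [if_pos h]; omega
    · by_cases hs : σ w = w
      · have : w ∈ (Kset u v σ).filter (fun w => G.Adj u w ∧ G.Adj v w) := by
          rw [Finset.mem_filter, hKm]
          rw [hs] at h4
          exact ⟨⟨h1, h2, hs⟩, h3, by tauto⟩
        have := Finset.card_pos.mpr ⟨w, this⟩
        omega
      · have : ∃ w, w ∈ P.filter (fun w => G.Adj u w ∧ (G.Adj v w ∨ G.Adj v (σ w))) := by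
          rcases hP.cov w h1 h2 hs with h | h
          · exact ⟨w, Finset.mem_filter.mpr ⟨h, h3, h4⟩⟩
          · refine ⟨σ w, Finset.mem_filter.mpr ⟨h, ?_, ?_⟩⟩
            · apply hP.au _ h
              rw [H.inv w h1 h2]; exact h3
            · rw [H.inv w h1 h2]; tauto
        have := Finset.card_pos.mpr this
        omega
  · exact Finset.card_le_card (Finset.monotone_filter_right _ (fun w _ h => h.1))
  · exact Finset.card_le_card (Finset.monotone_filter_right _ (fun w _ h => h.2))

open scoped Classical in
lemma aux_struct {V : Type} [Fintype V] {G : SimpleGraph V} {u v : V} {σ : V → V} {P : Finset V}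
    (H : Hub G u v σ) (hP : Reps G u v σ P) {t : ℝ} (ht : 1 < t) (hs : specRad G ≤ t)
    {s p q : ℕ}
    (hF : 0 < t ^ 2 - (s + 1) * (t ^ 2 / (t ^ 2 - 1)))
    (hFF : (t ^ 2 - (s + 1) * (t ^ 2 / (t ^ 2 - 1))) *
      (t ^ 2 - p - (q + 1) * (t ^ 2 / (t ^ 2 - 1))) = (t / (t ^ 2 - 1)) ^ 2)
    (hr : ((Kset u v σ).filter (fun w => G.Adj u w ∧ G.Adj v w)).card = 0)
    (hl : (P.filter (fun w => G.Adj u w ∧ (G.Adj v w ∨ G.Adj v (σ w)))).card = 1)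
    (hc : (((Kset u v σ).filter (fun w => G.Adj u w)).card = 0 ∧
        (P.filter (fun w => G.Adj u w)).card = s + 1 ∧
        ((Kset u v σ).filter (fun w => G.Adj v w)).card = p ∧
        (P.filter (fun w => G.Adj v w ∨ G.Adj v (σ w))).card = q + 1) ∨
      (((Kset u v σ).filter (fun w => G.Adj u w)).card = p ∧
        (P.filter (fun w => G.Adj u w)).card = q + 1 ∧
        ((Kset u v σ).filter (fun w => G.Adj v w)).card = 0 ∧
        (P.filter (fun w => G.Adj v w ∨ G.Adj v (σ w))).card = s + 1)) :
    ¬ G.Adj u v ∧ ∀ w ∈ P, (¬ G.Adj u (σ w) ∧ ¬ (G.Adj u w ∧ G.Adj v w) ∧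
        ¬ (G.Adj v w ∧ G.Adj v (σ w))) := by
  have hD : 0 < t ^ 2 - 1 := by nlinarith
  have ht0 : 0 < t := by linarith
  obtain ⟨d, hd⟩ : ∃ d, d = t / (t ^ 2 - 1) := ⟨_, rfl⟩
  have hd0 : 0 < d := by rw [hd]; positivity
  have fin : ∀ (a b : ℝ), 0 < a → 0 < b → ∀ ex : V → ℝ, (∀ w ∈ P, 0 ≤ ex w) →
      (∀ w ∈ P, 0 < ex w ∨ (¬ G.Adj u (σ w) ∧ ¬ (G.Adj u w ∧ G.Adj v w) ∧
        ¬ (G.Adj v w ∧ G.Adj v (σ w)))) →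
      2 * a * b * (((if G.Adj u v then 1 else 0 : ℕ) : ℝ) * t) + ∑ w ∈ P, ex w ≤ 0 →
      ¬ G.Adj u v ∧ ∀ w ∈ P, (¬ G.Adj u (σ w) ∧ ¬ (G.Adj u w ∧ G.Adj v w) ∧
        ¬ (G.Adj v w ∧ G.Adj v (σ w))) := by
    intro a b ha hb ex h1 h2 h3
    have h4 := Finset.sum_nonneg h1
    constructor
    · intro hadj
      rw [if_pos hadj] at h3
      have : 0 < 2 * a * b * (((1 : ℕ) : ℝ) * t) := by positivity
      linarith
    · intro w hw
      rcases h2 w hw with h | h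
      · have h5 := Finset.single_le_sum h1 hw
        have : 0 ≤ 2 * a * b * (((if G.Adj u v then 1 else 0 : ℕ) : ℝ) * t) := by positivity
        linarith
      · exact h
  rcases hc with ⟨c1, c2, c3, c4⟩ | ⟨c1, c2, c3, c4⟩
  · obtain ⟨ex, h1, h2, h3⟩ := aux_ineq H hP ht hs d _ hd0.le hF.le
    refine fin d _ hd0 hF ex h1 (h2 hd0 hF) ?_
    rw [c1, c2, c3, c4, hr, hl, ← hd] at h3
    rw [← hd] at hFF
    push_cast at h3 ⊢
    refine le_of_eq_of_le ?_ h3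
    linear_combination (t ^ 2 - (s + 1) * (t ^ 2 / (t ^ 2 - 1))) * hFF
  · obtain ⟨ex, h1, h2, h3⟩ := aux_ineq H hP ht hs _ d hF.le hd0.le
    refine fin _ d hF hd0 ex h1 (h2 hF hd0) ?_
    rw [c1, c2, c3, c4, hr, hl, ← hd] at h3
    rw [← hd] at hFF
    push_cast at h3 ⊢
    refine le_of_eq_of_le ?_ h3
    linear_combination (t ^ 2 - (s + 1) * (t ^ 2 / (t ^ 2 - 1))) * hFF

end PartJ

section PartL

lemma aux_iso {V : Type} [Fintype V] {G : SimpleGraph V} {s p q : ℕ} (u x y v : V)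
    (e1 e1' : Fin s → V) (k : Fin p → V) (e2 e2' : Fin q → V)
    (hcard : Fintype.card V = p + 2 * s + 2 * q + 4)
    (surj : ∀ z, z = u ∨ z = x ∨ z = y ∨ z = v ∨ (∃ j, z = e1 j) ∨ (∃ j, z = e1' j) ∨
      (∃ i, z = k i) ∨ (∃ j, z = e2 j) ∨ (∃ j, z = e2' j))
    (R : V → V → Prop)
    (hR : ∀ a b, R a b ↔ (a = u ∧ b = x) ∨ (a = x ∧ b = y) ∨ (a = y ∧ b = v) ∨
      (∃ j, a = u ∧ b = e1 j) ∨ (∃ j, a = e1 j ∧ b = e1' j) ∨ (∃ i, a = v ∧ b = k i) ∨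
      (∃ j, a = v ∧ b = e2 j) ∨ (∃ j, a = e2 j ∧ b = e2' j))
    (hadj : ∀ a b, G.Adj a b ↔ R a b ∨ R b a) : Nonempty (G ≃g G3 0 s p q) := by
  let f : Fin 4 ⊕ ((Fin 0 ⊕ Fin s × Fin 2) ⊕ (Fin p ⊕ Fin q × Fin 2)) → V :=
    Sum.elim ![u, x, y, v] (Sum.elim (Sum.elim Fin.elim0 (fun jb => ![e1 jb.1, e1' jb.1] jb.2))
      (Sum.elim k (fun jb => ![e2 jb.1, e2' jb.1] jb.2)))
  have hsurj : Function.Surjective f := by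
    intro z
    rcases surj z with h | h | h | h | ⟨j, h⟩ | ⟨j, h⟩ | ⟨j, h⟩ | ⟨j, h⟩ | ⟨j, h⟩ <;> subst h
    · exact ⟨Sum.inl 0, rfl⟩
    · exact ⟨Sum.inl 1, rfl⟩
    · exact ⟨Sum.inl 2, rfl⟩
    · exact ⟨Sum.inl 3, rfl⟩
    · exact ⟨Sum.inr (Sum.inl (Sum.inr (j, 0))), rfl⟩
    · exact ⟨Sum.inr (Sum.inl (Sum.inr (j, 1))), rfl⟩
    · exact ⟨Sum.inr (Sum.inr (Sum.inl j)), rfl⟩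
    · exact ⟨Sum.inr (Sum.inr (Sum.inr (j, 0))), rfl⟩
    · exact ⟨Sum.inr (Sum.inr (Sum.inr (j, 1))), rfl⟩
  have hbij : Function.Bijective f := by
    rw [Fintype.bijective_iff_surjective_and_card]
    refine ⟨hsurj, ?_⟩
    rw [hcard]
    simp only [Fintype.card_sum, Fintype.card_fin, Fintype.card_prod]
    omega
  have hi : ∀ a b, f a = f b → a = b := fun a b h => hbij.1 h
  let rel : (Fin 4 ⊕ ((Fin 0 ⊕ Fin s × Fin 2) ⊕ (Fin p ⊕ Fin q × Fin 2))) →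
      (Fin 4 ⊕ ((Fin 0 ⊕ Fin s × Fin 2) ⊕ (Fin p ⊕ Fin q × Fin 2))) → Prop := fun a b =>
    (∃ i : Fin 3, a = Sum.inl i.castSucc ∧ b = Sum.inl i.succ) ∨
    (∃ i : Fin 0, a = Sum.inl 0 ∧ b = Sum.inr (Sum.inl (Sum.inl i))) ∨
    (∃ j : Fin s, a = Sum.inl 0 ∧ b = Sum.inr (Sum.inl (Sum.inr (j, 0)))) ∨
    (∃ j : Fin s, a = Sum.inr (Sum.inl (Sum.inr (j, 0))) ∧
      b = Sum.inr (Sum.inl (Sum.inr (j, 1)))) ∨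
    (∃ i : Fin p, a = Sum.inl 3 ∧ b = Sum.inr (Sum.inr (Sum.inl i))) ∨
    (∃ j : Fin q, a = Sum.inl 3 ∧ b = Sum.inr (Sum.inr (Sum.inr (j, 0)))) ∨
    (∃ j : Fin q, a = Sum.inr (Sum.inr (Sum.inr (j, 0))) ∧
      b = Sum.inr (Sum.inr (Sum.inr (j, 1))))
  have hG3 : ∀ a b, (G3 0 s p q).Adj a b ↔ a ≠ b ∧ (rel a b ∨ rel b a) := by
    intro a b
    exact SimpleGraph.fromRel_adj _ a b
  have hrel : ∀ a b, R (f a) (f b) ↔ rel a b := by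
    intro a b
    rw [hR]
    constructor
    · rintro (⟨h1, h2⟩ | ⟨h1, h2⟩ | ⟨h1, h2⟩ | ⟨j, h1, h2⟩ | ⟨j, h1, h2⟩ | ⟨j, h1, h2⟩ |
        ⟨j, h1, h2⟩ | ⟨j, h1, h2⟩)
      · exact Or.inl ⟨0, hi _ (Sum.inl 0) h1, hi _ (Sum.inl 1) h2⟩
      · exact Or.inl ⟨1, hi _ (Sum.inl 1) h1, hi _ (Sum.inl 2) h2⟩
      · exact Or.inl ⟨2, hi _ (Sum.inl 2) h1, hi _ (Sum.inl 3) h2⟩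
      · exact Or.inr (Or.inr (Or.inl ⟨j, hi _ (Sum.inl 0) h1,
          hi _ (Sum.inr (Sum.inl (Sum.inr (j, 0)))) h2⟩))
      · exact Or.inr (Or.inr (Or.inr (Or.inl ⟨j, hi _ (Sum.inr (Sum.inl (Sum.inr (j, 0)))) h1,
          hi _ (Sum.inr (Sum.inl (Sum.inr (j, 1)))) h2⟩)))
      · exact Or.inr (Or.inr (Or.inr (Or.inr (Or.inl ⟨j, hi _ (Sum.inl 3) h1,
          hi _ (Sum.inr (Sum.inr (Sum.inl j))) h2⟩))))
      · exact Or.inr (Or.inr (Or.inr (Or.inr (Or.inr (Or.inl ⟨j, hi _ (Sum.inl 3) h1,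
          hi _ (Sum.inr (Sum.inr (Sum.inr (j, 0)))) h2⟩)))))
      · exact Or.inr (Or.inr (Or.inr (Or.inr (Or.inr (Or.inr
          ⟨j, hi _ (Sum.inr (Sum.inr (Sum.inr (j, 0)))) h1,
          hi _ (Sum.inr (Sum.inr (Sum.inr (j, 1)))) h2⟩)))))
    · rintro (⟨j, rfl, rfl⟩ | ⟨j, rfl, rfl⟩ | ⟨j, rfl, rfl⟩ | ⟨j, rfl, rfl⟩ | ⟨j, rfl, rfl⟩ |
        ⟨j, rfl, rfl⟩ | ⟨j, rfl, rfl⟩)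
      · fin_cases j
        · exact Or.inl ⟨rfl, rfl⟩
        · exact Or.inr (Or.inl ⟨rfl, rfl⟩)
        · exact Or.inr (Or.inr (Or.inl ⟨rfl, rfl⟩))
      · exact j.elim0
      · exact Or.inr (Or.inr (Or.inr (Or.inl ⟨j, rfl, rfl⟩)))
      · exact Or.inr (Or.inr (Or.inr (Or.inr (Or.inl ⟨j, rfl, rfl⟩))))
      · exact Or.inr (Or.inr (Or.inr (Or.inr (Or.inr (Or.inl ⟨j, rfl, rfl⟩)))))
      · exact Or.inr (Or.inr (Or.inr (Or.inr (Or.inr (Or.inr (Or.inl ⟨j, rfl, rfl⟩))))))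
      · exact Or.inr (Or.inr (Or.inr (Or.inr (Or.inr (Or.inr (Or.inr ⟨j, rfl, rfl⟩))))))
  refine ⟨SimpleGraph.Iso.symm ⟨Equiv.ofBijective f hbij, ?_⟩⟩
  intro a b
  change G.Adj (f a) (f b) ↔ _
  rw [hG3, ← hrel, ← hrel, ← hadj]
  constructor
  · intro h
    refine ⟨?_, h⟩
    rintro rfl
    exact h.ne rfl
  · exact fun h => h.2

lemma aux_iso2 {V : Type} [Fintype V] {G : SimpleGraph V} {u v : V} {σ : V → V}
    (H : Hub G u v σ) {s p q : ℕ} (w0 : V) (P1 P2 K : Finset V)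
    (hcard : Fintype.card V = p + 2 * s + 2 * q + 4)
    (c1 : P1.card = s) (c2 : P2.card = q) (cK : K.card = p)
    (nuv : ¬ G.Adj u v) (h0 : σ w0 ≠ w0) (h1 : ∀ w ∈ P1, σ w ≠ w) (h2 : ∀ w ∈ P2, σ w ≠ w)
    (Nu : ∀ w, G.Adj u w ↔ w = w0 ∨ w ∈ P1)
    (Nv : ∀ w, G.Adj v w ↔ w = σ w0 ∨ w ∈ P2 ∨ w ∈ K)
    (hK : ∀ w ∈ K, σ w = w)
    (cov : ∀ w, w ≠ u → w ≠ v → w = w0 ∨ w = σ w0 ∨ w ∈ P1 ∨ σ w ∈ P1 ∨ w ∈ P2 ∨ σ w ∈ P2 ∨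
      w ∈ K) : Nonempty (G ≃g G3 0 s p q) := by
  subst c1 c2 cK
  let E1 := P1.equivFin.symm
  let E2 := P2.equivFin.symm
  let EK := K.equivFin.symm
  have x1 : ∀ w, w ∈ P1 → ∃ j, w = (E1 j : V) := by
    intro w hw; exact ⟨E1.symm ⟨w, hw⟩, by simp⟩
  have x2 : ∀ w, w ∈ P2 → ∃ j, w = (E2 j : V) := by
    intro w hw; exact ⟨E2.symm ⟨w, hw⟩, by simp⟩
  have xK : ∀ w, w ∈ K → ∃ j, w = (EK j : V) := by
    intro w hw; exact ⟨EK.symm ⟨w, hw⟩, by simp⟩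
  have nu : ∀ w, G.Adj u w → w ≠ u ∧ w ≠ v := by
    intro w h
    exact ⟨h.ne', by rintro rfl; exact nuv h⟩
  have nv : ∀ w, G.Adj v w → w ≠ u ∧ w ≠ v := by
    intro w h
    exact ⟨by rintro rfl; exact nuv h.symm, h.ne'⟩
  have n0 := nu w0 ((Nu w0).mpr (Or.inl rfl))
  have hσ : ∀ w, w ≠ u ∧ w ≠ v → σ w ≠ w → G.Adj w (σ w) := by
    intro w hw hs
    exact (H.adj w _ hw.1 hw.2 (H.su w hw.1 hw.2) (H.sv w hw.1 hw.2)).mpr ⟨rfl, hs⟩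
  refine aux_iso u w0 (σ w0) v (fun j => (E1 j : V)) (fun j => σ (E1 j)) (fun j => (EK j : V))
    (fun j => (E2 j : V)) (fun j => σ (E2 j)) hcard ?_ _ (fun a b => Iff.rfl) ?_
  · intro z
    by_cases z1 : z = u
    · exact (Or.inl z1)
    by_cases z2 : z = v
    · exact (Or.inr (Or.inr (Or.inr (Or.inl z2))))
    have iz := H.inv z z1 z2
    rcases cov z z1 z2 with h | h | h | h | h | h | h
    · exact (Or.inr (Or.inl h))
    · exact (Or.inr (Or.inr (Or.inl h)))
    · exact (Or.inr (Or.inr (Or.inr (Or.inr (Or.inl (x1 z h))))))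
    · obtain ⟨j, hj⟩ := x1 _ h
      exact (Or.inr (Or.inr (Or.inr (Or.inr (Or.inr (Or.inl ⟨j, by rw [← hj, iz]⟩))))))
    · exact (Or.inr (Or.inr (Or.inr (Or.inr (Or.inr (Or.inr (Or.inr (Or.inl (x2 z h)))))))))
    · obtain ⟨j, hj⟩ := x2 _ h
      exact (Or.inr (Or.inr (Or.inr (Or.inr (Or.inr (Or.inr (Or.inr (Or.inr ⟨j, by rw [← hj, iz]⟩))))))))
    · exact (Or.inr (Or.inr (Or.inr (Or.inr (Or.inr (Or.inr (Or.inl (xK z h))))))))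
  · intro a b
    constructor
    · have hu : ∀ a b, G.Adj a b → a = u → (a = u ∧ b = w0) ∨ (∃ j, a = u ∧ b = (E1 j : V)) := by
        rintro a b h rfl
        rcases (Nu b).mp h with h | h
        · left; exact ⟨rfl, h⟩
        · obtain ⟨j, hj⟩ := x1 b h
          right; exact ⟨j, rfl, hj⟩
      have hv : ∀ a b, G.Adj a b → a = v → (b = σ w0 ∧ a = v) ∨ (∃ j, a = v ∧ b = (EK j : V)) ∨
          (∃ j, a = v ∧ b = (E2 j : V)) := by
        rintro a b h rfl
        rcases (Nv b).mp h with h | h | h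
        · left; exact ⟨h, rfl⟩
        · obtain ⟨j, hj⟩ := x2 b h
          right; right; exact ⟨j, rfl, hj⟩
        · obtain ⟨j, hj⟩ := xK b h
          right; left; exact ⟨j, rfl, hj⟩
      intro hab
      by_cases a1 : a = u
      · rcases hu a b hab a1 with h | h
        · exact Or.inl (Or.inl h)
        · exact Or.inl (Or.inr (Or.inr (Or.inr (Or.inl h))))
      by_cases a2 : a = v
      · rcases hv a b hab a2 with h | h | h
        · exact Or.inr (Or.inr (Or.inr (Or.inl h)))
        · exact Or.inl (Or.inr (Or.inr (Or.inr (Or.inr (Or.inr (Or.inl h))))))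
        · exact Or.inl (Or.inr (Or.inr (Or.inr (Or.inr (Or.inr (Or.inr (Or.inl h)))))))
      by_cases b1 : b = u
      · rcases hu b a hab.symm b1 with h | h
        · exact Or.inr (Or.inl h)
        · exact Or.inr (Or.inr (Or.inr (Or.inr (Or.inl h))))
      by_cases b2 : b = v
      · rcases hv b a hab.symm b2 with h | h | h
        · exact Or.inl (Or.inr (Or.inr (Or.inl h)))
        · exact Or.inr (Or.inr (Or.inr (Or.inr (Or.inr (Or.inr (Or.inl h))))))
        · exact Or.inr (Or.inr (Or.inr (Or.inr (Or.inr (Or.inr (Or.inr (Or.inl h)))))))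
      obtain ⟨e, hne⟩ := (H.adj a b a1 a2 b1 b2).mp hab
      have ia := H.inv a a1 a2
      rcases cov a a1 a2 with h | h | h | h | h | h | h
      · left; right; left; rw [e, h]; exact ⟨rfl, rfl⟩
      · right; right; left; rw [e, h, H.inv w0 n0.1 n0.2]; exact ⟨rfl, rfl⟩
      · obtain ⟨j, hj⟩ := x1 a h
        exact Or.inl (Or.inr (Or.inr (Or.inr (Or.inr (Or.inl ⟨j, hj, by rw [e, ← hj]⟩)))))
      · obtain ⟨j, hj⟩ := x1 _ h
        exact Or.inr (Or.inr (Or.inr (Or.inr (Or.inr (Or.inl ⟨j, by rw [e, ← hj], by rw [← hj, ia]⟩)))))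
      · obtain ⟨j, hj⟩ := x2 a h
        exact Or.inl (Or.inr (Or.inr (Or.inr (Or.inr (Or.inr (Or.inr (Or.inr ⟨j, hj, by rw [e, ← hj]⟩)))))))
      · obtain ⟨j, hj⟩ := x2 _ h
        exact Or.inr (Or.inr (Or.inr (Or.inr (Or.inr (Or.inr (Or.inr (Or.inr ⟨j, by rw [e, ← hj], by rw [← hj, ia]⟩)))))))
      · rw [hK a h] at e
        exact absurd e hne
    · have key : ∀ a b, ((a = u ∧ b = w0) ∨ (a = w0 ∧ b = σ w0) ∨ (a = σ w0 ∧ b = v) ∨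
          (∃ j, a = u ∧ b = (E1 j : V)) ∨ (∃ j, a = (E1 j : V) ∧ b = σ (E1 j)) ∨
          (∃ i, a = v ∧ b = (EK i : V)) ∨
          (∃ j, a = v ∧ b = (E2 j : V)) ∨ (∃ j, a = (E2 j : V) ∧ b = σ (E2 j))) → G.Adj a b := by
        rintro a b (⟨rfl, rfl⟩ | ⟨rfl, rfl⟩ | ⟨rfl, rfl⟩ | ⟨j, rfl, rfl⟩ | ⟨j, rfl, rfl⟩ |
          ⟨j, rfl, rfl⟩ | ⟨j, rfl, rfl⟩ | ⟨j, rfl, rfl⟩)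
        · exact (Nu _).mpr (Or.inl rfl)
        · exact hσ _ n0 h0
        · exact ((Nv _).mpr (Or.inl rfl)).symm
        · exact (Nu _).mpr (Or.inr (E1 j).2)
        · exact hσ _ (nu _ ((Nu _).mpr (Or.inr (E1 j).2))) (h1 _ (E1 j).2)
        · exact (Nv _).mpr (Or.inr (Or.inr (EK j).2))
        · exact (Nv _).mpr (Or.inr (Or.inl (E2 j).2))
        · exact hσ _ (nv _ ((Nv _).mpr (Or.inr (Or.inl (E2 j).2)))) (h2 _ (E2 j).2)
      rintro (h | h)
      · exact key a b h
      · exact (key b a h).symm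

end PartL

section PartM

lemma aux_hub_swap {V : Type} {G : SimpleGraph V} {u v : V} {σ : V → V}
    (H : Hub G u v σ) : Hub G v u σ :=
  ⟨H.ne.symm, fun w h1 h2 => H.sv w h2 h1, fun w h1 h2 => H.su w h2 h1,
    fun w h1 h2 => H.inv w h2 h1, fun w z h1 h2 h3 h4 => H.adj w z h2 h1 h4 h3⟩

open scoped Classical in
lemma aux_final {V : Type} [Fintype V] {G : SimpleGraph V} {u v : V} {σ : V → V} {P : Finset V}
    (H : Hub G u v σ) (hP : Reps G u v σ P) (hconn : G.Connected) {s p q : ℕ}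
    (hcard : Fintype.card V = p + 2 * s + 2 * q + 4)
    (hr : ((Kset u v σ).filter (fun w => G.Adj u w ∧ G.Adj v w)).card = 0)
    (hl : (P.filter (fun w => G.Adj u w ∧ (G.Adj v w ∨ G.Adj v (σ w)))).card = 1)
    (hc : (((Kset u v σ).filter (fun w => G.Adj u w)).card = 0 ∧
        (P.filter (fun w => G.Adj u w)).card = s + 1 ∧
        ((Kset u v σ).filter (fun w => G.Adj v w)).card = p ∧
        (P.filter (fun w => G.Adj v w ∨ G.Adj v (σ w))).card = q + 1) ∨
      (((Kset u v σ).filter (fun w => G.Adj u w)).card = p ∧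
        (P.filter (fun w => G.Adj u w)).card = q + 1 ∧
        ((Kset u v σ).filter (fun w => G.Adj v w)).card = 0 ∧
        (P.filter (fun w => G.Adj v w ∨ G.Adj v (σ w))).card = s + 1))
    (nuv : ¬ G.Adj u v) (hpat : ∀ w ∈ P, (¬ G.Adj u (σ w) ∧ ¬ (G.Adj u w ∧ G.Adj v w) ∧
        ¬ (G.Adj v w ∧ G.Adj v (σ w)))) : Nonempty (G ≃g G3 0 s p q) := by
  obtain ⟨w0, hw0⟩ := Finset.card_eq_one.mp hl
  have m0 : ∀ w, w ∈ P → G.Adj u w → (G.Adj v w ∨ G.Adj v (σ w)) → w = w0 := by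
    intro w h1 h2 h3
    have : w ∈ P.filter (fun w => G.Adj u w ∧ (G.Adj v w ∨ G.Adj v (σ w))) :=
      Finset.mem_filter.mpr ⟨h1, h2, h3⟩
    rw [hw0] at this
    simpa using this
  obtain ⟨hw0P, hw0u, hw0v⟩ : w0 ∈ P ∧ G.Adj u w0 ∧ (G.Adj v w0 ∨ G.Adj v (σ w0)) := by
    have : w0 ∈ P.filter (fun w => G.Adj u w ∧ (G.Adj v w ∨ G.Adj v (σ w))) := by
      rw [hw0]; simp
    simpa using this
  have p0 := hpat w0 hw0P
  have hv0 : G.Adj v (σ w0) := by tauto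
  have i0 := H.inv w0 (hP.nu _ hw0P) (hP.nv _ hw0P)
  obtain ⟨P1, hP1⟩ : ∃ P1, P1 = (P.filter (fun w => G.Adj u w)).erase w0 := ⟨_, rfl⟩
  obtain ⟨P2, hP2⟩ : ∃ P2, P2 = (P.filter (fun w => G.Adj v w ∨ G.Adj v (σ w))).erase w0 :=
    ⟨_, rfl⟩
  obtain ⟨Ku, hKu⟩ : ∃ K, K = (Kset u v σ).filter (fun w => G.Adj u w) := ⟨_, rfl⟩
  obtain ⟨Kv, hKv⟩ : ∃ K, K = (Kset u v σ).filter (fun w => G.Adj v w) := ⟨_, rfl⟩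
  have mP1 : ∀ w, w ∈ P1 ↔ w ≠ w0 ∧ w ∈ P ∧ G.Adj u w := by intro w; simp [hP1]
  have mP2 : ∀ w, w ∈ P2 ↔ w ≠ w0 ∧ w ∈ P ∧ (G.Adj v w ∨ G.Adj v (σ w)) := by
    intro w; simp [hP2]
  have mKu : ∀ w, w ∈ Ku ↔ (w ≠ u ∧ w ≠ v ∧ σ w = w) ∧ G.Adj u w := by
    intro w; simp [hKu, Kset]
  have mKv : ∀ w, w ∈ Kv ↔ (w ≠ u ∧ w ≠ v ∧ σ w = w) ∧ G.Adj v w := by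
    intro w; simp [hKv, Kset]
  have cP1 : P1.card + 1 = (P.filter (fun w => G.Adj u w)).card := by
    rw [hP1]; apply Finset.card_erase_add_one; simp [hw0P, hw0u]
  have cP2 : P2.card + 1 = (P.filter (fun w => G.Adj v w ∨ G.Adj v (σ w))).card := by
    rw [hP2]; apply Finset.card_erase_add_one; simp [hw0P, hw0v]
  have Nu : ∀ w, G.Adj u w ↔ w = w0 ∨ w ∈ P1 ∨ w ∈ Ku := by
    intro w
    constructor
    · intro h
      have h1 : w ≠ u := h.ne'
      have h2 : w ≠ v := by rintro rfl; exact nuv h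
      by_cases hs : σ w = w
      · right; right; rw [mKu]; exact ⟨⟨h1, h2, hs⟩, h⟩
      rcases hP.cov w h1 h2 hs with hw | hw
      · by_cases hww : w = w0
        · left; exact hww
        · right; left; rw [mP1]; exact ⟨hww, hw, h⟩
      · have := (hpat _ hw).1
        rw [H.inv w h1 h2] at this
        exact absurd h this
    · rintro (rfl | h | h)
      · exact hw0u
      · exact ((mP1 w).mp h).2.2
      · exact ((mKu w).mp h).2
  have Nv : ∀ w, G.Adj v w ↔ w = σ w0 ∨ w ∈ P2 ∨ w ∈ Kv := by
    intro w
    constructor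
    · intro h
      have h2 : w ≠ v := h.ne'
      have h1 : w ≠ u := by rintro rfl; exact nuv h.symm
      by_cases hs : σ w = w
      · right; right; rw [mKv]; exact ⟨⟨h1, h2, hs⟩, h⟩
      rcases hP.cov w h1 h2 hs with hw | hw
      · by_cases hww : w = w0
        · subst hww
          tauto
        · right; left; rw [mP2]; exact ⟨hww, hw, Or.inl h⟩
      · have iw := H.inv w h1 h2
        left
        have := hpat _ hw
        rw [iw] at this
        have h3 := hP.av _ hw
        rw [iw] at h3
        have h4 := m0 _ hw (by tauto) (Or.inr (by rw [iw]; exact h))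
        rw [← h4, iw]
    · rintro (rfl | h | h)
      · exact hv0
      · obtain ⟨h1, h2, h3⟩ := (mP2 w).mp h
        by_cases hu : G.Adj u w
        · exact absurd (m0 w h2 hu h3) h1
        · have := hP.av w h2 hu
          tauto
      · exact ((mKv w).mp h).2
  have cov0 : ∀ w, w ∈ P → w = w0 ∨ w ∈ P1 ∨ w ∈ P2 := by
    intro w hw
    have h1 := aux_att H hconn w (hP.nu _ hw) (hP.nv _ hw)
    by_cases hww : w = w0
    · exact Or.inl hww
    right
    by_cases hu : G.Adj u w
    · left; rw [mP1]; exact ⟨hww, hw, hu⟩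
    · right; rw [mP2]
      refine ⟨hww, hw, ?_⟩
      rcases h1 with h | h | h | h
      · exact absurd h hu
      · exact Or.inl h
      · exact absurd (hP.au w hw h) hu
      · exact Or.inr h
  have cov : ∀ w, w ≠ u → w ≠ v → w = w0 ∨ w = σ w0 ∨ w ∈ P1 ∨ σ w ∈ P1 ∨ w ∈ P2 ∨ σ w ∈ P2 ∨
      w ∈ Ku ∨ w ∈ Kv := by
    intro w h1 h2
    by_cases hs : σ w = w
    · have h3 := aux_att H hconn w h1 h2
      rw [hs] at h3
      have h4 : G.Adj u w ∨ G.Adj v w := by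
        rcases h3 with h | h | h | h
        · exact Or.inl h
        · exact Or.inr h
        · exact Or.inl h
        · exact Or.inr h
      right; right; right; right; right; right
      rcases h4 with h | h
      · left; rw [mKu]; exact ⟨⟨h1, h2, hs⟩, h⟩
      · right; rw [mKv]; exact ⟨⟨h1, h2, hs⟩, h⟩
    rcases hP.cov w h1 h2 hs with hw | hw
    · rcases cov0 w hw with h | h | h
      · exact Or.inl h
      · exact Or.inr (Or.inr (Or.inl h))
      · exact Or.inr (Or.inr (Or.inr (Or.inr (Or.inl h))))
    · have iw := H.inv w h1 h2
      rcases cov0 _ hw with h | h | h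
      · exact Or.inr (Or.inl (by rw [← h]; exact iw.symm))
      · exact Or.inr (Or.inr (Or.inr (Or.inl h)))
      · exact Or.inr (Or.inr (Or.inr (Or.inr (Or.inr (Or.inl h)))))
  have hs0 := hP.ns w0 hw0P
  have hs1 : ∀ w ∈ P1, σ w ≠ w := fun w hw => hP.ns w ((mP1 w).mp hw).2.1
  have hs2 : ∀ w ∈ P2, σ w ≠ w := fun w hw => hP.ns w ((mP2 w).mp hw).2.1
  rw [← hKu, ← hKv, ← cP1, ← cP2] at hc
  rcases hc with ⟨d1, d2, d3, d4⟩ | ⟨d1, d2, d3, d4⟩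
  · have hE := Finset.card_eq_zero.mp d1
    refine aux_iso2 H w0 P1 P2 Kv hcard (by omega) (by omega) d3 nuv hs0 hs1 hs2 ?_ Nv
      (fun w hw => ((mKv w).mp hw).1.2.2) ?_
    · intro w; rw [Nu, hE]; simp
    · intro w h1 h2
      have := cov w h1 h2
      rw [hE] at this
      simpa using this
  · have hE := Finset.card_eq_zero.mp d3
    refine aux_iso2 (aux_hub_swap H) (σ w0) P2 P1 Ku hcard (by omega) (by omega) d1
      (fun h => nuv h.symm) (by rw [i0]; exact hs0.symm) hs2 hs1 ?_ ?_
      (fun w hw => ((mKu w).mp hw).1.2.2) ?_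
    · intro w; rw [Nv, hE]; simp
    · intro w; rw [Nu, i0]
    · intro w h1 h2
      rw [i0]
      rcases cov w h2 h1 with h | h | h | h | h | h | h | h
      · exact Or.inr (Or.inl h)
      · exact Or.inl h
      · exact Or.inr (Or.inr (Or.inr (Or.inr (Or.inl h))))
      · exact Or.inr (Or.inr (Or.inr (Or.inr (Or.inr (Or.inl h)))))
      · exact Or.inr (Or.inr (Or.inl h))
      · exact Or.inr (Or.inr (Or.inr (Or.inl h)))
      · exact Or.inr (Or.inr (Or.inr (Or.inr (Or.inr (Or.inr h)))))
      · rw [hE] at h; exact absurd h (Finset.notMem_empty w)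

end PartM

/-- If a connected graph `G` of order `n ≥ 10` with dissociation number `n-2` attains the
minimum spectral radius among all connected graphs of order `n` with dissociation number
`n-2`, then `G ≅ H(n)`.  Here, for even `n`, `H(n) = G3 0 ⌈(n-4)/4⌉ 0 ⌊(n-4)/4⌋` is the
tree obtained from a path on 4 vertices by attaching `⌈(n-4)/4⌉` pendant 2-paths to one
end and `⌊(n-4)/4⌋` pendant 2-paths to the other end (so that `H(n)` has order `n`); for
odd `n`, `H(n) = G3 0 ⌈(n-5)/4⌉ 1 ⌊(n-5)/4⌋` is obtained from `H(n-1)` by attaching one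
pendant vertex to the branch vertex of smaller degree. -/
theorem minimum_spectral_radius_diss_eq_card_sub_two
    {n : ℕ} (hn : 10 ≤ n) {V : Type} [Fintype V] (G : SimpleGraph V)
    (hcard : Fintype.card V = n) (hconn : G.Connected) (hdiss : dissNum G = n - 2)
    (hmin : ∀ H : SimpleGraph (Fin n), H.Connected → dissNum H = n - 2 →
      specRad G ≤ specRad H) :
    (Even n → Nonempty (G ≃g G3 0 ((n - 4 + 3) / 4) 0 ((n - 4) / 4))) ∧
    (Odd n → Nonempty (G ≃g G3 0 ((n - 5 + 3) / 4) 1 ((n - 5) / 4))) := by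
  obtain ⟨t, s, p, q, ht, h2s, h1q, hnn, hF, hFF, hev, hod, -, hall⟩ := aux_param n hn
  have hc4 : Fintype.card (Fin n) =
      Fintype.card (Fin 4 ⊕ ((Fin 0 ⊕ Fin s × Fin 2) ⊕ (Fin p ⊕ Fin q × Fin 2))) := by
    simp only [Fintype.card_sum, Fintype.card_fin, Fintype.card_prod]
    omega
  let e := Fintype.equivOfCardEq hc4
  let T : SimpleGraph (Fin n) := (G3 0 s p q).comap e
  let iso : T ≃g G3 0 s p q := SimpleGraph.Iso.comap e _
  have hT1 : T.Connected := iso.connected_iff.mpr (aux_G3_conn s p q)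
  have hT2 : dissNum T = n - 2 := by
    rw [aux_dissNum_iso T _ iso, aux_G3_diss h2s h1q]; omega
  have hsp : specRad G ≤ t := by
    refine (hmin T hT1 hT2).trans ?_
    obtain ⟨z, hz, hz2⟩ := aux_G3_pos (by linarith) hF hFF
    exact aux_specRad_le_iso T _ iso t (by linarith) z hz hz2
  obtain ⟨u, v, σ, H⟩ := aux_exists_hub G (by omega) hcard hdiss
  obtain ⟨P, hP⟩ := aux_exists_reps H
  have ht1 : 1 < t := by linarith
  obtain ⟨hr, hl, hc⟩ := hall _ _ _ _ _ _ _ (aux_cnt H hP hconn hcard) (by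
    intro a b ha hb
    obtain ⟨ex, x1, -, x3⟩ := aux_ineq H hP ht1 hsp a b ha hb
    have := Finset.sum_nonneg x1
    linarith)
  obtain ⟨nuv, hpat⟩ := aux_struct H hP ht1 hsp hF hFF hr hl hc
  have main : Nonempty (G ≃g G3 0 s p q) :=
    aux_final H hP hconn (hcard.trans hnn) hr hl hc nuv hpat
  constructor
  · intro h
    obtain ⟨e1, e2, e3⟩ := hev h
    rw [← e1, ← e3]; rw [e2] at main; exact main
  · intro h
    obtain ⟨e1, e2, e3⟩ := hod h
    rw [← e1, ← e3]; rw [e2] at main; exact main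
end

section
/- Let n be a positive integer with ⌈2n/3⌉ ≥ 2. If G is a connected simple graph on n vertices with dissociation number ⌈2n/3⌉ that attains the minimum spectral radius among all connected simple graphs on n vertices with dissociation number ⌈2n/3⌉, then G is isomorphic to the path P_n. -/
theorem tri1 (a b c : ℝ) : Real.sin (b+c) * Real.sin (a+c) - Real.sin a * Real.sin b = Real.sin c * Real.sin (a+b+c) := by
  simp only [Real.sin_add, Real.cos_add]
  linear_combination (Real.sin a * Real.sin b) * (Real.sin_sq_add_cos_sq c)

theorem tri2 (a b c : ℝ) : Real.sin b * Real.sin (a+c) - Real.sin c * Real.sin (a+b) = Real.sin a * Real.sin (b-c) := by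
  simp only [Real.sin_add, Real.sin_sub]
  ring

theorem tri3 (a b c : ℝ) (hb : Real.sin b ≠ 0) (hac : Real.sin (a+c) ≠ 0) (hab : Real.sin (a+b) ≠ 0) :
    Real.sin (a+b+c) / Real.sin (a+b) - (Real.sin (b+c) / Real.sin b - Real.sin a / Real.sin (a+c))
     = Real.sin (a+b+c) * Real.sin a * Real.sin (b-c) / (Real.sin b * Real.sin (a+c) * Real.sin (a+b)) := by
  have h1 := tri1 a b c
  have h2 := tri2 a b c
  field_simp
  linear_combination Real.sin (a+b+c) * h2 - Real.sin (a+b) * h1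

/-- The ratio attached to a path with `m` vertices. -/
noncomputable def tt (n m : ℕ) : ℝ :=
  Real.sin ((m+1) * (Real.pi / (n+1))) / Real.sin (m * (Real.pi / (n+1)))

/-- The spectral radius of the path. -/
noncomputable def lam (n : ℕ) : ℝ := 2 * Real.cos (Real.pi / (n+1))

theorem sin_pos_m (n m : ℕ) (h1 : 1 ≤ m) (h2 : m ≤ n) : 0 < Real.sin (m * (Real.pi / (n+1))) := by
  have hn : (0:ℝ) < n + 1 := by positivity
  have hp := Real.pi_pos
  apply Real.sin_pos_of_pos_of_lt_pi
  · have : (0:ℝ) < m := by exact_mod_cast h1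
    positivity
  · have : (m:ℝ) < n + 1 := by exact_mod_cast Nat.lt_succ_of_le h2
    rw [mul_div_assoc', div_lt_iff₀ hn]
    nlinarith

theorem sin_nonneg_m (n m : ℕ) (h2 : m ≤ n+1) : 0 ≤ Real.sin (m * (Real.pi / (n+1))) := by
  rcases Nat.eq_zero_or_pos m with h | h
  · simp [h]
  rcases Nat.lt_or_ge n m with h' | h'
  · have : m = n+1 := by omega
    subst this
    have hn : (n + 1 : ℝ) ≠ 0 := by positivity
    push_cast
    rw [mul_div_cancel₀ _ hn]; simp
  · exact (sin_pos_m n m h h').le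

theorem tt_n (n : ℕ) : tt n n = 0 := by
  unfold tt
  have hn : (n + 1 : ℝ) ≠ 0 := by positivity
  rw [mul_div_cancel₀ _ hn]; simp

theorem tt_one (n : ℕ) (hn : 1 ≤ n) : tt n 1 = lam n := by
  have := sin_pos_m n 1 le_rfl hn
  unfold tt lam
  push_cast at this ⊢
  rw [one_mul] at this ⊢
  rw [add_mul, one_mul, ← two_mul, Real.sin_two_mul]
  field_simp

theorem tt_pos (n m : ℕ) (h1 : 1 ≤ m) (h2 : m < n) : 0 < tt n m := by
  have h := sin_pos_m n m h1 h2.le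
  have h' := sin_pos_m n (m+1) (by omega) h2
  unfold tt
  push_cast at h'
  positivity

theorem tt_diff (n a b : ℕ) (ha : 1 ≤ a) (hb : 1 ≤ b) (hab : a + b ≤ n) :
    tt n (a+b) - (tt n b - 1 / tt n a) = Real.sin ((a+b+1 : ℕ) * (Real.pi / (n+1))) * Real.sin (a * (Real.pi / (n+1))) * Real.sin ((b-1 : ℕ) * (Real.pi / (n+1))) / (Real.sin (b* (Real.pi / (n+1))) * Real.sin ((a+1 : ℕ) * (Real.pi / (n+1))) * Real.sin ((a+b : ℕ) * (Real.pi / (n+1)))) := by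
  have h1 := sin_pos_m n b hb (by omega)
  have h2 := sin_pos_m n (a+1) (by omega) (by omega)
  have h3 := sin_pos_m n (a+b) (by omega) (by omega)
  unfold tt
  rw [one_div_div]
  push_cast [Nat.cast_sub hb] at *
  simp only [add_mul, sub_mul, one_mul] at *
  exact tri3 _ _ _ h1.ne' h2.ne' h3.ne'

theorem tt_le (n a b : ℕ) (ha : 1 ≤ a) (hb : 1 ≤ b) (hab : a + b ≤ n) :
    tt n b - 1 / tt n a ≤ tt n (a+b) := by
  have h := tt_diff n a b ha hb hab
  have h1 := sin_pos_m n b hb (by omega)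
  have h2 := sin_pos_m n (a+1) (by omega) (by omega)
  have h3 := sin_pos_m n (a+b) (by omega) (by omega)
  have h4 := sin_pos_m n a (by omega) (by omega)
  have h5 := sin_nonneg_m n (a+b+1) (by omega)
  have h6 := sin_nonneg_m n (b-1) (by omega)
  have : 0 ≤ tt n (a+b) - (tt n b - 1 / tt n a) := by rw [h]; positivity
  linarith

theorem tt_lt (n a b : ℕ) (ha : 1 ≤ a) (hb : 2 ≤ b) (hab : a + b < n) :
    tt n b - 1 / tt n a < tt n (a+b) := by
  have h := tt_diff n a b ha (by omega) hab.le
  have h1 := sin_pos_m n b (by omega) (by omega)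
  have h2 := sin_pos_m n (a+1) (by omega) (by omega)
  have h3 := sin_pos_m n (a+b) (by omega) (by omega)
  have h4 := sin_pos_m n a (by omega) (by omega)
  have h5 := sin_pos_m n (a+b+1) (by omega) (by omega)
  have h6 := sin_pos_m n (b-1) (by omega) (by omega)
  have : 0 < tt n (a+b) - (tt n b - 1 / tt n a) := by rw [h]; positivity
  linarith

theorem tt_succ (n a : ℕ) (ha : 1 ≤ a) (hab : a + 1 ≤ n) :
    tt n (a+1) = lam n - 1 / tt n a := by
  have h := tt_diff n a 1 ha le_rfl hab
  rw [tt_one n (by omega)] at h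
  simp at h
  simp
  linarith

/-- Every vertex of `S` is reachable from `r` inside `S`. -/
def Cn {V : Type} (G : SimpleGraph V) (S : Finset V) (r : V) : Prop :=
  ∀ v ∈ S, Relation.ReflTransGen (fun u w => G.Adj u w ∧ u ∈ S ∧ w ∈ S) r v

open scoped Classical in
theorem Cn_split {V : Type} (G : SimpleGraph V) (S : Finset V) (r : V) (hr : r ∈ S)
    (hS : Cn G S r) (h2 : 2 ≤ S.card) :
    ∃ A a, A ⊆ S ∧ r ∉ A ∧ a ∈ A ∧ G.Adj r a ∧ Cn G A a ∧ Cn G (S \ A) r := by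
  obtain ⟨w, hw, hwr⟩ := Finset.exists_mem_ne (by omega : 1 < S.card) r
  set R : V → V → Prop := fun u w => G.Adj u w ∧ u ∈ S.erase r ∧ w ∈ S.erase r with hR
  have hsymm : Std.Symm R := ⟨fun u v h => ⟨h.1.symm, h.2.2, h.2.1⟩⟩
  set A : Finset V := S.filter (fun v => Relation.ReflTransGen R w v) with hA
  have hrw : ∀ v, Relation.ReflTransGen R w v → v ≠ r := by
    intro v hv
    rcases Relation.ReflTransGen.cases_tail hv with h | ⟨c, _, h⟩
    · rw [h]; exact hwr
    · exact Finset.ne_of_mem_erase h.2.2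
  have hcl : ∀ u v, u ∈ A → v ∈ S → v ≠ r → G.Adj u v → v ∈ A := by
    intro u v hu hv hvr huv
    rw [hA, Finset.mem_filter] at hu ⊢
    exact ⟨hv, hu.2.tail ⟨huv, Finset.mem_erase.2 ⟨hrw u hu.2, hu.1⟩, Finset.mem_erase.2 ⟨hvr, hv⟩⟩⟩
  have hrA : r ∉ A := fun h => hrw r (Finset.mem_filter.1 h).2 rfl
  have hwA : w ∈ A := Finset.mem_filter.2 ⟨hw, Relation.ReflTransGen.refl⟩
  have hex : ∃ a ∈ A, G.Adj r a := by
    have key : ∀ z, Relation.ReflTransGen (fun u w => G.Adj u w ∧ u ∈ S ∧ w ∈ S) r z → z ∈ A → ∃ a ∈ A, G.Adj r a := by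
      intro z hz
      induction hz with
      | refl => intro h; exact absurd h hrA
      | @tail y z _ hyz ih =>
        intro hzA
        by_cases hy : y = r
        · exact ⟨z, hzA, hy ▸ hyz.1⟩
        · exact ih (hcl z y hzA hyz.2.1 hy hyz.1.symm)
    exact key w (hS w hw) hwA
  obtain ⟨a, haA, hra⟩ := hex
  refine ⟨A, a, Finset.filter_subset _ _, hrA, haA, hra, ?_, ?_⟩
  · intro v hv
    have h1 : Relation.ReflTransGen R a w := (Relation.ReflTransGen.stdSymm (r := R)).symm _ _ (Finset.mem_filter.1 haA).2
    have h2 := h1.trans (Finset.mem_filter.1 hv).2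
    have key : ∀ z, Relation.ReflTransGen R a z → z ∈ A ∧ Relation.ReflTransGen (fun u w => G.Adj u w ∧ u ∈ A ∧ w ∈ A) a z := by
      intro z hz
      induction hz with
      | refl => exact ⟨haA, Relation.ReflTransGen.refl⟩
      | @tail y z _ hyz ih =>
        have hz : z ∈ A := hcl y z ih.1 (Finset.mem_of_mem_erase hyz.2.2) (Finset.ne_of_mem_erase hyz.2.2) hyz.1
        exact ⟨hz, ih.2.tail ⟨hyz.1, ih.1, hz⟩⟩
    exact (key v h2).2
  · intro v hv
    have key : ∀ z, Relation.ReflTransGen (fun u w => G.Adj u w ∧ u ∈ S ∧ w ∈ S) r z → z ∈ S \ A →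
        Relation.ReflTransGen (fun u w => G.Adj u w ∧ u ∈ S \ A ∧ w ∈ S \ A) r z := by
      intro z hz
      induction hz with
      | refl => intro _; exact Relation.ReflTransGen.refl
      | @tail y z _ hyz ih =>
        intro hzB
        by_cases hzr : z = r
        · rw [hzr]
        have hy : y ∈ S \ A := by
          rw [Finset.mem_sdiff]
          exact ⟨hyz.2.1, fun hyA => (Finset.mem_sdiff.1 hzB).2 (hcl y z hyA hyz.2.2 hzr hyz.1)⟩
        exact (ih hy).tail ⟨hyz.1, hy, hzB⟩
    exact key v (hS v (Finset.mem_sdiff.1 hv).1) hv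

open scoped Classical in
/-- defect of the supersolution `x` at `v` in `S`. -/
noncomputable def DD {V : Type} (G : SimpleGraph V) (n : ℕ) (x : V → ℝ) (S : Finset V) (v : V) : ℝ :=
  lam n * x v - ∑ u ∈ S with G.Adj v u, x u

/-- `f` enumerates `S` as an induced path starting at `r`. -/
def PE {V : Type} (G : SimpleGraph V) (S : Finset V) (r : V) (f : ℕ → V) : Prop :=
  f 0 = r ∧ (∀ i < S.card, f i ∈ S) ∧ (∀ i < S.card, ∀ j < S.card, f i = f j → i = j) ∧
    (∀ i < S.card, ∀ j < S.card, (G.Adj (f i) (f j) ↔ i + 1 = j ∨ j + 1 = i))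

open scoped Classical in
theorem DD_anti {V : Type} (G : SimpleGraph V) (n : ℕ) (x : V → ℝ) (hx : ∀ v, 0 < x v)
    {A S : Finset V} (h : A ⊆ S) (v : V) : DD G n x S v ≤ DD G n x A v := by
  unfold DD
  have := Finset.sum_le_sum_of_subset_of_nonneg (f := x) (Finset.filter_subset_filter (G.Adj v) h)
    (fun i _ _ => (hx i).le)
  linarith

open scoped Classical in
theorem DD_anti' {V : Type} (G : SimpleGraph V) (n : ℕ) (x : V → ℝ) (hx : ∀ v, 0 < x v)
    {A S : Finset V} (h : A ⊆ S) (v u : V) (hu : u ∈ S) (huA : u ∉ A) (hvu : G.Adj v u) :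
    DD G n x S v + x u ≤ DD G n x A v := by
  have h1 := DD_anti G n x hx (Finset.insert_subset hu h) v
  have h2 : DD G n x (insert u A) v + x u = DD G n x A v := by
    unfold DD
    rw [Finset.filter_insert, if_pos hvu, Finset.sum_insert (by simp [huA])]
    ring
  linarith

open scoped Classical in
/-- extension of a path by one vertex. -/
theorem ext_step {V : Type} (G : SimpleGraph V) (n : ℕ) (x : V → ℝ) (hx : ∀ v, 0 < x v)
    (A : Finset V) (r a : V) (hr : r ∉ A) (ha : a ∈ A) (hra : G.Adj r a) (hc : A.card + 1 ≤ n)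
    (hA : DD G n x A a ≤ tt n A.card * x a)
    (hA' : tt n A.card * x a ≤ DD G n x A a → ∃ f, PE G A a f)
    (hda : 0 ≤ DD G n x (insert r A) a)
    (heq : tt n (A.card + 1) * x r ≤ DD G n x (insert r A) r) :
    ∃ f, PE G (insert r A) r f := by
  have hc1 : 1 ≤ A.card := Finset.card_pos.2 ⟨a, ha⟩
  have htp := tt_pos n A.card hc1 (by omega)
  have h1 := DD_anti' G n x hx (Finset.subset_insert r A) a r (Finset.mem_insert_self _ _) hr hra.symm
  have hxr : x r ≤ tt n A.card * x a := by linarith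
  have hxr' : 1 / tt n A.card * x r ≤ x a := by
    rw [one_div, inv_mul_le_iff₀ htp]; exact hxr
  rw [tt_succ n _ hc1 hc] at heq
  have hsum : DD G n x (insert r A) r = lam n * x r - ∑ u ∈ A with G.Adj r u, x u := by
    unfold DD
    rw [Finset.filter_insert, if_neg (G.loopless.irrefl r)]
  rw [hsum] at heq
  have hle : ∑ u ∈ A with G.Adj r u, x u ≤ 1 / tt n A.card * x r := by linarith
  have honly : ∀ u ∈ A, G.Adj r u → u = a := by
    intro u hu hru
    by_contra hne
    have : ∑ u ∈ ({a, u} : Finset V), x u ≤ ∑ u ∈ A with G.Adj r u, x u := by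
      apply Finset.sum_le_sum_of_subset_of_nonneg
      · intro z hz
        simp at hz
        rcases hz with rfl | rfl <;> simp [*]
      · intro i _ _; exact (hx i).le
    rw [Finset.sum_pair (Ne.symm hne)] at this
    linarith [hx u]
  have hsa : x a ≤ ∑ u ∈ A with G.Adj r u, x u :=
    Finset.single_le_sum (f := x) (fun i _ => (hx i).le) (by simp [ha, hra])
  have hxa : x a = 1 / tt n A.card * x r := by linarith
  have : tt n A.card * x a = x r := by rw [hxa]; field_simp
  obtain ⟨f, hf0, hfm, hfi, hfa⟩ := hA' (by linarith)
  refine ⟨fun i => Nat.casesOn i r f, rfl, ?_, ?_, ?_⟩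
  all_goals rw [Finset.card_insert_of_notMem hr]
  · intro i hi
    rcases i with _ | i
    · simp
    · exact Finset.mem_insert_of_mem (hfm i (by omega))
  · intro i hi j hj hij
    rcases i with _ | i <;> rcases j with _ | j
    · rfl
    · exact absurd (hfm j (by omega)) (by simp at hij; rwa [← hij])
    · exact absurd (hfm i (by omega)) (by simp at hij; rwa [hij])
    · simp at hij
      rw [hfi i (by omega) j (by omega) hij]
  · have hz : ∀ j < A.card, (G.Adj r (f j) ↔ j = 0) := by
      intro j hj
      constructor
      · intro h
        have := honly _ (hfm j hj) h
        exact hfi j hj 0 (by omega) (this.trans hf0.symm)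
      · rintro rfl; rw [hf0]; exact hra
    intro i hi j hj
    rcases i with _ | i <;> rcases j with _ | j
    · simp
    · change G.Adj r (f j) ↔ _
      rw [hz j (by omega)]; omega
    · change G.Adj (f i) r ↔ _
      rw [G.adj_comm, hz i (by omega)]; omega
    · simp only []
      rw [hfa i (by omega) j (by omega)]; omega

open scoped Classical in
theorem main_ind {V : Type} (G : SimpleGraph V) (n : ℕ) (x : V → ℝ) (hx : ∀ v, 0 < x v) (m : ℕ) :
    ∀ (S : Finset V) (r : V), S.card = m → r ∈ S → Cn G S r → S.card ≤ n →
    (∀ v ∈ S, v ≠ r → 0 ≤ DD G n x S v) →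
    DD G n x S r ≤ tt n S.card * x r ∧
    (S.card < n → tt n S.card * x r ≤ DD G n x S r → ∃ f, PE G S r f) := by
  induction m using Nat.strong_induction_on with
  | _ m ih =>
  intro S r hm hr hcn hSn hsup
  have hpos : 1 ≤ S.card := Finset.card_pos.2 ⟨r, hr⟩
  rcases Nat.lt_or_ge S.card 2 with h2 | h2
  · have h1 : S.card = 1 := by omega
    obtain ⟨r', hr'⟩ := Finset.card_eq_one.1 h1
    have : r' = r := by rw [hr'] at hr; exact (Finset.mem_singleton.1 hr).symm
    subst this
    subst hr'
    constructor
    · rw [h1, tt_one n (by omega)]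
      unfold DD
      rw [Finset.filter_singleton, if_neg (G.loopless.irrefl _)]
      simp
    · intro _ _
      refine ⟨fun _ => r', rfl, by simp, ?_, ?_⟩
      · intro i hi j hj _
        omega
      · intro i hi j hj
        have : ¬ (i + 1 = j ∨ j + 1 = i) := by omega
        simp [this]
  · obtain ⟨A, a, hAS, hrA, haA, hra, hcA, hcB⟩ := Cn_split G S r hr hcn h2
    have hcard : A.card + (S \ A).card = S.card := by
      rw [add_comm]; exact Finset.card_sdiff_add_card_eq_card hAS
    have hrB : r ∈ S \ A := Finset.mem_sdiff.2 ⟨hr, hrA⟩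
    have hA1 : 1 ≤ A.card := Finset.card_pos.2 ⟨a, haA⟩
    have hB1 : 1 ≤ (S \ A).card := Finset.card_pos.2 ⟨r, hrB⟩
    have ihA := ih A.card (by omega) A a rfl haA hcA (by omega) (fun v hv _ =>
      (hsup v (hAS hv) (fun h => hrA (h ▸ hv))).trans (DD_anti G n x hx hAS v))
    have ihB := ih (S \ A).card (by omega) (S \ A) r rfl hrB hcB (by omega) (fun v hv hvr =>
      (hsup v (Finset.mem_sdiff.1 hv).1 hvr).trans (DD_anti G n x hx Finset.sdiff_subset v))
    have hda := hsup a (hAS haA) hra.ne'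
    have htp := tt_pos n A.card hA1 (by omega)
    have h1 := DD_anti' G n x hx hAS a r hr hrA hra.symm
    have hxr : x r ≤ tt n A.card * x a := by linarith [ihA.1]
    have hxr' : 1 / tt n A.card * x r ≤ x a := by
      rw [one_div, inv_mul_le_iff₀ htp]; exact hxr
    have h3 := DD_anti' G n x hx (Finset.sdiff_subset : S \ A ⊆ S) r a (hAS haA) (by simp [haA]) hra
    have h4 : DD G n x S r ≤ (tt n (S \ A).card - 1 / tt n A.card) * x r := by
      linarith [ihB.1]
    refine ⟨?_, ?_⟩
    · refine h4.trans (mul_le_mul_of_nonneg_right ?_ (hx r).le)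
      rw [← hcard]
      exact tt_le n _ _ hA1 hB1 (by omega)
    · intro hlt heq
      have hB : (S \ A).card = 1 := by
        by_contra hne
        have := tt_lt n A.card (S \ A).card hA1 (by omega) (by omega)
        rw [hcard] at this
        have := mul_lt_mul_of_pos_right this (hx r)
        linarith
      have hBr : S \ A = {r} := by
        obtain ⟨r', hr'⟩ := Finset.card_eq_one.1 hB
        rw [hr'] at hrB ⊢
        rw [Finset.mem_singleton.1 hrB]
      have hSi : S = insert r A := by
        rw [← Finset.sdiff_union_of_subset hAS, hBr]; rfl
      have hcS : S.card = A.card + 1 := by omega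
      rw [hcS, hSi] at heq
      rw [hSi] at hda ⊢
      exact ext_step G n x hx A r a hrA haA hra (by omega) ihA.1 (ihA.2 (by omega)) hda heq

open scoped Classical in
theorem adjMat_mulVec {V : Type} [Fintype V] (G : SimpleGraph V) (x : V → ℝ) (v : V) :
    (adjMat G).mulVec x v = ∑ u with G.Adj v u, x u := by
  simp [adjMat, Matrix.mulVec, dotProduct, Finset.sum_filter]

/-- a positive supersolution bounds the eigenvalues -/
theorem eig_le {V : Type} [Fintype V] (G : SimpleGraph V) (c : ℝ) (y : V → ℝ) (hy : ∀ v, 0 < y v)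
    (h : ∀ v, (adjMat G).mulVec y v ≤ c * y v) (t : ℝ) (z : V → ℝ) (hz : z ≠ 0)
    (ht : (adjMat G).mulVec z = t • z) : t ≤ c := by
  classical
  obtain ⟨w, hw⟩ := Function.ne_iff.1 hz
  obtain ⟨i, _, hi⟩ := Finset.exists_max_image Finset.univ (fun v => |z v| / y v) ⟨w, Finset.mem_univ w⟩
  set M := |z i| / y i with hM
  have hMpos : 0 < M := lt_of_lt_of_le (div_pos (abs_pos.2 hw) (hy w)) (hi w (Finset.mem_univ w))
  have hle : ∀ v, |z v| ≤ M * y v := fun v => (div_le_iff₀ (hy v)).1 (hi v (Finset.mem_univ v))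
  have hzi : |z i| = M * y i := by rw [hM, div_mul_cancel₀ _ (hy i).ne']
  have h1 : |t * z i| ≤ M * (c * y i) := by
    have : t * z i = (adjMat G).mulVec z i := by rw [ht]; simp
    rw [this]
    calc |(adjMat G).mulVec z i| ≤ ∑ u with G.Adj i u, |z u| := by
          rw [adjMat_mulVec]; exact Finset.abs_sum_le_sum_abs _ _
      _ ≤ ∑ u with G.Adj i u, M * y u := Finset.sum_le_sum (fun u _ => hle u)
      _ = M * (adjMat G).mulVec y i := by rw [adjMat_mulVec, Finset.mul_sum]
      _ ≤ _ := mul_le_mul_of_nonneg_left (h i) hMpos.le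
  rw [abs_mul, hzi] at h1
  have h2 : |t| ≤ c := by
    have hp : 0 < M * y i := mul_pos hMpos (hy i)
    refine le_of_mul_le_mul_right ?_ hp
    linarith
  exact (le_abs_self t).trans h2

theorem adjMat_herm {V : Type} [Fintype V] (G : SimpleGraph V) : (adjMat G).IsHermitian := by
  ext i j
  by_cases h : G.Adj i j
  · simp [adjMat, h, h.symm]
  · simp [adjMat, h, G.adj_comm j i]

theorem perron {V : Type} [Fintype V] (G : SimpleGraph V) (hG : G.Connected) :
    ∃ x : V → ℝ, (∀ v, 0 < x v) ∧ (adjMat G).mulVec x = specRad G • x := by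
  classical
  have hne := hG.nonempty
  set T := {t : ℝ | ∃ v : V → ℝ, v ≠ 0 ∧ (adjMat G).mulVec v = t • v} with hT
  have hbdd : BddAbove T := by
    refine ⟨Fintype.card V, ?_⟩
    rintro t ⟨z, hz, ht⟩
    refine eig_le G _ (fun _ => 1) (fun _ => one_pos) ?_ t z hz ht
    intro v
    rw [adjMat_mulVec]
    simp
    exact Finset.card_le_univ _
  have hTe : T ⊆ {t | Module.End.HasEigenvalue (Matrix.toLin' (adjMat G)) t} := by
    rintro t ⟨z, hz, ht⟩
    refine Module.End.hasEigenvalue_of_hasEigenvector (x := z) ?_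
    rw [Module.End.hasEigenvector_iff, Module.End.mem_eigenspace_iff]
    exact ⟨by simpa using ht, hz⟩
  have hfin : T.Finite := by
    refine Set.Finite.subset ?_ hTe
    exact Module.End.finite_hasEigenvalue _
  have hnon : T.Nonempty := by
    have hH := adjMat_herm G
    obtain ⟨i⟩ := hne
    refine ⟨hH.eigenvalues i, _, ?_, hH.mulVec_eigenvectorBasis i⟩
    intro h
    apply hH.eigenvectorBasis.orthonormal.ne_zero i
    ext j
    exact congrFun h j
  obtain ⟨z, hz0, hz⟩ : specRad G ∈ T := hnon.csSup_mem hfin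
  set ρ := specRad G with hρ
  have hle : ∀ t ∈ T, t ≤ ρ := fun t ht => le_csSup hbdd ht
  have hBH : (ρ • (1 : Matrix V V ℝ) - adjMat G).IsHermitian := by
    apply Matrix.IsHermitian.sub _ (adjMat_herm G)
    ext i j
    simp [Matrix.one_apply, eq_comm]
  have hpsd : (ρ • (1 : Matrix V V ℝ) - adjMat G).PosSemidef := by
    rw [hBH.posSemidef_iff_eigenvalues_nonneg]
    intro i
    have h := hBH.mulVec_eigenvectorBasis i
    have : ρ - hBH.eigenvalues i ∈ T := by
      refine ⟨(hBH.eigenvectorBasis i).ofLp, ?_, ?_⟩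
      · intro h
        apply hBH.eigenvectorBasis.orthonormal.ne_zero i
        ext j
        exact congrFun h j
      · rw [Matrix.sub_mulVec, Matrix.smul_mulVec, Matrix.one_mulVec] at h
        rw [sub_smul, ← h]
        simp
    have := hle _ this
    simp
    linarith
  set x : V → ℝ := fun v => |z v| with hx
  have hzero : (ρ • (1 : Matrix V V ℝ) - adjMat G).mulVec x = 0 := by
    rw [← hpsd.dotProduct_mulVec_zero_iff]
    apply le_antisymm _ (hpsd.dotProduct_mulVec_nonneg x)
    rw [Matrix.sub_mulVec, Matrix.smul_mulVec, Matrix.one_mulVec, dotProduct_sub, sub_nonpos]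
    have h1 : star x ⬝ᵥ ρ • x = z ⬝ᵥ (adjMat G).mulVec z := by
      rw [hz]
      simp only [dotProduct, hx]
      refine Finset.sum_congr rfl fun i _ => ?_
      simp
      linear_combination ρ * abs_mul_abs_self (z i)
    rw [h1]
    simp only [dotProduct]
    refine Finset.sum_le_sum fun i _ => ?_
    rw [adjMat_mulVec, adjMat_mulVec]
    simp only [hx, Pi.star_apply, star_trivial]
    rw [Finset.mul_sum, Finset.mul_sum]
    refine Finset.sum_le_sum fun j _ => ?_
    rw [← abs_mul]; exact le_abs_self _
  have hAx : (adjMat G).mulVec x = ρ • x := by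
    rw [Matrix.sub_mulVec, Matrix.smul_mulVec, Matrix.one_mulVec, sub_eq_zero] at hzero
    exact hzero.symm
  refine ⟨x, ?_, hAx⟩
  have hx0 : ∀ v, 0 ≤ x v := fun v => abs_nonneg _
  by_contra! hcon
  obtain ⟨v, hv⟩ := hcon
  have hv0 : x v = 0 := le_antisymm hv (hx0 v)
  have hall : ∀ u, x u = 0 := by
    intro u
    have hr := (SimpleGraph.reachable_iff_reflTransGen v u).1 (hG.preconnected v u)
    induction hr with
    | refl => exact hv0
    | @tail b c _ hbc ih =>
      have h := congrFun hAx b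
      rw [adjMat_mulVec] at h
      simp only [Pi.smul_apply, ih, smul_zero] at h
      rw [Finset.sum_eq_zero_iff_of_nonneg (fun i _ => hx0 i)] at h
      exact h c (by simpa using hbc)
  exact hz0 (funext fun u => abs_eq_zero.1 (hall u))

theorem specRad_path (n : ℕ) (hn : 1 ≤ n) : specRad (SimpleGraph.pathGraph n) ≤ lam n := by
  classical
  have hlam : 0 ≤ lam n := by
    unfold lam
    have : 0 ≤ Real.cos (Real.pi / (n+1)) := by
      apply Real.cos_nonneg_of_mem_Icc
      have := Real.pi_pos
      constructor
      · have : 0 ≤ Real.pi / (n+1) := by positivity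
        linarith
      · apply div_le_div_of_nonneg_left this.le two_pos
        have : (1:ℝ) ≤ n := by exact_mod_cast hn
        linarith
    linarith
  refine Real.sSup_le ?_ hlam
  rintro t ⟨z, hz, ht⟩
  set θ := Real.pi / (n+1) with hθ
  refine eig_le _ _ (fun i : Fin n => Real.sin ((i.val + 1 : ℕ) * θ)) ?_ ?_ t z hz ht
  · intro i
    exact sin_pos_m n _ (by omega) (by omega)
  · intro i
    rw [adjMat_mulVec]
    have h1 : ∑ u with (SimpleGraph.pathGraph n).Adj i u, Real.sin ((u.val + 1 : ℕ) * θ)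
        = ∑ k ∈ (Finset.univ.filter (fun u => (SimpleGraph.pathGraph n).Adj i u)).image (fun u : Fin n => u.val + 1), Real.sin (k * θ) := by
      rw [Finset.sum_image]
      intro a _ b _ h
      simp at h
      exact Fin.ext h
    rw [h1]
    calc _ ≤ ∑ k ∈ ({i.val, i.val + 2} : Finset ℕ), Real.sin (k * θ) := by
          apply Finset.sum_le_sum_of_subset_of_nonneg
          · intro k hk
            simp only [Finset.mem_image, Finset.mem_filter, SimpleGraph.pathGraph_adj] at hk
            obtain ⟨u, ⟨_, h⟩, rfl⟩ := hk
            simp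
            omega
          · intro k hk _
            apply sin_nonneg_m
            simp at hk
            omega
      _ = _ := by
          rw [Finset.sum_pair (by omega)]
          unfold lam
          rw [← hθ]
          push_cast
          have e1 : (i.val : ℝ) * θ = (i.val + 1) * θ - θ := by ring
          have e2 : ((i.val : ℝ) + 2) * θ = (i.val + 1) * θ + θ := by ring
          rw [e1, e2, Real.sin_sub, Real.sin_add]
          ring

theorem no3_count (T : ℕ → Prop) [inst : DecidablePred T] (hT : ∀ i, ¬ (T i ∧ T (i+1) ∧ T (i+2))) (m : ℕ) :
    ((Finset.range m).filter T).card ≤ (2 * m + 2) / 3 := by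
  induction m using Nat.strong_induction_on with
  | _ m ih =>
  rcases m with _ | _ | _ | m
  · simp
  · exact (Finset.card_filter_le _ _).trans (by simp)
  · exact (Finset.card_filter_le _ _).trans (by simp)
  · have h := ih m (by omega)
    have h3 := hT m
    rw [Finset.card_filter] at h ⊢
    rw [Finset.sum_range_succ, Finset.sum_range_succ, Finset.sum_range_succ]
    have h4 : (if T m then 1 else 0) + (if T (m+1) then 1 else 0) + (if T (m+2) then 1 else 0) ≤ 2 := by
      split_ifs <;> simp_all
    omega

theorem count_mod (m : ℕ) : ((Finset.range m).filter (fun i => i % 3 ≠ 2)).card = (2 * m + 2) / 3 := by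
  induction m with
  | zero => simp
  | succ m ih =>
    rw [Finset.range_add_one, Finset.filter_insert]
    split_ifs with h
    · rw [Finset.card_insert_of_notMem (by simp), ih]
      have : m = 3 * (m / 3) ∨ m = 3 * (m / 3) + 1 := by omega
      rcases this with h | h <;> omega
    · rw [ih]; omega

theorem diss_path (n : ℕ) : dissNum (SimpleGraph.pathGraph n) = (2 * n + 2) / 3 := by
  classical
  have hcount : ∀ P : ℕ → Prop, ({i : Fin n | P i.val}).ncard = ((Finset.range n).filter P).card := by
    intro P
    rw [← Set.ncard_image_of_injective _ Fin.val_injective, ← Set.ncard_coe_finset]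
    congr 1
    ext k
    simp
    constructor
    · rintro ⟨a, h1, rfl⟩; exact ⟨a.2, h1⟩
    · rintro ⟨h1, h2⟩; exact ⟨⟨k, h1⟩, h2, rfl⟩
  apply IsGreatest.csSup_eq
  constructor
  · refine ⟨{i : Fin n | i.val % 3 ≠ 2}, ?_, ?_⟩
    · intro v hv
      rw [Set.ncard_le_one (Set.toFinite _)]
      rintro a ⟨ha, ha'⟩ b ⟨hb, hb'⟩
      rw [SimpleGraph.pathGraph_adj] at ha' hb'
      simp only [Set.mem_ofPred_eq] at ha hb hv
      apply Fin.ext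
      omega
    · rw [hcount (fun k => k % 3 ≠ 2), ← count_mod]
      congr 1
      ext k
      simp only [Finset.mem_filter]
  · rintro k ⟨S, hS, rfl⟩
    have hSe : S = {i : Fin n | ∃ h : i.val < n, (⟨i.val, h⟩ : Fin n) ∈ S} := by
      ext i; simp
    rw [hSe, hcount (fun k => ∃ h : k < n, (⟨k, h⟩ : Fin n) ∈ S)]
    refine @no3_count _ (fun _ => Classical.propDecidable _) ?_ n
    rintro i ⟨⟨h1, g1⟩, ⟨h2, g2⟩, ⟨h3, g3⟩⟩
    have h := hS _ g2
    rw [Set.ncard_le_one (Set.toFinite _)] at h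
    have := h ⟨i, h1⟩ ⟨g1, by simp [SimpleGraph.pathGraph_adj]⟩ ⟨i+2, h3⟩ ⟨g3, by simp [SimpleGraph.pathGraph_adj]⟩
    simp at this

/-- If a connected graph `G` of order `n` with dissociation number `⌈2n/3⌉ ≥ 2` attains
the minimum spectral radius among all connected graphs of order `n` with dissociation
number `⌈2n/3⌉`, then `G` is isomorphic to the path `P_n`.
(Here `⌈2n/3⌉ = (2n+2)/3` in `ℕ`.) -/
theorem minimum_spectral_radius_diss_eq_ceil_two_thirds
    {n : ℕ} (hn : 0 < n) (hk : 2 ≤ (2 * n + 2) / 3)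
    {V : Type} [Fintype V] (G : SimpleGraph V)
    (hcard : Fintype.card V = n) (hconn : G.Connected)
    (hdiss : dissNum G = (2 * n + 2) / 3)
    (hmin : ∀ H : SimpleGraph (Fin n), H.Connected → dissNum H = (2 * n + 2) / 3 →
      specRad G ≤ specRad H) :
    Nonempty (G ≃g SimpleGraph.pathGraph n) := by
  classical
  have hn2 : 2 ≤ n := by omega
  have hpc : (SimpleGraph.pathGraph n).Connected := by
    obtain ⟨k, rfl⟩ : ∃ k, n = k + 1 := ⟨n - 1, by omega⟩
    exact SimpleGraph.pathGraph_connected k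
  have hρ : specRad G ≤ lam n := (hmin _ hpc (diss_path n)).trans (specRad_path n hn)
  obtain ⟨x, hx, hAx⟩ := perron G hconn
  have hD : ∀ v, 0 ≤ DD G n x Finset.univ v := by
    intro v
    unfold DD
    have h := congrFun hAx v
    rw [adjMat_mulVec] at h
    rw [h, Pi.smul_apply, smul_eq_mul, sub_nonneg]
    exact mul_le_mul_of_nonneg_right hρ (hx v).le
  have hnt : Nontrivial V := Fintype.one_lt_card_iff_nontrivial.1 (by omega)
  obtain ⟨r, hr⟩ := hconn.exists_connected_induce_compl_singleton_of_finite_nontrivial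
  obtain ⟨a, hra⟩ := hconn.preconnected.exists_adj_of_nontrivial r
  set A : Finset V := Finset.univ.erase r with hA
  have haA : a ∈ A := by simp [hA, hra.ne']
  have hrA : r ∉ A := by simp [hA]
  have hins : insert r A = Finset.univ := Finset.insert_erase (Finset.mem_univ r)
  have hAc : A.card + 1 = n := by
    rw [← hcard, ← Finset.card_univ, hA]
    exact Finset.card_erase_add_one (Finset.mem_univ r)
  have hcn : Cn G A a := by
    intro v hv
    have h := (SimpleGraph.reachable_iff_reflTransGen _ _).1 (hr.preconnected ⟨a, by simpa [hA] using haA⟩ ⟨v, by simpa [hA] using hv⟩)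
    refine Relation.ReflTransGen.lift Subtype.val ?_ _ _ h
    rintro ⟨u, hu⟩ ⟨w, hw⟩ huw
    refine ⟨by simpa using huw, ?_, ?_⟩
    · simpa [hA] using hu
    · simpa [hA] using hw
  have hmain := main_ind G n x hx A.card A a rfl haA hcn (by omega)
    (fun v _ _ => (hD v).trans (DD_anti G n x hx (Finset.subset_univ _) v))
  obtain ⟨f, hf0, hfm, hfi, hfa⟩ := ext_step G n x hx A r a hrA haA hra (by omega) hmain.1 (hmain.2 (by omega))
    (by rw [hins]; exact hD a) (by rw [hins, hAc, tt_n, zero_mul]; exact hD r)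
  rw [hins, Finset.card_univ, hcard] at hfi hfa
  have hbij : Function.Bijective (fun i : Fin n => f i.val) := by
    rw [Fintype.bijective_iff_injective_and_card]
    refine ⟨fun i j h => Fin.ext (hfi i i.2 j j.2 h), by simp [hcard]⟩
  refine ⟨(RelIso.symm ⟨Equiv.ofBijective _ hbij, ?_⟩ : G ≃g SimpleGraph.pathGraph n)⟩
  intro i j
  rw [SimpleGraph.pathGraph_adj]
  exact hfa i i.2 j j.2
end

section
/- Let n be a positive integer with n not divisible by 3 and ⌊2n/3⌋ ≥ 2. If G is a connected simple graph on n vertices with dissociation number ⌊2n/3⌋ that attains the minimum spectral radius among all connected simple graphs on n vertices with dissociation number ⌊2n/3⌋, then G is isomorphic to the cycle C_n. -/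
namespace DissAux
open Finset

lemma dissNum_bdd {V : Type} [Fintype V] (G : SimpleGraph V) :
    BddAbove {k | ∃ S : Set V, IsDissocSet G S ∧ S.ncard = k} := by
  refine ⟨Fintype.card V, ?_⟩
  rintro k ⟨S, -, rfl⟩
  rw [← Nat.card_eq_fintype_card]
  exact Set.ncard_le_card S

lemma le_dissNum {V : Type} [Fintype V] (G : SimpleGraph V) (S : Set V) (h : IsDissocSet G S) :
    S.ncard ≤ dissNum G := le_csSup (dissNum_bdd G) ⟨S, h, rfl⟩

/-- A convenient criterion. -/
lemma isDissoc_of {V : Type} [Fintype V] (G : SimpleGraph V) (S : Set V)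
    (h : ∀ v ∈ S, ∀ a ∈ S, ∀ b ∈ S, G.Adj v a → G.Adj v b → a = b) : IsDissocSet G S := by
  intro v hv
  rw [Set.ncard_le_one_iff]
  rintro a b ⟨ha, ha'⟩ ⟨hb, hb'⟩
  exact h v hv a ha b hb ha' hb'

lemma of_isDissoc {V : Type} [Fintype V] (G : SimpleGraph V) (S : Set V) (hS : IsDissocSet G S) :
    ∀ v ∈ S, ∀ a ∈ S, ∀ b ∈ S, G.Adj v a → G.Adj v b → a = b := by
  intro v hv a ha b hb h1 h2
  have := hS v hv
  rw [Set.ncard_le_one_iff] at this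
  exact this ⟨ha, h1⟩ ⟨hb, h2⟩

lemma forest_bound {V : Type} [Fintype V] [DecidableEq V] (G : SimpleGraph V)
    (p : V → V) (d : V → ℕ) (k : ℕ) : ∀ W : Finset V, W.card = k →
    (∀ u ∈ W, ∀ v ∈ W, G.Adj u v → (p u = v ∧ d u = d v + 1) ∨ (p v = u ∧ d v = d u + 1)) →
    ∃ S ⊆ W, (∀ v ∈ S, ∀ a ∈ S, ∀ b ∈ S, G.Adj v a → G.Adj v b → a = b) ∧
      2 * W.card ≤ 3 * S.card := by
  classical
  induction k using Nat.strong_induction_on with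
  | _ k ih =>
  intro W hk hW
  rcases W.eq_empty_or_nonempty with rfl | hne
  · exact ⟨∅, by simp, by simp, by simp⟩
  -- general step: remove R from W, add T to S
  have step : ∀ R T : Finset V, R ⊆ W → R.Nonempty → T ⊆ R →
      2 * R.card ≤ 3 * T.card →
      (∀ v ∈ T, ∀ a ∈ W, G.Adj v a → a ∈ R) →
      (∀ v ∈ T, ∀ a ∈ T, ∀ b ∈ T, G.Adj v a → G.Adj v b → a = b) →
      ∃ S ⊆ W, (∀ v ∈ S, ∀ a ∈ S, ∀ b ∈ S, G.Adj v a → G.Adj v b → a = b) ∧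
      2 * W.card ≤ 3 * S.card := by
    intro R T hRW hR hTR hc hout hT
    have hcard := card_sdiff_add_card_eq_card hRW
    have hRpos := hR.card_pos
    obtain ⟨S, hS, hS1, hS2⟩ := ih (W \ R).card (by omega) (W \ R) rfl
      (fun u hu v hv => hW u (mem_sdiff.1 hu).1 v (mem_sdiff.1 hv).1)
    have hdisj : Disjoint S T := by
      rw [disjoint_left]
      intro a ha hb
      exact (mem_sdiff.1 (hS ha)).2 (hTR hb)
    have hST : ∀ a ∈ T, ∀ b ∈ S, ¬ G.Adj a b := fun a ha b hb hab =>
      (mem_sdiff.1 (hS hb)).2 (hout a ha b (mem_sdiff.1 (hS hb)).1 hab)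
    refine ⟨S ∪ T, ?_, ?_, ?_⟩
    · exact union_subset (hS.trans sdiff_subset) (hTR.trans hRW)
    · intro v hv a ha b hb h1 h2
      rw [mem_union] at hv ha hb
      have h1' := h1.symm
      have h2' := h2.symm
      rcases hv with hv | hv
      · have ha' : a ∈ S := ha.resolve_right fun h => hST _ h _ hv h1'
        have hb' : b ∈ S := hb.resolve_right fun h => hST _ h _ hv h2'
        exact hS1 v hv a ha' b hb' h1 h2
      · have ha' : a ∈ T := ha.resolve_left fun h => hST _ hv _ h h1
        have hb' : b ∈ T := hb.resolve_left fun h => hST _ hv _ h h2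
        exact hT v hv a ha' b hb' h1 h2
    · rw [card_union_of_disjoint hdisj]
      omega
  obtain ⟨x, hx, hmax⟩ := exists_max_image W d hne
  -- a vertex of maximal depth has only its parent as a neighbour
  have leaf : ∀ y ∈ W, d y = d x → ∀ a ∈ W, G.Adj y a → a = p y ∧ d y = d a + 1 := by
    intro y hy hyx a ha hya
    rcases hW y hy a ha hya with h | h
    · exact ⟨h.1.symm, h.2⟩
    · have := hmax a ha; omega
  by_cases hiso : ∀ a ∈ W, ¬ G.Adj x a
  · refine step {x} {x} (by simpa) (by simp) (by simp) (by simp) ?_ ?_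
    · intro v hv a ha hva
      rw [mem_singleton] at hv
      subst hv
      exact absurd hva (hiso a ha)
    · simp
  push Not at hiso
  obtain ⟨q, hq, hxq⟩ := hiso
  obtain ⟨hqp, hdq⟩ := leaf x hx rfl q hq hxq
  set C := W.filter (fun u => G.Adj q u ∧ p u = q ∧ d u = d x) with hC
  have hxC : x ∈ C := by
    rw [hC, mem_filter]; exact ⟨hx, hxq.symm, hqp.symm, rfl⟩
  have hqC : q ∉ C := by
    intro h; rw [hC, mem_filter] at h; exact G.loopless.irrefl _ h.2.1
  have hCleaf : ∀ v ∈ C, ∀ a ∈ W, G.Adj v a → a = q := by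
    intro v hv a ha hva
    rw [hC, mem_filter] at hv
    rw [(leaf v hv.1 hv.2.2.2 a ha hva).1, hv.2.2.1]
  by_cases hC2 : 2 ≤ C.card
  · refine step (insert q C) C ?_ ⟨q, by simp⟩ (by simp) ?_ ?_ ?_
    · exact insert_subset hq (filter_subset _ _)
    · rw [card_insert_of_notMem hqC]; omega
    · intro v hv a ha hva
      rw [hCleaf v hv a ha hva]; simp
    · intro v hv a ha b hb h1 h2
      exfalso
      apply hqC
      rw [← hCleaf v hv a (mem_filter.1 ha).1 h1]; exact ha
  have hC1 : ∀ u ∈ C, u = x := by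
    have : C.card ≤ 1 := by omega
    rw [card_le_one] at this
    exact fun u hu => this u hu x hxC
  -- neighbours of q
  have hnq : ∀ a ∈ W, G.Adj q a → a = x ∨ a = p q := by
    intro a ha hqa
    rcases hW q hq a ha hqa with h | h
    · exact Or.inr h.1.symm
    · left; apply hC1
      rw [hC, mem_filter]
      exact ⟨ha, hqa, h.1, by omega⟩
  have hT : ∀ v ∈ ({x, q} : Finset V), ∀ a ∈ ({x, q} : Finset V), ∀ b ∈ ({x, q} : Finset V),
      G.Adj v a → G.Adj v b → a = b := by
    intro v hv a ha b hb h1 h2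
    have := h1.ne
    have := h2.ne
    simp only [mem_insert, mem_singleton] at hv ha hb
    grind
  have hxq' := hxq.ne
  have hout1 : ∀ v ∈ ({x, q} : Finset V), ∀ a ∈ W, G.Adj v a → a = x ∨ a = q ∨ (a = p q) := by
    intro v hv a ha hva
    simp only [mem_insert, mem_singleton] at hv
    rcases hv with rfl | rfl
    · exact Or.inr (Or.inl (hCleaf _ hxC a ha hva))
    · have := hnq a ha hva; tauto
  by_cases hpq : p q ∈ W
  · refine step (insert (p q) {x, q}) {x, q} ?_ (by simp) (by simp) ?_ ?_ hT
    · intro y hy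
      simp only [mem_insert, mem_singleton] at hy
      rcases hy with rfl | rfl | rfl <;> assumption
    · rw [card_pair hxq']
      have := card_insert_le (p q) {x, q}
      rw [card_pair hxq'] at this
      omega
    · intro v hv a ha hva
      have := hout1 v hv a ha hva
      simp only [mem_insert, mem_singleton]; tauto
  · refine step {x, q} {x, q} ?_ (by simp) (by simp) (by omega) ?_ hT
    · intro y hy
      simp only [mem_insert, mem_singleton] at hy
      rcases hy with rfl | rfl <;> assumption
    · intro v hv a ha hva
      have := hout1 v hv a ha hva
      simp only [mem_insert, mem_singleton]
      rcases this with h | h | h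
      · tauto
      · tauto
      · subst h; exact absurd ha hpq

lemma tree_bound {V : Type} [Fintype V] (G : SimpleGraph V) (hG : G.IsTree) :
    2 * Fintype.card V ≤ 3 * dissNum G := by
  classical
  obtain ⟨r⟩ := hG.connected.nonempty
  choose P hP using fun v => (hG.existsUnique_path v r).exists
  obtain ⟨S, -, hS, hc⟩ := forest_bound G (fun v => (P v).snd) (fun v => G.dist r v) _ univ rfl (by
    have key : ∀ u v, G.Adj u v → G.dist r u = G.dist r v + 1 → (P u).snd = v := by
      intro u v h hd
      symm
      apply hG.isAcyclic.eq_snd_of_adj_start (hP u) h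
      -- v lies on the path from u to r
      have hnot : u ∉ (P v).support := by
        intro hu
        obtain ⟨q, hq, hql⟩ := hG.connected.exists_path_of_dist v r
        have e : P v = q := (hG.existsUnique_path v r).unique (hP v) hq
        have hl : (P v).length = G.dist v r := by rw [e, hql]
        have h1 : ((P v).dropUntil u hu).length ≤ (P v).length :=
          SimpleGraph.Walk.length_dropUntil_le_length _ hu
        have h2 := SimpleGraph.dist_le ((P v).dropUntil u hu)
        rw [SimpleGraph.dist_comm (v := u), SimpleGraph.dist_comm (v := v)] at hd
        omega
      have e : P u = SimpleGraph.Walk.cons h (P v) :=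
        (hG.existsUnique_path u r).unique (hP u) ((hP v).cons hnot)
      rw [e]; simp
    intro u _ v _ h
    rcases hG.dist_eq_dist_add_one_of_adj r h with h1 | h1
    · exact Or.inl ⟨key u v h h1, h1⟩
    · exact Or.inr ⟨key v u h.symm h1, h1⟩)
  have := le_dissNum G (S : Set V) (isDissoc_of G S (by simpa using hS))
  rw [Set.ncard_coe_finset] at this
  rw [card_univ] at hc
  omega

lemma cycle_diss (n : ℕ) (hn : 3 ≤ n) (hmod : ¬ 3 ∣ n) :
    dissNum (SimpleGraph.cycleGraph n) = 2 * n / 3 := by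
  classical
  obtain ⟨m, rfl⟩ : ∃ m, n = m + 3 := ⟨n - 3, by omega⟩
  apply le_antisymm
  · have hne : {k | ∃ S : Set (Fin (m+3)), IsDissocSet (SimpleGraph.cycleGraph (m+3)) S ∧
        S.ncard = k}.Nonempty := ⟨0, ∅, by intro v hv; simp at hv, by simp⟩
    apply csSup_le hne
    rintro k ⟨S, hS, rfl⟩
    have hS' := of_isDissoc _ S hS
    have e : S.ncard = ∑ i : Fin (m+3), if i ∈ S then 1 else 0 := by
      rw [← Finset.card_filter, ← Set.ncard_coe_finset]; congr; ext; simp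
    have e1 : S.ncard = ∑ i : Fin (m+3), if i + 1 ∈ S then 1 else 0 := by
      rw [e]; exact (Equiv.sum_comp (Equiv.addRight (1 : Fin (m+3))) (fun i => if i ∈ S then 1 else 0)).symm
    have e2 : S.ncard = ∑ i : Fin (m+3), if i - 1 ∈ S then 1 else 0 := by
      rw [e]; exact (Equiv.sum_comp (Equiv.subRight (1 : Fin (m+3))) (fun i => if i ∈ S then 1 else 0)).symm
    have h3 : 3 * S.ncard ≤ 2 * (m + 3) := by
      have : 3 * S.ncard = ∑ i : Fin (m+3), ((if i ∈ S then 1 else 0) + (if i + 1 ∈ S then 1 else 0)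
          + (if i - 1 ∈ S then 1 else 0)) := by
        rw [sum_add_distrib, sum_add_distrib, ← e, ← e1, ← e2]; ring
      rw [this]
      have : ∑ i : Fin (m+3), 2 = 2 * (m+3) := by simp; ring
      rw [← this]
      apply sum_le_sum
      intro i _
      by_contra hcon
      have h0 : i ∈ S ∧ i + 1 ∈ S ∧ i - 1 ∈ S := by
        refine ⟨?_, ?_, ?_⟩ <;> by_contra hh <;> apply hcon <;> rw [if_neg hh] <;> split_ifs <;> omega
      have := hS' i h0.1 (i+1) h0.2.1 (i-1) h0.2.2 (by rw [SimpleGraph.cycleGraph_adj]; simp)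
        (by rw [SimpleGraph.cycleGraph_adj]; simp)
      have hd := SimpleGraph.cycleGraph_degree_two_le (n := m + 1) (v := i)
      rw [SimpleGraph.cycleGraph_degree_three_le] at hd
      have hd' : 2 = Finset.card ({i - 1, i + 1} : Finset (Fin (m + 3))) := hd
      rw [this] at hd'
      simp at hd'
    omega
  · obtain ⟨S, -, hS, hc⟩ := forest_bound (SimpleGraph.cycleGraph (m+3)) (fun i => i - 1)
      (fun i => i.val) _ (univ.erase (Fin.last (m+2))) rfl (by
        have key : ∀ u v : Fin (m+3), u ≠ Fin.last (m+2) → v ≠ Fin.last (m+2) → u - v = 1 →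
            u - 1 = v ∧ u.val = v.val + 1 := by
          intro u v hu hv h
          have huv : u = v + 1 := by rw [← h]; abel
          refine ⟨by rw [huv]; abel, ?_⟩
          rw [huv, Fin.val_add_one, if_neg hv]
        intro u hu v hv h
        have hu := (mem_erase.1 hu).1
        have hv := (mem_erase.1 hv).1
        rw [SimpleGraph.cycleGraph_adj] at h
        rcases h with h | h
        · exact Or.inl (key u v hu hv h)
        · exact Or.inr (key v u hv hu h))
    have := le_dissNum (SimpleGraph.cycleGraph (m+3)) (S : Set _) (isDissoc_of (SimpleGraph.cycleGraph (m+3)) (S : Set _) (by simpa using hS))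
    rw [Set.ncard_coe_finset] at this
    rw [card_erase_of_mem (mem_univ _), card_univ, Fintype.card_fin] at hc
    omega

end DissAux

namespace DissAux
open Finset

lemma adjMat_mulVec {V : Type} [Fintype V] [DecidableEq V] (G : SimpleGraph V) [DecidableRel G.Adj]
    (v : V → ℝ) (i : V) : (adjMat G).mulVec v i = ∑ j ∈ G.neighborFinset i, v j := by
  simp only [adjMat, Matrix.mulVec, dotProduct, Matrix.of_apply, ite_mul, one_mul, zero_mul]
  rw [← sum_filter]
  apply sum_congr _ (fun _ _ => rfl)
  ext; simp

lemma eig_le {V : Type} [Fintype V] [DecidableEq V] (G : SimpleGraph V) [DecidableRel G.Adj]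
    (D : ℕ) (hD : ∀ v, G.degree v ≤ D) (t : ℝ) (v : V → ℝ) (hv : v ≠ 0)
    (h : (adjMat G).mulVec v = t • v) : t ≤ D := by
  obtain ⟨j, hj⟩ := Function.ne_iff.1 hv
  obtain ⟨i, -, hi⟩ := exists_max_image univ (fun i => |v i|) ⟨j, mem_univ j⟩
  have hpos : 0 < |v i| := lt_of_lt_of_le (abs_pos.2 hj) (hi j (mem_univ j))
  have h1 : |t| * |v i| ≤ D * |v i| := by
    have := congrFun h i
    rw [adjMat_mulVec] at this
    simp only [Pi.smul_apply, smul_eq_mul] at this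
    rw [← abs_mul, ← this]
    calc _ ≤ ∑ j ∈ G.neighborFinset i, |v j| := abs_sum_le_sum_abs _ _
      _ ≤ ∑ j ∈ G.neighborFinset i, |v i| := sum_le_sum fun j _ => hi j (mem_univ j)
      _ = G.degree i * |v i| := by simp
      _ ≤ _ := by gcongr; exact hD i
  exact (le_abs_self t).trans (le_of_mul_le_mul_right h1 hpos)

lemma specRad_le {V : Type} [Fintype V] [DecidableEq V] (G : SimpleGraph V) [DecidableRel G.Adj]
    (D : ℕ) (hD : ∀ v, G.degree v ≤ D) : specRad G ≤ D := by
  apply Real.sSup_le _ (Nat.cast_nonneg D)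
  rintro t ⟨v, hv, h⟩
  exact eig_le G D hD t v hv h

lemma le_specRad {V : Type} [Fintype V] (G : SimpleGraph V) (t : ℝ) (v : V → ℝ) (hv : v ≠ 0)
    (h : (adjMat G).mulVec v = t • v) : t ≤ specRad G := by
  classical
  refine le_csSup ?_ ⟨v, hv, h⟩
  refine ⟨(Fintype.card V : ℕ), ?_⟩
  rintro t ⟨v, hv, h⟩
  exact eig_le G _ (fun v => (G.degree_lt_card_verts v).le) t v hv h

lemma psd {V : Type} [Fintype V] [DecidableEq V] (G : SimpleGraph V) (c : ℝ) (hc : specRad G ≤ c) :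
    (c • (1 : Matrix V V ℝ) - adjMat G).PosSemidef := by
  have hH : (c • (1 : Matrix V V ℝ) - adjMat G).IsHermitian := by
    ext i j
    simp only [adjMat, Matrix.conjTranspose_apply, Matrix.sub_apply, Matrix.smul_apply,
      Matrix.one_apply, Matrix.of_apply, star_trivial, eq_comm (a := j)]
    congr 1
    by_cases h : G.Adj i j
    · rw [if_pos h, if_pos h.symm]
    · rw [if_neg h, if_neg fun h' => h h'.symm]
  rw [hH.posSemidef_iff_eigenvalues_nonneg]
  intro j
  have h := hH.mulVec_eigenvectorBasis j
  set w : V → ℝ := ⇑(hH.eigenvectorBasis j) with hw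
  have hw0 : w ≠ 0 := by
    have := hH.eigenvectorBasis.orthonormal.ne_zero j
    intro h0
    apply this
    ext i
    exact congrFun h0 i
  rw [Matrix.sub_mulVec, Matrix.smul_mulVec, Matrix.one_mulVec] at h
  have h2 : (adjMat G).mulVec w = (c - hH.eigenvalues j) • w := by
    rw [sub_smul, ← h]; simp
  have := le_specRad G _ w hw0 h2
  show 0 ≤ hH.eigenvalues j
  linarith

lemma regular {V : Type} [Fintype V] [DecidableEq V] (G : SimpleGraph V) [DecidableRel G.Adj]
    (hr : specRad G ≤ 2)
    (hm : Fintype.card V ≤ #G.edgeFinset) : ∀ v, G.degree v = 2 := by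
  have hp := psd G 2 hr
  set B := (2 : ℝ) • (1 : Matrix V V ℝ) - adjMat G with hB
  have hB1 : ∀ i, B.mulVec (fun _ => 1) i = 2 - G.degree i := by
    intro i
    rw [hB, Matrix.sub_mulVec, Matrix.smul_mulVec, Matrix.one_mulVec, Pi.sub_apply, adjMat_mulVec]
    simp
  have hsum : star (fun _ => 1 : V → ℝ) ⬝ᵥ B.mulVec (fun _ => 1) ≤ 0 := by
    have : star (fun _ => 1 : V → ℝ) ⬝ᵥ B.mulVec (fun _ => 1) = ∑ i, (2 - (G.degree i : ℝ)) := by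
      simp only [dotProduct, hB1]; simp
    rw [this, sum_sub_distrib]
    have h2 := G.sum_degrees_eq_twice_card_edges
    have h3 : (∑ i, (G.degree i : ℝ)) = 2 * #G.edgeFinset := by exact_mod_cast h2
    rw [h3]
    have : (Fintype.card V : ℝ) ≤ #G.edgeFinset := by exact_mod_cast hm
    simp
    linarith
  have h0 := (hp.dotProduct_mulVec_zero_iff _).1 (le_antisymm hsum (hp.dotProduct_mulVec_nonneg _))
  intro v
  have := congrFun h0 v
  rw [hB1] at this
  have h4 : (G.degree v : ℝ) = 2 := by simp at this; linarith
  exact_mod_cast h4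

lemma iso_cycle {V : Type} [Fintype V] [DecidableEq V] (G : SimpleGraph V) [DecidableRel G.Adj]
    (hc : G.Connected) (hac : ¬ G.IsAcyclic) (hd : ∀ v, G.degree v = 2) :
    Nonempty (G ≃g SimpleGraph.cycleGraph (Fintype.card V)) := by
  rw [SimpleGraph.isAcyclic_iff_free_cycleGraph] at hac
  push Not at hac
  obtain ⟨m, hm, hf⟩ := hac
  obtain ⟨f⟩ := hf
  have hinj : Function.Injective f := f.injective
  obtain ⟨k, rfl⟩ : ∃ k, m = k + 3 := ⟨m - 3, by omega⟩
  have hnb : ∀ i w, G.Adj (f i) w → ∃ j, (SimpleGraph.cycleGraph (k+3)).Adj i j ∧ f j = w := by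
    intro i w hw
    have hsub : ((SimpleGraph.cycleGraph (k+3)).neighborFinset i).image f ⊆
        G.neighborFinset (f i) := by
      intro y hy
      obtain ⟨j, hj, rfl⟩ := mem_image.1 hy
      rw [SimpleGraph.mem_neighborFinset] at hj ⊢
      exact f.toHom.map_adj hj
    have heq := eq_of_subset_of_card_le hsub (by
      rw [card_image_of_injective _ hinj, SimpleGraph.card_neighborFinset_eq_degree,
        SimpleGraph.card_neighborFinset_eq_degree, hd, SimpleGraph.cycleGraph_degree_three_le])
    have : w ∈ G.neighborFinset (f i) := by simpa using hw
    rw [← heq] at this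
    obtain ⟨j, hj, rfl⟩ := mem_image.1 this
    exact ⟨j, by simpa using hj, rfl⟩
  have hsurj : Function.Surjective f := by
    have : ∀ a b, G.Walk a b → a ∈ Set.range f → b ∈ Set.range f := by
      intro a b w
      induction w with
      | nil => exact id
      | cons h _ ih =>
        rintro ⟨i, rfl⟩
        obtain ⟨j, -, hj⟩ := hnb i _ h
        exact ih ⟨j, hj⟩
    intro y
    obtain ⟨w⟩ := hc.preconnected (f 0) y
    exact this _ _ w ⟨0, rfl⟩
  have hcard : Fintype.card V = k + 3 := by
    rw [← Fintype.card_of_bijective ⟨hinj, hsurj⟩, Fintype.card_fin]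
  rw [hcard]
  refine ⟨SimpleGraph.Iso.symm ⟨Equiv.ofBijective f ⟨hinj, hsurj⟩, ?_⟩⟩
  intro a b
  constructor
  · intro h
    obtain ⟨j, hj, hj'⟩ := hnb a _ h
    rw [← hinj hj']; exact hj
  · intro h
    exact f.toHom.map_adj h

end DissAux

theorem minimum_spectral_radius_diss_eq_floor_two_thirds
    {n : ℕ} (hn : 0 < n) (hmod : ¬ (3 ∣ n)) (hk : 2 ≤ 2 * n / 3)
    {V : Type} [Fintype V] (G : SimpleGraph V)
    (hcard : Fintype.card V = n) (hconn : G.Connected)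
    (hdiss : dissNum G = 2 * n / 3)
    (hmin : ∀ H : SimpleGraph (Fin n), H.Connected → dissNum H = 2 * n / 3 →
      specRad G ≤ specRad H) :
    Nonempty (G ≃g SimpleGraph.cycleGraph n) := by
  classical
  have hn3 : 3 ≤ n := by omega
  have hr : specRad G ≤ 2 := by
    obtain ⟨m, rfl⟩ : ∃ m, n = m + 3 := ⟨n - 3, by omega⟩
    refine (hmin _ SimpleGraph.cycleGraph_connected (DissAux.cycle_diss _ hn3 hmod)).trans ?_
    have := DissAux.specRad_le (SimpleGraph.cycleGraph (m+3)) 2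
      (fun v => SimpleGraph.cycleGraph_degree_three_le.le)
    exact_mod_cast this
  have hnt : ¬ G.IsTree := by
    intro h
    have := DissAux.tree_bound G h
    omega
  have hac : ¬ G.IsAcyclic := fun h => hnt ⟨hconn, h⟩
  have hm : Fintype.card V ≤ G.edgeFinset.card := by
    have h1 := hconn.card_vert_le_card_edgeSet_add_one
    have h2 : ¬ (Nat.card G.edgeSet + 1 = Nat.card V) := fun h =>
      hnt (SimpleGraph.isTree_iff_connected_and_card.2 ⟨hconn, h⟩)
    rw [Nat.card_eq_fintype_card, Nat.card_eq_fintype_card,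
      ← SimpleGraph.edgeFinset_card] at h1 h2
    omega
  subst hcard
  exact DissAux.iso_cycle G hconn hac (DissAux.regular G hr hm)
end

section
/- Let s and q be integers with s + 1 ≥ q ≥ 2. Then ρ(H(2s+2q+4)) ≤ ρ(G_3(0,s,0,q)) < ρ(G_3(1,s,1,q−1)), and equality holds in the left inequality if and only if G_3(0,s,0,q) is isomorphic to H(2s+2q+4). -/
set_option linter.all false
set_option linter.unusedSimpArgs false

/-- Any eigenvalue with a positive eigenvector is the spectral radius. -/
theorem specRad_eq_of_pos {V : Type} [Fintype V] [Nonempty V] (G : SimpleGraph V) (w : V → ℝ)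
    (x : ℝ) (hw : ∀ i, 0 < w i) (h : (adjMat G).mulVec w = x • w) : specRad G = x := by
  classical
  have hsymm : ∀ i j, adjMat G i j = adjMat G j i := by
    intro i j; simp [adjMat, G.adj_comm i j]
  have hnn : ∀ i j, 0 ≤ adjMat G i j := by
    intro i j
    simp only [adjMat, Matrix.of_apply]
    split_ifs <;> norm_num
  have hx : ∀ i, ∑ j, adjMat G i j * w j = x * w i := by
    intro i
    have := congrFun h i
    simpa [Matrix.mulVec, dotProduct] using this
  apply IsGreatest.csSup_eq
  refine ⟨⟨w, ?_, h⟩, ?_⟩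
  · intro h0
    obtain ⟨i⟩ := ‹Nonempty V›
    have := hw i
    simp [h0] at this
  · rintro t ⟨v, hv, hvt⟩
    have ht : ∀ i, ∑ j, adjMat G i j * v j = t * v i := by
      intro i
      have := congrFun hvt i
      simpa [Matrix.mulVec, dotProduct] using this
    have h1 : ∀ i, t * |v i| ≤ ∑ j, adjMat G i j * |v j| := by
      intro i
      calc t * |v i| ≤ |t * v i| := by
            rw [abs_mul]; exact mul_le_mul_of_nonneg_right (le_abs_self t) (abs_nonneg _)
        _ = |∑ j, adjMat G i j * v j| := by rw [ht]
        _ ≤ ∑ j, |adjMat G i j * v j| := Finset.abs_sum_le_sum_abs _ _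
        _ = _ := by
            refine Finset.sum_congr rfl fun j _ => ?_
            rw [abs_mul, abs_of_nonneg (hnn i j)]
    have h2 : t * ∑ i, w i * |v i| ≤ x * ∑ i, w i * |v i| := by
      calc t * ∑ i, w i * |v i| = ∑ i, w i * (t * |v i|) := by
            rw [Finset.mul_sum]; exact Finset.sum_congr rfl fun i _ => by ring
        _ ≤ ∑ i, w i * ∑ j, adjMat G i j * |v j| :=
            Finset.sum_le_sum fun i _ => mul_le_mul_of_nonneg_left (h1 i) (hw i).le
        _ = ∑ i, ∑ j, w i * (adjMat G i j * |v j|) := by simp_rw [Finset.mul_sum]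
        _ = ∑ j, ∑ i, w i * (adjMat G i j * |v j|) := Finset.sum_comm
        _ = ∑ j, (∑ i, adjMat G j i * w i) * |v j| := by
            refine Finset.sum_congr rfl fun j _ => ?_
            rw [Finset.sum_mul]
            refine Finset.sum_congr rfl fun i _ => ?_
            rw [hsymm i j]; ring
        _ = x * ∑ i, w i * |v i| := by
            rw [Finset.mul_sum]
            refine Finset.sum_congr rfl fun j _ => ?_
            rw [hx]; ring
    have h3 : 0 < ∑ i, w i * |v i| := by
      obtain ⟨i, hi⟩ := Function.ne_iff.mp hv
      exact Finset.sum_pos' (fun j _ => mul_nonneg (hw j).le (abs_nonneg _))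
        ⟨i, Finset.mem_univ i, mul_pos (hw i) (abs_pos.mpr hi)⟩
    exact le_of_mul_le_mul_right h2 h3

/-- The spectral radius is an isomorphism invariant. -/
theorem specRad_congr {V W : Type} [Fintype V] [Fintype W] (G : SimpleGraph V)
    (H : SimpleGraph W) (e : G ≃g H) : specRad G = specRad H := by
  have key : ∀ {V W : Type} [Fintype V] [Fintype W] (G : SimpleGraph V)
      (H : SimpleGraph W) (e : G ≃g H) (t : ℝ),
      (∃ v : V → ℝ, v ≠ 0 ∧ (adjMat G).mulVec v = t • v) →
      (∃ v : W → ℝ, v ≠ 0 ∧ (adjMat H).mulVec v = t • v) := by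
    intro V W _ _ G H e t ⟨v, hv, h⟩
    refine ⟨v ∘ e.symm, ?_, ?_⟩
    · intro h0
      apply hv
      funext i
      have := congrFun h0 (e i)
      simpa using this
    · funext i
      have := congrFun h (e.symm i)
      simp only [Matrix.mulVec, dotProduct, Pi.smul_apply, Function.comp] at this ⊢
      rw [← this]
      refine (Fintype.sum_equiv e.toEquiv _ _ ?_).symm
      intro j
      have : G.Adj (e.symm i) j ↔ H.Adj i (e j) := by
        rw [← e.map_adj_iff]; simp
      simp [adjMat]
      by_cases hh : H.Adj i (e j)
      · rw [if_pos hh, if_pos (this.2 hh)]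
      · rw [if_neg hh, if_neg (fun h' => hh (this.1 h'))]
  unfold specRad
  congr 1
  ext t
  exact ⟨key G H e t, key H G e.symm t⟩

noncomputable def al (r s : ℕ) (y : ℝ) : ℝ := y - r - s * (y / (y - 1))

def IsRt (r s p q : ℕ) (y : ℝ) : Prop :=
  1 < y ∧ 1 < al r s y ∧ 1 < al p q y ∧
    y * (al r s y - 1) * (al p q y - 1) = al r s y * al p q y

noncomputable def vec (r s p q : ℕ) (x a b c d : ℝ) :
    Fin 4 ⊕ ((Fin r ⊕ Fin s × Fin 2) ⊕ (Fin p ⊕ Fin q × Fin 2)) → ℝ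
  | .inl i => ![a, b, c, d] i
  | .inr (.inl (.inl _)) => a / x
  | .inr (.inl (.inr (_, k))) => ![a * x / (x ^ 2 - 1), a / (x ^ 2 - 1)] k
  | .inr (.inr (.inl _)) => d / x
  | .inr (.inr (.inr (_, k))) => ![d * x / (x ^ 2 - 1), d / (x ^ 2 - 1)] k

theorem path_adj : ∀ a b : Fin 4,
    (∃ i : Fin 3, a = i.castSucc ∧ b = i.succ) ↔ a.val + 1 = b.val := by decide

theorem vec_eig (r s p q : ℕ) (x a b c d : ℝ) (hx : 1 < x)
    (h1 : x * a = b + r * (a / x) + s * (a * x / (x ^ 2 - 1)))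
    (h2 : x * b = a + c) (h3 : x * c = b + d)
    (h4 : x * d = c + p * (d / x) + q * (d * x / (x ^ 2 - 1))) :
    (adjMat (G3 r s p q)).mulVec (vec r s p q x a b c d) = x • vec r s p q x a b c d := by
  classical
  have hx0 : x ≠ 0 := by positivity
  have hx1 : x ^ 2 - 1 ≠ 0 := by nlinarith
  funext i
  rcases i with i | (i | ⟨i, k⟩) | (i | ⟨i, k⟩)
  · fin_cases i
    all_goals
      simp [Matrix.mulVec, dotProduct, adjMat, G3, Fintype.sum_sum_type, Fin.sum_univ_four,
        Fintype.sum_prod_type, Fin.sum_univ_two, vec, path_adj]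
    · linarith
    · linarith
    · linarith
    · linarith
  · simp [Matrix.mulVec, dotProduct, adjMat, G3, Fintype.sum_sum_type, Fin.sum_univ_four,
        Fintype.sum_prod_type, Fin.sum_univ_two, vec]
    field_simp
  · fin_cases k
    all_goals
      simp [Matrix.mulVec, dotProduct, adjMat, G3, Fintype.sum_sum_type, Fin.sum_univ_four,
        Fintype.sum_prod_type, Fin.sum_univ_two, vec]
      field_simp
    ring
  · simp [Matrix.mulVec, dotProduct, adjMat, G3, Fintype.sum_sum_type, Fin.sum_univ_four,
        Fintype.sum_prod_type, Fin.sum_univ_two, vec]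
    field_simp
  · fin_cases k
    all_goals
      simp [Matrix.mulVec, dotProduct, adjMat, G3, Fintype.sum_sum_type, Fin.sum_univ_four,
        Fintype.sum_prod_type, Fin.sum_univ_two, vec]
      field_simp
    ring

theorem specRad_of_rt {r s p q : ℕ} {y : ℝ} (h : IsRt r s p q y) :
    specRad (G3 r s p q) = √y := by
  obtain ⟨hy, ha, hb, he⟩ := h
  have hx : 1 < √y := by
    rw [Real.lt_sqrt (by norm_num)]; simpa using hy
  have hsq : √y ^ 2 = y := Real.sq_sqrt (by linarith)
  set x := √y with hxdef
  have hx0 : 0 < x := by linarith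
  have hy1 : 0 < x ^ 2 - 1 := by rw [hsq]; linarith
  have hea : al r s y = x ^ 2 - r - s * (x ^ 2 / (x ^ 2 - 1)) := by rw [al, hsq]
  have heb : al p q y = x ^ 2 - p - q * (x ^ 2 / (x ^ 2 - 1)) := by rw [al, hsq]
  have he : x ^ 2 * (al r s y - 1) * (al p q y - 1) = al r s y * al p q y := by
    rw [hsq]; exact he
  generalize al r s y = A at *
  generalize al p q y = B at *
  have hA : 0 < A - 1 := by linarith
  have hB0 : 0 < B := by linarith
  refine specRad_eq_of_pos _ (vec r s p q x 1 (A / x) (A - 1) (x * (A - 1) / B)) x ?_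
    (vec_eig _ _ _ _ _ _ _ _ _ hx ?_ ?_ ?_ ?_)
  · have hA0 : 0 < A := by linarith
    rintro (i | (i | ⟨i, k⟩) | (i | ⟨i, k⟩))
    · fin_cases i
      · simp [vec]
      · change 0 < A / x
        positivity
      · change 0 < A - 1
        exact hA
      · change 0 < x * (A - 1) / B
        positivity
    · simp [vec]; positivity
    · fin_cases k
      · change 0 < 1 * x / (x ^ 2 - 1)
        positivity
      · change 0 < 1 / (x ^ 2 - 1)
        positivity
    · simp [vec]; positivity
    · fin_cases k <;> simp [vec] <;> positivity
  · rw [hea]; field_simp; ring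
  · field_simp; ring
  · field_simp; linarith
  · have : x * (x * (A - 1) / B) - p * (x * (A - 1) / B / x) -
        q * (x * (A - 1) / B * x / (x ^ 2 - 1)) = A - 1 := by
      have : x * (x * (A - 1) / B) - p * (x * (A - 1) / B / x) -
        q * (x * (A - 1) / B * x / (x ^ 2 - 1)) = (A - 1) / B *
          (x ^ 2 - p - q * (x ^ 2 / (x ^ 2 - 1))) := by field_simp
      rw [this, ← heb]; field_simp
    linarith

theorem al_two {r s : ℕ} (hs : 1 ≤ s) : al r s 2 ≤ 0 := by
  have : (1 : ℝ) ≤ s := by exact_mod_cast hs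
  have : (0 : ℝ) ≤ r := Nat.cast_nonneg _
  unfold al; norm_num; linarith

theorem al_le {r s : ℕ} (hs : 1 ≤ s) {y : ℝ} (hy : 1 < y) (h : 1 < al r s y) : 2 < y := by
  by_contra hc
  have h1 : (1 : ℝ) ≤ s := by exact_mod_cast hs
  have h2 : (0 : ℝ) ≤ r := Nat.cast_nonneg _
  have h3 : 2 ≤ y / (y - 1) := by rw [le_div_iff₀ (by linarith)]; linarith
  unfold al at h
  nlinarith

theorem exists_rt {r s p q : ℕ} {a b : ℝ} (ha : 1 < a) (hab : a ≤ b)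
    (h0 : al r s a ≤ 1 ∨ al p q a ≤ 1 ∨
      a * (al r s a - 1) * (al p q a - 1) ≤ al r s a * al p q a)
    (hA : 1 < al r s b) (hB : 1 < al p q b)
    (h1 : al r s b * al p q b ≤ b * (al r s b - 1) * (al p q b - 1)) :
    ∃ y, a ≤ y ∧ y ≤ b ∧ IsRt r s p q y := by
  have hc : ∀ r s : ℕ, ContinuousOn (al r s) (Set.Icc a b) := by
    intro r s
    unfold al
    refine ContinuousOn.sub (by fun_prop) (ContinuousOn.mul (by fun_prop) ?_)
    refine ContinuousOn.div (by fun_prop) (by fun_prop) ?_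
    intro y hy
    have := hy.1
    intro h; linarith
  let g : ℝ → ℝ := fun y => y * max (al r s y - 1) 0 * max (al p q y - 1) 0 -
    max (al r s y) 1 * max (al p q y) 1
  have hg : ContinuousOn g (Set.Icc a b) := by
    have e1 := hc r s
    have e2 := hc p q
    fun_prop
  have hpos : ∀ u v : ℝ, 0 < max u 1 * max v 1 := fun u v =>
    mul_pos (lt_max_of_lt_right one_pos) (lt_max_of_lt_right one_pos)
  have hga : g a ≤ 0 := by
    by_cases c1 : al r s a ≤ 1
    · have := hpos (al r s a) (al p q a)
      simp only [g]
      rw [max_eq_right (a := al r s a - 1) (by linarith)]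
      linarith
    by_cases c2 : al p q a ≤ 1
    · have := hpos (al r s a) (al p q a)
      simp only [g]
      rw [max_eq_right (a := al p q a - 1) (by linarith)]
      linarith
    have := (h0.resolve_left c1).resolve_left c2
    push Not at c1 c2
    simp only [g]
    rw [max_eq_left (by linarith), max_eq_left (by linarith), max_eq_left (by linarith),
      max_eq_left (by linarith)]
    linarith
  have hgb : 0 ≤ g b := by
    simp only [g]
    rw [max_eq_left (by linarith), max_eq_left (by linarith), max_eq_left (by linarith),
      max_eq_left (by linarith)]
    linarith
  obtain ⟨y, hy, hgy⟩ := intermediate_value_Icc hab hg ⟨hga, hgb⟩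
  refine ⟨y, hy.1, hy.2, by linarith [hy.1], ?_⟩
  have hp := hpos (al r s y) (al p q y)
  simp only [g] at hgy
  by_cases c1 : al r s y ≤ 1
  · rw [max_eq_right (a := al r s y - 1) (by linarith)] at hgy
    linarith
  by_cases c2 : al p q y ≤ 1
  · rw [max_eq_right (a := al p q y - 1) (by linarith)] at hgy
    linarith
  push Not at c1 c2
  rw [max_eq_left (by linarith), max_eq_left (by linarith), max_eq_left (by linarith),
      max_eq_left (by linarith)] at hgy
  exact ⟨c1, c2, by linarith⟩

theorem al_big {r s : ℕ} {y : ℝ} (hy : (r : ℝ) + 2 * s + 8 ≤ y) : 8 ≤ al r s y := by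
  have h1 : (0 : ℝ) ≤ s := Nat.cast_nonneg _
  have h2 : (0 : ℝ) ≤ r := Nat.cast_nonneg _
  have h3 : y / (y - 1) ≤ 2 := by rw [div_le_iff₀ (by linarith)]; linarith
  unfold al
  nlinarith

theorem exists_rt' {r s p q : ℕ} {a : ℝ} (ha : 1 < a)
    (h0 : al r s a ≤ 1 ∨ al p q a ≤ 1 ∨
      a * (al r s a - 1) * (al p q a - 1) ≤ al r s a * al p q a) :
    ∃ y, a ≤ y ∧ IsRt r s p q y := by
  have n1 : (0 : ℝ) ≤ s := Nat.cast_nonneg _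
  have n2 : (0 : ℝ) ≤ r := Nat.cast_nonneg _
  have n3 : (0 : ℝ) ≤ p := Nat.cast_nonneg _
  have n4 : (0 : ℝ) ≤ q := Nat.cast_nonneg _
  set b : ℝ := a + r + p + 2 * s + 2 * q + 8 with hb
  have hA : 8 ≤ al r s b := al_big (by linarith)
  have hB : 8 ≤ al p q b := al_big (by linarith)
  obtain ⟨y, h1, -, h2⟩ := exists_rt (r := r) (s := s) (p := p) (q := q) (b := b) ha
    (by linarith) h0 (by linarith) (by linarith) (by
      have hb8 : 8 ≤ b := by linarith
      generalize al r s b = A at *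
      generalize al p q b = B at *
      have : 0 ≤ (A - 8) * (B - 8) := mul_nonneg (by linarith) (by linarith)
      have h5 : 8 * ((A - 1) * (B - 1)) ≤ b * ((A - 1) * (B - 1)) :=
        mul_le_mul_of_nonneg_right hb8 (mul_nonneg (by linarith) (by linarith))
      nlinarith)
  exact ⟨y, h1, h2⟩

/-- Swapping the two ends. -/
def swapIso (s q : ℕ) : G3 0 s 0 q ≃g G3 0 q 0 s where
  toEquiv := Equiv.sumCongr Fin.revPerm (Equiv.sumComm _ _)
  map_rel_iff' := by
    rintro (i | (i | ⟨i, k⟩) | (i | ⟨i, k⟩)) (j | (j | ⟨j, l⟩) | (j | ⟨j, l⟩))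
    · revert i j
      simp [G3, path_adj]
      decide
    all_goals first | exact i.elim0 | exact j.elim0 | skip
    all_goals try fin_cases i
    all_goals try fin_cases j
    all_goals simp [G3, path_adj]
    all_goals decide

theorem specRad_G3_claim2 {s q : ℕ} (h1 : q ≤ s + 1) (h2 : 2 ≤ q) :
    specRad (G3 0 ((s + q + 1) / 2) 0 ((s + q) / 2)) ≤ specRad (G3 0 s 0 q) ∧
    specRad (G3 0 s 0 q) < specRad (G3 1 s 1 (q - 1)) ∧
    (specRad (G3 0 ((s + q + 1) / 2) 0 ((s + q) / 2)) = specRad (G3 0 s 0 q) ↔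
      Nonempty (G3 0 s 0 q ≃g G3 0 ((s + q + 1) / 2) 0 ((s + q) / 2))) := by
  have hs : 1 ≤ s := by omega
  obtain ⟨y, hy2, hr⟩ := exists_rt' (r := 0) (s := s) (p := 0) (q := q) (a := 2) (by norm_num)
    (Or.inl ((al_two hs).trans zero_le_one))
  have hB : specRad (G3 0 s 0 q) < specRad (G3 1 s 1 (q - 1)) := by
    have hr' := hr
    obtain ⟨hy, ha, hb, he⟩ := hr
    have hd : 0 < (y - 1)⁻¹ := inv_pos.mpr (by linarith)
    have hz : y / (y - 1) = 1 + (y - 1)⁻¹ := by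
      have : y - 1 ≠ 0 := by linarith
      field_simp; ring
    have hdy : (y - 1)⁻¹ * (y - 1) = 1 := inv_mul_cancel₀ (by linarith)
    have e1 : al 1 s y = al 0 s y - 1 := by simp [al]; ring
    have e2 : al 1 (q - 1) y = al 0 q y + (y - 1)⁻¹ := by
      have : ((q - 1 : ℕ) : ℝ) = q - 1 := by push_cast [show 1 ≤ q by omega]; ring
      simp only [al, this, hz]; push_cast; ring
    have e3 : al 0 s y - 1 - (y - 1)⁻¹ ≤ al 0 q y := by
      have : (q : ℝ) ≤ s + 1 := by exact_mod_cast h1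
      simp only [al, hz]
      nlinarith
    have e4 : al 0 s y < y := by
      have : (1 : ℝ) ≤ s := by exact_mod_cast hs
      simp only [al, hz]; push_cast; nlinarith
    have hF : al 1 s y ≤ 1 ∨ al 1 (q - 1) y ≤ 1 ∨ y * (al 1 s y - 1) * (al 1 (q - 1) y - 1) <
        al 1 s y * al 1 (q - 1) y := by
      right; right
      rw [e1, e2]
      generalize al 0 s y = A at *
      generalize al 0 q y = B at *
      generalize (y - 1)⁻¹ = δ at *
      obtain ⟨c, rfl⟩ : ∃ c, A = c + 1 := ⟨A - 1, by ring⟩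
      obtain ⟨b, rfl⟩ : ∃ b, B = b + 1 := ⟨B - 1, by ring⟩
      obtain ⟨u, rfl⟩ : ∃ u, y = u + 1 := ⟨y - 1, by ring⟩
      have hc0 : 0 < c := by linarith
      have hb0 : 0 < b := by linarith
      have hu : 0 < u := by linarith
      have hdu : δ * u = 1 := by linarith
      have k1 : c * b = δ * (c + b + 1) := by
        have : c * b * u = c + b + 1 := by linarith
        calc c * b = c * b * u * δ := by linear_combination (-(c * b)) * hdu
          _ = _ := by rw [this]; ring
      have k2 : b * (c - δ) = δ * (c + 1) := by linarith
      have k3 : 0 < c - δ := by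
        by_contra hn
        have : 0 < δ * (c + 1) := by positivity
        nlinarith
      have k4 : (c - δ) ^ 2 < c + 1 := by
        have : (c - δ) * (c - δ - 1) ≤ (c - δ) * b :=
          mul_le_mul_of_nonneg_left (by linarith) k3.le
        have : δ * c < δ * u := mul_lt_mul_of_pos_left (by linarith) hd
        nlinarith
      have k5 : δ * (c - δ) < b := by
        have : δ * (c - δ) ^ 2 < b * (c - δ) := by
          rw [k2]; exact mul_lt_mul_of_pos_left k4 hd
        by_contra hn
        have := mul_le_mul_of_nonneg_right (not_lt.mp hn) k3.le
        nlinarith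
      have k6 : c - δ < b * u := by
        have := mul_lt_mul_of_pos_right k5 hu
        have e : δ * (c - δ) * u = c - δ := by linear_combination (c - δ) * hdu
        linarith
      have k7 : c * b * u = c + b + 1 := by linarith
      have k8 : (u + 1) * (c + 1 - 1 - 1) * (b + 1 + δ - 1) - (c + 1 - 1) * (b + 1 + δ)
          = c - δ - b * u := by linear_combination k7 + (c - 1) * hdu
      linarith
    have hF' : al 1 s y ≤ 1 ∨ al 1 (q - 1) y ≤ 1 ∨ y * (al 1 s y - 1) * (al 1 (q - 1) y - 1) ≤
        al 1 s y * al 1 (q - 1) y := hF.imp_right (Or.imp_right le_of_lt)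
    obtain ⟨y', hyy, hrt⟩ := exists_rt' hy hF'
    have hne : y ≠ y' := by
      rintro rfl
      obtain ⟨-, c1, c2, c3⟩ := hrt
      rcases hF with h | h | h <;> linarith
    rw [specRad_of_rt hr', specRad_of_rt hrt]
    exact Real.sqrt_lt_sqrt (by linarith) (lt_of_le_of_ne hyy hne)
  have hiso : s ≤ q + 1 → Nonempty (G3 0 s 0 q ≃g G3 0 ((s + q + 1) / 2) 0 ((s + q) / 2)) := by
    intro h
    by_cases hqs : q ≤ s
    · rw [show (s + q + 1) / 2 = s by omega, show (s + q) / 2 = q by omega]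
      exact ⟨SimpleGraph.Iso.refl⟩
    · rw [show (s + q + 1) / 2 = q by omega, show (s + q) / 2 = s by omega]
      exact ⟨swapIso s q⟩
  have hlt : q + 2 ≤ s →
      specRad (G3 0 ((s + q + 1) / 2) 0 ((s + q) / 2)) < specRad (G3 0 s 0 q) := by
    intro h
    have hr' := hr
    obtain ⟨hy, ha, hb, he⟩ := hr
    obtain ⟨m, hm⟩ : ∃ m, m = (s + q + 1) / 2 := ⟨_, rfl⟩
    obtain ⟨n, hn⟩ : ∃ n, n = (s + q) / 2 := ⟨_, rfl⟩
    rw [← hm, ← hn]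
    have i1 : m + n = s + q := by omega
    have i2 : m + 1 ≤ s := by omega
    have i3 : q + 1 ≤ m := by omega
    have j1 : (m : ℝ) + n = s + q := by exact_mod_cast i1
    have j2 : (m : ℝ) + 1 ≤ s := by exact_mod_cast i2
    have j3 : (q : ℝ) + 1 ≤ m := by exact_mod_cast i3
    have hz : 0 < y / (y - 1) := div_pos (by linarith) (by linarith)
    obtain ⟨k, hk0, hk⟩ : ∃ k : ℝ, 0 < k ∧ k = (s - m) * (y / (y - 1)) :=
      ⟨_, mul_pos (by linarith) hz, rfl⟩
    have e1 : al 0 m y = al 0 s y + k := by rw [hk]; simp only [al]; ring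
    have e2 : al 0 n y = al 0 q y - k := by
      rw [hk]
      simp only [al, show (n : ℝ) = s + q - m by linarith]; ring
    have e3 : al 0 s y + k < al 0 q y := by
      rw [hk]; simp only [al]; nlinarith
    have hF : al 0 m y * al 0 n y < y * (al 0 m y - 1) * (al 0 n y - 1) := by
      rw [e1, e2]
      have hp : 0 < (y - 1) * (k * (al 0 q y - (al 0 s y + k))) :=
        mul_pos (by linarith) (mul_pos hk0 (by linarith))
      nlinarith
    have m1 : 1 ≤ m := by omega
    obtain ⟨y', hy2', hyy, hrt⟩ := exists_rt (r := 0) (s := m) (p := 0) (q := n) (a := 2) (b := y)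
      (by norm_num) hy2 (Or.inl ((al_two m1).trans zero_le_one)) (by linarith)
      (by linarith) hF.le
    have hne : y' ≠ y := by
      rintro rfl
      have := hrt.2.2.2
      linarith
    rw [specRad_of_rt hr', specRad_of_rt hrt]
    exact Real.sqrt_lt_sqrt (by linarith) (lt_of_le_of_ne hyy hne)
  refine ⟨?_, hB, ?_, ?_⟩
  · by_cases h : s ≤ q + 1
    · exact (specRad_congr _ _ (hiso h).some).ge
    · exact (hlt (by omega)).le
  · intro he
    apply hiso
    by_contra hc
    exact absurd he (hlt (by omega)).ne
  · rintro ⟨e⟩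
    exact (specRad_congr _ _ e).symm
end
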